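/- Let 0 < t < √3/2, let F be a C^∞-smooth complex-valued function on an open neighbourhood U of 0 in ℂ whose partial derivatives of all orders ≤ 3 vanish at 0 (so F(z) = o(|z|³) as z → 0), and let M_t = {(z, p_t(z,z̄) + F(z)) : z ∈ U} with p_t(z,z̄) = z²z̄ + t z z̄² + (t²/3) z̄³. Then for every δ > 0 the polynomially convex hull of M_t ∩ B̄(0;δ) contains a nonempty open ball centred at the origin: there exists ρ > 0 with B(0;ρ) contained in the hull of M_t ∩ B̄(0;δ). -/

import Mathlib

open Complex ComplexConjugate

/-- The polynomially convex hull of a set `K ⊆ ℂ²`. -/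
def polyHull2 (K : Set (ℂ × ℂ)) : Set (ℂ × ℂ) :=
  { z | ∀ p : MvPolynomial (Fin 2) ℂ,
      ‖MvPolynomial.eval (fun i => if i = 0 then z.1 else z.2) p‖ ≤
        sSup ((fun w : ℂ × ℂ =>
          ‖MvPolynomial.eval (fun i => if i = 0 then w.1 else w.2) p‖) '' K) }

/-- A set `K ⊆ ℂ²` is polynomially convex if it equals its polynomially convex hull. -/
def PolyConvex2 (K : Set (ℂ × ℂ)) : Prop := polyHull2 K = K

/-- The closed Euclidean ball of radius `r` centred at the origin in `ℂ²`. -/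
def eClosedBall (r : ℝ) : Set (ℂ × ℂ) := { z | ‖z.1‖ ^ 2 + ‖z.2‖ ^ 2 ≤ r ^ 2 }

/-- The open Euclidean ball of radius `r` centred at the origin in `ℂ²`. -/
def eOpenBall (r : ℝ) : Set (ℂ × ℂ) := { z | ‖z.1‖ ^ 2 + ‖z.2‖ ^ 2 < r ^ 2 }

/-- The surface `M_t = {(z, z²z̄ + t z z̄² + (t²/3) z̄³ + F(z)) : z ∈ U}`. -/
def Mset (t : ℝ) (U : Set ℂ) (F : ℂ → ℂ) : Set (ℂ × ℂ) :=
  { zw | ∃ z ∈ U, zw = (z, z ^ 2 * conj z + (t : ℂ) * z * (conj z) ^ 2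
      + ((t : ℂ) ^ 2 / 3) * (conj z) ^ 3 + F z) }


section SecPA

open Complex ComplexConjugate

/-- nodes -/
noncomputable def nd (m : ℕ) (j : ZMod (2*m+1)) : ℂ := ZMod.stdAddChar j

lemma nd_add (m : ℕ) (i j : ZMod (2*m+1)) : nd m (i+j) = nd m i * nd m j := by
  simp [nd, AddChar.map_add_eq_mul]

lemma nd_norm (m : ℕ) (j : ZMod (2*m+1)) : ‖nd m j‖ = 1 := by
  simp only [nd, ZMod.stdAddChar_apply]
  exact Circle.norm_coe _

lemma nd_ne_zero (m : ℕ) (j : ZMod (2*m+1)) : nd m j ≠ 0 := by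
  intro h; have := nd_norm m j; rw [h] at this; simp at this

lemma nd_conj (m : ℕ) (j : ZMod (2*m+1)) : conj (nd m j) = nd m (-j) := by
  have h1 : nd m j * nd m (-j) = 1 := by rw [← nd_add]; simp [nd]
  have h2 : nd m j * conj (nd m j) = 1 := by
    rw [Complex.mul_conj, Complex.normSq_eq_norm_sq, nd_norm]; simp
  exact mul_left_cancel₀ (nd_ne_zero m j) (h2.trans h1.symm)

lemma nd_pow (m : ℕ) (j : ZMod (2*m+1)) (k : ℕ) : nd m j ^ k = nd m (k * j) := by
  induction k with
  | zero => simp [nd]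
  | succ k ih => rw [pow_succ, ih, ← nd_add]; congr 1; push_cast; ring

lemma nd_sum_pow (m k : ℕ) (hk : 0 < k) (hk2 : k < 2*m+1) :
    ∑ j : ZMod (2*m+1), nd m j ^ k = 0 := by
  have := AddChar.sum_mulShift (R := ZMod (2*m+1)) (R' := ℂ) (ψ := ZMod.stdAddChar) (k : ZMod (2*m+1))
    (ZMod.isPrimitive_stdAddChar _)
  rw [if_neg] at this
  · rw [← Nat.cast_zero (R := ℂ), ← this]
    apply Finset.sum_congr rfl
    intro j _
    rw [nd_pow, mul_comm]; rfl
  · rw [ZMod.natCast_eq_zero_iff]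
    exact Nat.not_dvd_of_pos_of_lt hk hk2

lemma nd_geom (m : ℕ) (d : ZMod (2*m+1)) (hd : d ≠ 0) :
    ∑ k ∈ Finset.range (2*m+1), nd m d ^ k = 0 := by
  have h1 : nd m d ≠ 1 := by
    intro h
    apply hd
    apply ZMod.injective_stdAddChar (N := 2*m+1)
    simpa [nd] using h
  rw [geom_sum_eq h1]
  have : nd m d ^ (2*m+1) = 1 := by
    rw [nd_pow]
    have : ((2*m+1 : ℕ) : ZMod (2*m+1)) = 0 := ZMod.natCast_self _
    rw [this]; simp [nd]
  rw [this]; simp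

/-- coefficients of discrete Schwarz polynomial -/
noncomputable def cf (m : ℕ) (x : ZMod (2*m+1) → ℝ) (k : ℕ) : ℂ :=
  (if k = 0 then 1 else 2) / (2*m+1 : ℕ) * ∑ j, (x j : ℂ) * nd m (-j) ^ k

noncomputable def Sc (m : ℕ) (x : ZMod (2*m+1) → ℝ) (s : ℂ) : ℂ :=
  ∑ k ∈ Finset.range (m+1), cf m x k * s ^ k

noncomputable def Tr (m : ℕ) (x : ZMod (2*m+1) → ℝ) (j : ZMod (2*m+1)) : ℝ := (Sc m x (nd m j)).im

lemma dirichlet (m : ℕ) (d : ZMod (2*m+1)) :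
    1 + ∑ k ∈ Finset.range m, (nd m d ^ (k+1) + nd m (-d) ^ (k+1)) = if d = 0 then ((2*m+1 : ℕ) : ℂ) else 0 := by
  have key : nd m d ^ m * (1 + ∑ k ∈ Finset.range m, (nd m d ^ (k+1) + nd m (-d) ^ (k+1)))
      = ∑ k ∈ Finset.range (2*m+1), nd m d ^ k := by
    have hs : ∀ n ≤ m, nd m d ^ m * (1 + ∑ k ∈ Finset.range n, (nd m d ^ (k+1) + nd m (-d) ^ (k+1)))
      = ∑ k ∈ Finset.range (2*n+1), nd m d ^ (m - n + k) := by
      intro n hn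
      induction n with
      | zero => simp
      | succ n ih =>
        rw [Finset.sum_range_succ, ← add_assoc, mul_add, ih (by omega)]
        have e0 : ∑ k ∈ Finset.range (2*(n+1)+1), nd m d ^ (m - (n+1) + k)
            = ∑ k ∈ Finset.range (2*n+1), nd m d ^ (m - n + k) + nd m d ^ (m - n + (2*n+1))
              + nd m d ^ (m-(n+1)+0) := by
          have e1 : ∀ k, m - (n+1) + (k+1) = m - n + k := by intro k; omega
          rw [show 2*(n+1)+1 = (2*n+1)+1+1 by ring, Finset.sum_range_succ']
          simp only [e1]
          rw [Finset.sum_range_succ]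
        rw [e0]
        have e2 : nd m d ^ m * nd m (-d) ^ (n+1) = nd m d ^ (m-(n+1)+0) := by
          have : nd m d ^ m = nd m d ^ (m-(n+1)+0) * nd m d ^ (n+1) := by
            rw [← pow_add]; congr 1; omega
          rw [this, mul_assoc, ← mul_pow, ← nd_add]; simp [nd]
        rw [mul_add, e2, ← pow_add]
        have e3 : m - n + (2*n+1) = m + (n+1) := by omega
        rw [e3]; ring
    have := hs m le_rfl
    simpa using this
  by_cases hd : d = 0
  · subst hd
    simp [nd]; ring
  · rw [nd_geom m d hd] at key
    rw [if_neg hd]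
    exact (mul_eq_zero.mp key).resolve_left (pow_ne_zero _ (nd_ne_zero m d))

lemma cf_zero (m : ℕ) (x : ZMod (2*m+1) → ℝ) :
    cf m x 0 = (((∑ j, x j) / (2*m+1 : ℕ) : ℝ) : ℂ) := by
  simp [cf]; ring

lemma Sc_re (m : ℕ) (x : ZMod (2*m+1) → ℝ) (l : ZMod (2*m+1)) : (Sc m x (nd m l)).re = x l := by
  have hN : ((2*m+1 : ℕ) : ℂ) ≠ 0 := by exact_mod_cast (by omega : 2*m+1 ≠ 0)
  have h1 : Sc m x (nd m l) + conj (Sc m x (nd m l)) = 2 * (x l : ℂ) := by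
    have e1 : Sc m x (nd m l) = cf m x 0 + ∑ k ∈ Finset.range m, cf m x (k+1) * nd m l ^ (k+1) := by
      rw [Sc, Finset.sum_range_succ']; simp [add_comm]
    rw [e1, map_add, map_sum]
    have e2 : conj (cf m x 0) = cf m x 0 := by rw [cf_zero]; exact Complex.conj_ofReal _
    rw [e2]
    have e3 : ∀ k, cf m x (k+1) * nd m l ^ (k+1) + conj (cf m x (k+1) * nd m l ^ (k+1))
       = 2 / (2*m+1 : ℕ) * ∑ j, (x j : ℂ) * (nd m (l-j) ^ (k+1) + nd m (-(l-j)) ^ (k+1)) := by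
      intro k
      simp only [cf, map_mul, map_sum, map_div₀, map_pow, nd_conj]
      simp only [Nat.succ_ne_zero, if_false, Complex.conj_ofReal]
      simp only [mul_assoc, Finset.sum_mul, ← mul_pow, ← nd_add]
      simp only [Finset.mul_sum]
      simp only [map_ofNat, map_natCast, neg_neg, map_add, map_mul, map_one]
      rw [← Finset.sum_add_distrib]
      apply Finset.sum_congr rfl
      intro j _
      rw [show -j + l = l - j by ring, show j + -l = -(l-j) by ring]
      ring
    have e4 : cf m x 0 = 1 / (2*m+1 : ℕ) * ∑ j, (x j : ℂ) * 1 := by simp [cf]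
    calc _ = 2 * cf m x 0 + ∑ k ∈ Finset.range m, (cf m x (k+1) * nd m l ^ (k+1) + conj (cf m x (k+1) * nd m l ^ (k+1))) := by
            rw [Finset.sum_add_distrib]; ring
      _ = 2 / (2*m+1 : ℕ) * ∑ j, (x j : ℂ) * (1 + ∑ k ∈ Finset.range m, (nd m (l-j) ^ (k+1) + nd m (-(l-j)) ^ (k+1))) := by
            rw [Finset.sum_congr rfl (fun k _ => e3 k), e4, ← Finset.mul_sum, Finset.sum_comm]
            simp only [mul_add, Finset.sum_add_distrib, Finset.mul_sum]
            ring
      _ = 2 * (x l : ℂ) := by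
            simp only [dirichlet]
            rw [Finset.sum_eq_single l]
            · simp only [sub_self, if_true]; field_simp
            · intro b _ hb
              rw [if_neg (sub_ne_zero.mpr (Ne.symm hb))]; simp
            · simp
  have h2 := congrArg Complex.re h1
  simp at h2
  linarith

lemma Sc_node (m : ℕ) (x : ZMod (2*m+1) → ℝ) (l : ZMod (2*m+1)) :
    Sc m x (nd m l) = x l + Tr m x l * I := by
  apply Complex.ext
  · simp [Sc_re]
  · simp [Tr]

/-- mean over nodes of product of two low degree polys -/
lemma nd_mean_mul (m : ℕ) (a b : ℕ → ℂ) :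
    ∑ j : ZMod (2*m+1), (∑ k ∈ Finset.range (m+1), a k * nd m j ^ k) * (∑ k ∈ Finset.range (m+1), b k * nd m j ^ k)
      = (2*m+1 : ℕ) * (a 0 * b 0) := by
  simp only [Finset.sum_mul_sum]
  rw [Finset.sum_comm]
  have : ∀ k ∈ Finset.range (m+1), (∑ j : ZMod (2*m+1), ∑ l ∈ Finset.range (m+1), a k * nd m j ^ k * (b l * nd m j ^ l))
     = if k = 0 then (2*m+1 : ℕ) * (a 0 * b 0) else 0 := by
    intro k hk
    rw [Finset.sum_comm]
    have h2 : ∀ l ∈ Finset.range (m+1), (∑ j : ZMod (2*m+1), a k * nd m j ^ k * (b l * nd m j ^ l)) = if k = 0 ∧ l = 0 then (2*m+1 : ℕ) * (a 0 * b 0) else 0 := by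
      intro l hl
      have : ∀ j : ZMod (2*m+1), a k * nd m j ^ k * (b l * nd m j ^ l) = a k * b l * nd m j ^ (k+l) := by
        intro j; rw [pow_add]; ring
      simp only [this, ← Finset.mul_sum]
      by_cases h : k = 0 ∧ l = 0
      · rw [if_pos h, h.1, h.2]; simp [ZMod.card]; ring
      · rw [if_neg h, nd_sum_pow m (k+l) (by omega) (by simp at hk hl; omega)]; simp
    rw [Finset.sum_congr rfl h2]
    by_cases hk0 : k = 0
    · simp [hk0]
    · simp [hk0]
  rw [Finset.sum_congr rfl this]
  simp

lemma Tr_norm (m : ℕ) (x : ZMod (2*m+1) → ℝ) : ∑ j, Tr m x j ^ 2 ≤ ∑ j, x j ^ 2 := by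
  have h := nd_mean_mul m (cf m x) (cf m x)
  have h2 : ∀ j, (∑ k ∈ Finset.range (m+1), cf m x k * nd m j ^ k) = x j + Tr m x j * I := fun j => Sc_node m x j
  simp only [h2, cf_zero] at h
  have h3 := congrArg Complex.re h
  simp only [Complex.re_sum] at h3
  have h4 : ∀ j, (((x j : ℂ) + Tr m x j * I) * (x j + Tr m x j * I)).re = x j ^ 2 - Tr m x j ^ 2 := by
    intro j; simp; ring
  simp only [h4, Finset.sum_sub_distrib] at h3
  have h5 : 0 ≤ (((2*m+1 : ℕ) : ℂ) * (((((∑ j, x j) / (2*m+1 : ℕ) : ℝ) : ℂ)) * (((∑ j, x j) / (2*m+1 : ℕ) : ℝ) : ℂ))).re := by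
    rw [← Complex.ofReal_natCast, ← Complex.ofReal_mul, ← Complex.ofReal_mul, Complex.ofReal_re]
    have := mul_self_nonneg ((∑ j, x j) / (2*m+1 : ℕ))
    positivity
  linarith

lemma cf_sub (m : ℕ) (x y : ZMod (2*m+1) → ℝ) (k : ℕ) : cf m (fun j => x j - y j) k = cf m x k - cf m y k := by
  simp only [cf, ← mul_sub, ← Finset.sum_sub_distrib]
  congr 1; apply Finset.sum_congr rfl; intro j _; push_cast; ring

lemma cf_add (m : ℕ) (x y : ZMod (2*m+1) → ℝ) (k : ℕ) : cf m (fun j => x j + y j) k = cf m x k + cf m y k := by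
  simp only [cf, ← mul_add, ← Finset.sum_add_distrib]
  congr 1; apply Finset.sum_congr rfl; intro j _; push_cast; ring

lemma cf_smul (m : ℕ) (a : ℝ) (x : ZMod (2*m+1) → ℝ) (k : ℕ) : cf m (fun j => a * x j) k = a * cf m x k := by
  simp only [cf, Finset.mul_sum]
  apply Finset.sum_congr rfl; intro j _; push_cast; ring

lemma Tr_sub (m : ℕ) (x y : ZMod (2*m+1) → ℝ) (j) : Tr m (fun j => x j - y j) j = Tr m x j - Tr m y j := by
  simp only [Tr, Sc, cf_sub, sub_mul, Finset.sum_sub_distrib, Complex.sub_im]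

lemma Tr_add (m : ℕ) (x y : ZMod (2*m+1) → ℝ) (j) : Tr m (fun j => x j + y j) j = Tr m x j + Tr m y j := by
  simp only [Tr, Sc, cf_add, add_mul, Finset.sum_add_distrib, Complex.add_im]

lemma Tr_smul (m : ℕ) (a : ℝ) (x : ZMod (2*m+1) → ℝ) (j) : Tr m (fun j => a * x j) j = a * Tr m x j := by
  simp only [Tr, Sc, cf_smul, mul_assoc, ← Finset.mul_sum, Complex.re_ofReal_mul, Complex.im_ofReal_mul]

lemma cf_shift (m : ℕ) (x : ZMod (2*m+1) → ℝ) (k : ℕ) : cf m (fun j => x (j+1)) k = nd m 1 ^ k * cf m x k := by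
  simp only [cf]
  rw [mul_left_comm]; congr 1
  rw [Finset.mul_sum, ← Equiv.sum_comp (Equiv.addRight (1 : ZMod (2*m+1))) (fun j => nd m 1 ^ k * ((x j : ℂ) * nd m (-j) ^ k))]
  apply Finset.sum_congr rfl; intro j _
  simp only [Equiv.coe_addRight]
  rw [mul_left_comm, ← mul_pow, ← nd_add]; congr 3; ring

lemma Tr_shift (m : ℕ) (x : ZMod (2*m+1) → ℝ) (j) : Tr m (fun j => x (j+1)) j = Tr m x (j+1) := by
  simp only [Tr, Sc, cf_shift]
  congr 1; apply Finset.sum_congr rfl; intro k _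
  rw [nd_add, mul_pow]; ring

/-- scaled difference -/
noncomputable def Df (m : ℕ) (x : ZMod (2*m+1) → ℝ) (j : ZMod (2*m+1)) : ℝ := (2*m+1) * (x (j+1) - x j)

lemma Tr_Df (m : ℕ) (x : ZMod (2*m+1) → ℝ) (j) : Tr m (Df m x) j = Df m (Tr m x) j := by
  have : Df m x = fun j => (2*m+1 : ℝ) * ((fun j => x (j+1) - x j) j) := by ext; rfl
  rw [this, Tr_smul]; rw [Tr_sub m (fun j => x (j+1)) x, Tr_shift]; rfl

lemma cf_Df (m : ℕ) (x : ZMod (2*m+1) → ℝ) (k) : cf m (Df m x) k = (2*m+1) * (nd m 1 ^ k - 1) * cf m x k := by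
  have : Df m x = fun j => (2*m+1 : ℝ) * ((fun j => x (j+1) - x j) j) := by ext; rfl
  rw [this, cf_smul, cf_sub m (fun j => x (j+1)) x, cf_shift]; push_cast; ring

lemma parseval (m : ℕ) (a : ℕ → ℂ) :
    ∑ j : ZMod (2*m+1), ‖∑ k ∈ Finset.range (m+1), a k * nd m j ^ k‖ ^ 2
      = (2*m+1) * ∑ k ∈ Finset.range (m+1), ‖a k‖ ^ 2 := by
  have key : ∑ j : ZMod (2*m+1), (((‖∑ k ∈ Finset.range (m+1), a k * nd m j ^ k‖ ^ 2 : ℝ)) : ℂ)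
      = (2*m+1) * ∑ k ∈ Finset.range (m+1), ((‖a k‖ ^ 2 : ℝ) : ℂ) := by
    have h1 : ∀ j : ZMod (2*m+1), (((‖∑ k ∈ Finset.range (m+1), a k * nd m j ^ k‖ ^ 2 : ℝ)) : ℂ)
      = ∑ k ∈ Finset.range (m+1), ∑ l ∈ Finset.range (m+1), a k * conj (a l) * nd m (((k:ZMod (2*m+1)) - l) * j) := by
      intro j
      rw [← Complex.normSq_eq_norm_sq, Complex.normSq_eq_conj_mul_self, mul_comm, map_sum, Finset.sum_mul_sum]
      apply Finset.sum_congr rfl; intro k _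
      apply Finset.sum_congr rfl; intro l _
      rw [map_mul, map_pow, nd_conj, nd_pow, nd_pow, sub_mul, sub_eq_add_neg, nd_add, mul_neg]; ring
    simp only [h1]
    rw [Finset.sum_comm, Finset.mul_sum]
    apply Finset.sum_congr rfl; intro k hk
    rw [Finset.sum_comm, Finset.sum_eq_single k]
    · simp [nd, Complex.mul_conj, Complex.normSq_eq_norm_sq, ZMod.card]
    · intro l hl hlk
      rw [← Finset.mul_sum]
      have := AddChar.sum_mulShift (R := ZMod (2*m+1)) (R' := ℂ) (ψ := ZMod.stdAddChar) ((k:ZMod (2*m+1)) - l)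
        (ZMod.isPrimitive_stdAddChar _)
      rw [if_neg] at this
      · have h3 : ∑ j : ZMod (2*m+1), nd m (((k:ZMod (2*m+1)) - l) * j) = 0 := by
          rw [← Nat.cast_zero (R := ℂ), ← this]
          apply Finset.sum_congr rfl; intro j _; rw [mul_comm]; rfl
        rw [h3, mul_zero]
      · rw [sub_eq_zero, ZMod.natCast_eq_natCast_iff']
        simp at hk hl
        rw [Nat.mod_eq_of_lt (by omega), Nat.mod_eq_of_lt (by omega)]
        exact Ne.symm hlk
    · intro h; exact absurd hk h
  exact_mod_cast key

lemma nd_one_eq (m : ℕ) : nd m 1 = exp (((2 * Real.pi / (2*m+1) : ℝ) : ℂ) * I) := by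
  have := ZMod.stdAddChar_coe (N := 2*m+1) 1
  simp only [Int.cast_one] at this
  rw [nd, this]; congr 1; push_cast; ring

lemma nd_pow_sub_one (m k : ℕ) (hk : k ≤ m) : 4 * (k:ℝ) / (2*m+1) ≤ ‖nd m 1 ^ k - 1‖ := by
  rw [nd_one_eq, ← Complex.exp_nat_mul]
  have h : (k : ℂ) * (((2 * Real.pi / (2*m+1) : ℝ) : ℂ) * I) = I * ((k * (2 * Real.pi / (2*m+1)) : ℝ) : ℂ) := by
    push_cast; ring
  rw [h, Complex.norm_exp_I_mul_ofReal_sub_one]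
  have hpos : (0:ℝ) < 2*m+1 := by positivity
  have hk' : (k:ℝ) ≤ m := by exact_mod_cast hk
  have e : (k:ℝ) * (2 * Real.pi / (2*m+1)) / 2 = Real.pi * (k / (2*m+1)) := by field_simp
  rw [e]
  have h1 := Real.mul_le_sin (x := Real.pi * (k / (2*m+1))) (by positivity) (by
    have : (k:ℝ) / (2*m+1) ≤ 1/2 := by rw [div_le_div_iff₀ hpos (by norm_num)]; linarith
    nlinarith [Real.pi_pos])
  have e2 : 2 / Real.pi * (Real.pi * (k / (2*m+1))) = 2 * k / (2*m+1) := by field_simp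
  rw [e2] at h1
  rw [Real.norm_eq_abs]
  refine le_trans ?_ (le_abs_self _)
  have : 4 * (k:ℝ) / (2*m+1) = 2 * (2 * k / (2*m+1)) := by ring
  linarith

/-- continuity between nodes -/
lemma Sc_between (m : ℕ) (x : ZMod (2*m+1) → ℝ) (D : ℝ) (hD0 : 0 ≤ D)
    (hD : ∑ j, Df m x j ^ 2 ≤ (2*m+1) * D ^ 2) (s s' : ℂ) (hs : ‖s‖ ≤ 1) (hs' : ‖s'‖ ≤ 1) :
    ‖Sc m x s - Sc m x s'‖ ≤ D * Real.sqrt m * ‖s - s'‖ := by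
  have hp := parseval m (cf m (Df m x))
  have h2 : ∀ j, (∑ k ∈ Finset.range (m+1), cf m (Df m x) k * nd m j ^ k) = Df m x j + Tr m (Df m x) j * I := fun j => Sc_node m (Df m x) j
  simp only [h2] at hp
  have h3 : ∀ j, ‖(Df m x j : ℂ) + Tr m (Df m x) j * I‖ ^ 2 = Df m x j ^ 2 + Tr m (Df m x) j ^ 2 := by
    intro j; rw [← Complex.normSq_eq_norm_sq, Complex.normSq_add_mul_I]
  simp only [h3, Finset.sum_add_distrib] at hp
  have h4 := Tr_norm m (Df m x)
  have hpos : (0:ℝ) < 2*m+1 := by positivity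
  have h5 : ∑ k ∈ Finset.range (m+1), ‖cf m (Df m x) k‖ ^ 2 ≤ 2 * D^2 := by
    have : (2*m+1:ℝ) * ∑ k ∈ Finset.range (m+1), ‖cf m (Df m x) k‖ ^ 2 ≤ (2*m+1) * (2 * D^2) := by
      rw [← hp]; nlinarith
    exact le_of_mul_le_mul_left this hpos
  have h6 : ∀ k ∈ Finset.range (m+1), 16 * ((k:ℝ) * ‖cf m x k‖)^2 ≤ ‖cf m (Df m x) k‖ ^ 2 := by
    intro k hk
    have hkm : k ≤ m := by simp at hk; omega
    rw [cf_Df, norm_mul, norm_mul]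
    have e : ‖(2 * (m:ℂ) + 1)‖ = 2*m+1 := by
      have : (2 * (m:ℂ) + 1) = ((2*m+1 : ℝ) : ℂ) := by push_cast; ring
      rw [this, Complex.norm_real, Real.norm_of_nonneg hpos.le]
    rw [e]
    have h7 := nd_pow_sub_one m k hkm
    rw [div_le_iff₀ hpos] at h7
    have h8 : 4 * ((k:ℝ) * ‖cf m x k‖) ≤ (2*m+1) * ‖nd m 1 ^ k - 1‖ * ‖cf m x k‖ := by
      have := mul_le_mul_of_nonneg_right h7 (norm_nonneg (cf m x k))
      linarith
    calc _ = (4 * ((k:ℝ) * ‖cf m x k‖))^2 := by ring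
      _ ≤ _ := pow_le_pow_left₀ (by positivity) h8 2
  have h9 : ∑ k ∈ Finset.range (m+1), ((k:ℝ) * ‖cf m x k‖)^2 ≤ D^2 := by
    have := Finset.sum_le_sum h6
    rw [← Finset.mul_sum] at this
    nlinarith [sq_nonneg D]
  have h10 : ∑ k ∈ Finset.range (m+1), ((k:ℝ) * ‖cf m x k‖) ≤ D * Real.sqrt m := by
    rw [Finset.sum_range_succ'] at h9 ⊢
    simp only [Nat.cast_zero, zero_mul, add_zero, ne_eq, OfNat.ofNat_ne_zero, not_false_eq_true, zero_pow] at h9 ⊢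
    have hc := Finset.sum_mul_sq_le_sq_mul_sq (Finset.range m) (fun k => ((k+1:ℕ):ℝ) * ‖cf m x (k+1)‖) (fun _ => (1:ℝ))
    simp only [mul_one, one_pow, Finset.sum_const, Finset.card_range, nsmul_eq_mul] at hc
    apply le_of_sq_le_sq _ (by positivity) |> fun h => h
    rw [mul_pow, Real.sq_sqrt (by positivity)]
    exact hc.trans (mul_le_mul_of_nonneg_right h9 (by positivity))
  have h11 : ∀ k : ℕ, ‖s^k - s'^k‖ ≤ k * ‖s - s'‖ := by
    intro k
    induction k with
    | zero => simp
    | succ k ih =>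
      have : s^(k+1) - s'^(k+1) = s^k * (s - s') + (s^k - s'^k) * s' := by ring
      rw [this]
      refine (norm_add_le _ _).trans ?_
      rw [norm_mul, norm_mul, norm_pow]
      have a1 : ‖s‖^k * ‖s - s'‖ ≤ 1 * ‖s - s'‖ := mul_le_mul_of_nonneg_right (pow_le_one₀ (norm_nonneg _) hs) (norm_nonneg _)
      have a2 : ‖s^k - s'^k‖ * ‖s'‖ ≤ (k * ‖s - s'‖) * 1 := mul_le_mul ih hs' (norm_nonneg _) (by positivity)
      push_cast; linarith
  have h12 : Sc m x s - Sc m x s' = ∑ k ∈ Finset.range (m+1), cf m x k * (s^k - s'^k) := by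
    simp only [Sc, mul_sub, Finset.sum_sub_distrib]
  rw [h12]
  refine (norm_sum_le _ _).trans ?_
  calc _ ≤ ∑ k ∈ Finset.range (m+1), ((k:ℝ) * ‖cf m x k‖) * ‖s - s'‖ := by
        apply Finset.sum_le_sum; intro k _
        rw [norm_mul]
        have := mul_le_mul_of_nonneg_left (h11 k) (norm_nonneg (cf m x k))
        linarith
    _ ≤ _ := by rw [← Finset.sum_mul]; exact mul_le_mul_of_nonneg_right h10 (norm_nonneg _)

end SecPA

section SecPB

open Complex ComplexConjugate

lemma nd_sup_le (m : ℕ) (x : ZMod (2*m+1) → ℝ) (a b : ℝ) (ha : 0 ≤ a) (hb : 0 ≤ b)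
    (h1 : ∑ j, x j ^ 2 ≤ (2*m+1) * a ^ 2) (h2 : ∑ j, Df m x j ^ 2 ≤ (2*m+1) * b ^ 2) (j) :
    |x j| ≤ a + b := by
  have hN : (0:ℝ) < 2*m+1 := by positivity
  obtain ⟨j0, hj0⟩ : ∃ j0, |x j0| ≤ a := by
    by_contra hcon
    push Not at hcon
    have : ∑ j : ZMod (2*m+1), a ^ 2 < ∑ j, x j ^ 2 := by
      apply Finset.sum_lt_sum_of_nonempty ⟨0, Finset.mem_univ _⟩
      intro i _
      rw [← sq_abs (x i)]
      have := hcon i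
      nlinarith
    simp [ZMod.card] at this
    linarith
  have key : ∀ n : ℕ, n ≤ 2*m+1 → |x (j0 + n) - x j0| ≤ ∑ k ∈ Finset.range n, |x (j0 + k + 1) - x (j0+k)| := by
    intro n
    induction n with
    | zero => intro _; simp
    | succ n ih =>
      intro hn
      rw [Finset.sum_range_succ]
      have := ih (by omega)
      push_cast
      rw [← add_assoc]
      have := abs_add_le (x (j0 + n + 1) - x (j0+n)) (x (j0+n) - x j0)
      rw [sub_add_sub_cancel] at this
      linarith
  have hall : ∑ k ∈ Finset.range (2*m+1), |x (j0 + k + 1) - x (j0+k)| = ∑ i : ZMod (2*m+1), |x (i + 1) - x i| := by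
    rw [← Equiv.sum_comp (Equiv.addLeft j0) (fun i => |x (i + 1) - x i|)]
    simp only [Equiv.coe_addLeft]
    rw [Finset.sum_range (fun k => |x (j0 + k + 1) - x (j0+k)|)]
    apply Finset.sum_congr rfl
    intro i _
    have : ((i : ℕ) : ZMod (2*m+1)) = i := by
      exact ZMod.natCast_zmod_val (n := 2*m+1) i
    rw [this]
  have hcs : (∑ i : ZMod (2*m+1), |x (i + 1) - x i|) ≤ b := by
    apply abs_le_of_sq_le_sq' _ hb |>.2
    have := sq_sum_le_card_mul_sum_sq (s := (Finset.univ : Finset (ZMod (2*m+1)))) (f := fun i => |x (i + 1) - x i|)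
    simp only [Finset.card_univ, ZMod.card, sq_abs] at this
    have e : ∑ j, Df m x j ^ 2 = (2*m+1)^2 * ∑ i, (x (i+1) - x i)^2 := by
      rw [Finset.mul_sum]; apply Finset.sum_congr rfl; intro i _; simp only [Df]; ring
    rw [e] at h2
    push_cast at this
    have h3 : (2*m+1) * ((2*m+1) * ∑ i, (x (i+1) - x i)^2) ≤ (2*m+1) * b^2 := by linarith
    have := le_of_mul_le_mul_left h3 hN
    linarith
  have hj : j = j0 + ((j - j0).val : ℕ) := by
    rw [ZMod.natCast_zmod_val]; ring
  have h5 := key (j - j0).val (ZMod.val_lt (j-j0)).le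
  rw [← hj] at h5
  have h6 : ∑ k ∈ Finset.range (j-j0).val, |x (j0 + k + 1) - x (j0+k)| ≤ ∑ k ∈ Finset.range (2*m+1), |x (j0 + k + 1) - x (j0+k)| := by
    apply Finset.sum_le_sum_of_subset_of_nonneg
    · exact Finset.range_mono (ZMod.val_lt (j-j0)).le
    · intros; positivity
  have h7 := abs_add_le (x j - x j0) (x j0)
  rw [sub_add_cancel] at h7
  linarith

lemma exists_fix {ι : Type*} [Fintype ι] (S : Set (ι → ℝ)) (hS : IsClosed S) (x0 : ι → ℝ) (hx0 : x0 ∈ S)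
    (f : (ι → ℝ) → (ι → ℝ)) (hf : ∀ x ∈ S, f x ∈ S)
    (hc : ∀ x ∈ S, ∀ y ∈ S, ∑ i, (f x i - f y i)^2 ≤ (1/4) * ∑ i, (x i - y i)^2) :
    ∃ x ∈ S, f x = x := by
  let S' : Set (EuclideanSpace ℝ ι) := {x | x.ofLp ∈ S}
  have hS' : IsClosed S' := hS.preimage (PiLp.continuous_ofLp 2 (fun _ : ι => ℝ))
  let f' : EuclideanSpace ℝ ι → EuclideanSpace ℝ ι := fun x => WithLp.toLp 2 (f x.ofLp)
  have hm : Set.MapsTo f' S' S' := fun x hx => hf _ hx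
  have hcon : ContractingWith (1/2) (hm.restrict f' S' S') := by
    refine ⟨by norm_num, LipschitzWith.of_dist_le_mul ?_⟩
    intro x y
    rw [Subtype.dist_eq, Subtype.dist_eq, EuclideanSpace.dist_eq, EuclideanSpace.dist_eq]
    have := hc _ x.2 _ y.2
    rw [Real.sqrt_le_left (by positivity), mul_pow, Real.sq_sqrt (Finset.sum_nonneg (fun i _ => sq_nonneg _))]
    simp only [Real.dist_eq, sq_abs]
    have e : (((1/2 : NNReal) : ℝ)) ^ 2 = 1/4 := by push_cast; norm_num
    rw [e]
    exact this
  obtain ⟨y, hy, hfy, -⟩ := ContractingWith.exists_fixedPoint' hS'.isComplete hm hcon (x := WithLp.toLp 2 x0) hx0 (edist_ne_top _ _)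
  refine ⟨y.ofLp, hy, ?_⟩
  have : f' y = y := hfy
  exact congrArg WithLp.ofLp this

/-- main operator -/
noncomputable def fpU (m : ℕ) (x0 : ZMod (2*m+1) → ℝ) (H : ZMod (2*m+1) → ℝ → ℝ → ℂ)
    (ξ : ZMod (2*m+1) → ℝ) (j : ZMod (2*m+1)) : ℂ := H j (ξ j) (Tr m (fun i => x0 i + ξ i) j)

lemma sum_two {ι : Type*} [Fintype ι] (a b c : ι → ℝ) (A B : ℝ) (h : ∀ i, |a i| ≤ |b i| + |c i|) 
   (hb : ∑ i, b i ^ 2 ≤ A) (hc : ∑ i, c i ^ 2 ≤ B) : ∑ i, a i ^ 2 ≤ 2 * (A + B) := by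
  have : ∑ i, a i ^ 2 ≤ ∑ i, 2 * (b i ^ 2 + c i ^ 2) := by
    apply Finset.sum_le_sum
    intro i _
    have := h i
    rw [← sq_abs (a i), ← sq_abs (b i), ← sq_abs (c i)]
    nlinarith [abs_nonneg (a i), sq_nonneg (|b i| - |c i|)]
  rw [← Finset.mul_sum, Finset.sum_add_distrib] at this
  linarith

lemma sum_const_le (m : ℕ) (a : ZMod (2*m+1) → ℝ) (A : ℝ) (h : ∀ i, |a i| ≤ A) : ∑ i, a i ^ 2 ≤ (2*m+1) * A ^ 2 := by
  have : ∑ i, a i ^ 2 ≤ ∑ i : ZMod (2*m+1), A ^ 2 := by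
    apply Finset.sum_le_sum; intro i _
    rw [← sq_abs]; exact pow_le_pow_left₀ (abs_nonneg _) (h i) 2
  simpa [ZMod.card] using this

lemma sum_scale {ι : Type*} [Fintype ι] (a b : ι → ℝ) (k A : ℝ) (h : ∀ i, |a i| ≤ k * |b i|) 
   (hb : ∑ i, b i ^ 2 ≤ A) : ∑ i, a i ^ 2 ≤ k ^ 2 * A := by
  calc ∑ i, a i ^ 2 ≤ ∑ i, k^2 * b i ^ 2 := by
        apply Finset.sum_le_sum; intro i _
        rw [← sq_abs (a i), ← sq_abs (b i), ← mul_pow]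
        exact pow_le_pow_left₀ (abs_nonneg _) (h i) 2
    _ = k^2 * ∑ i, b i ^ 2 := by rw [Finset.mul_sum]
    _ ≤ _ := by gcongr

/-- q = Im u - Tr Re u -/
noncomputable def fpq (m : ℕ) (u : ZMod (2*m+1) → ℂ) (j : ZMod (2*m+1)) : ℝ := (u j).im - Tr m (fun i => (u i).re) j

lemma fpq_norm (m : ℕ) (u : ZMod (2*m+1) → ℂ) (A : ℝ) (h : ∑ j, ‖u j‖ ^ 2 ≤ A) : ∑ j, fpq m u j ^ 2 ≤ 4 * A := by
  have h1 : ∑ j, (u j).im ^ 2 ≤ A := by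
    refine le_trans (Finset.sum_le_sum fun i _ => ?_) h
    rw [← sq_abs]; exact pow_le_pow_left₀ (abs_nonneg _) (Complex.abs_im_le_norm _) 2
  have h2 : ∑ j, (u j).re ^ 2 ≤ A := by
    refine le_trans (Finset.sum_le_sum fun i _ => ?_) h
    rw [← sq_abs]; exact pow_le_pow_left₀ (abs_nonneg _) (Complex.abs_re_le_norm _) 2
  have h3 := (Tr_norm m (fun i => (u i).re)).trans h2
  have := sum_two (fpq m u) (fun j => (u j).im) (Tr m (fun i => (u i).re)) A A (fun i => abs_sub _ _) h1 h3
  linarith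

lemma fpq_sub (m : ℕ) (u v : ZMod (2*m+1) → ℂ) (j) : fpq m (fun i => u i - v i) j = fpq m u j - fpq m v j := by
  simp only [fpq, Complex.sub_im, Complex.sub_re]
  rw [Tr_sub m (fun i => (u i).re) (fun i => (v i).re)]; ring

lemma fpq_Df (m : ℕ) (u : ZMod (2*m+1) → ℂ) (j) : fpq m (fun i => (2*m+1) * (u (i+1) - u i)) j = Df m (fpq m u) j := by
  have e1 : ∀ i, (((2*m+1 : ℂ)) * (u (i+1) - u i)).re = (2*m+1) * ((u (i+1)).re - (u i).re) := by
    intro i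
    have : (2*m+1 : ℂ) = ((2*m+1 : ℝ) : ℂ) := by push_cast; ring
    rw [this, Complex.re_ofReal_mul, Complex.sub_re]
  have e2 : ∀ i, (((2*m+1 : ℂ)) * (u (i+1) - u i)).im = (2*m+1) * ((u (i+1)).im - (u i).im) := by
    intro i
    have : (2*m+1 : ℂ) = ((2*m+1 : ℝ) : ℂ) := by push_cast; ring
    rw [this, Complex.im_ofReal_mul, Complex.sub_im]
  simp only [fpq, e1, e2, Df]
  have := Tr_Df m (fun i => (u i).re) j
  have e3 : Df m (fun i => (u i).re) = fun i => (2*m+1) * ((u (i+1)).re - (u i).re) := rfl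
  rw [e3] at this
  rw [this, Df]; ring

end SecPB

section SecPC

open Complex ComplexConjugate

lemma Df_add (m : ℕ) (x y : ZMod (2*m+1) → ℝ) (j) : Df m (fun j => x j + y j) j = Df m x j + Df m y j := by
  simp only [Df]; ring

theorem fp_exists (K L r : ℝ) (hK : 1 ≤ K) (hL : 1 ≤ L) (hr : 0 < r) (hr0 : r * (14 * K * L^2) ≤ 1)
    (m : ℕ) (x0 g : ZMod (2*m+1) → ℝ) (hx0 : ∀ j, |x0 j| ≤ L) (hDx0 : ∀ j, |Df m x0 j| ≤ L)
    (hg : ∀ j, |g j| ≤ L) (hDg : ∀ j, |Df m g j| ≤ L)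
    (H : ZMod (2*m+1) → ℝ → ℝ → ℂ)
    (hH0 : ∀ j ξ y, |ξ| ≤ 2*r → |y| ≤ 4*L → ‖H j ξ y‖ ≤ K * r^2)
    (hH1 : ∀ j ξ y ξ' y', |ξ| ≤ 2*r → |y| ≤ 4*L → |ξ'| ≤ 2*r → |y'| ≤ 4*L →
      ‖H j ξ y - H j ξ' y'‖ ≤ K * r * |ξ-ξ'| + K * r^2 * |y - y'|)
    (hH2 : ∀ j ξ y, |ξ| ≤ 2*r → |y| ≤ 4*L → (2*m+1) * ‖H (j+1) ξ y - H j ξ y‖ ≤ K * r^2) :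
    ∃ ξ : ZMod (2*m+1) → ℝ, (∀ j, |ξ j| ≤ 2*r) ∧ (∀ j, |Tr m (fun i => x0 i + ξ i) j| ≤ 4*L) ∧
      (∑ j, Df m (fun i => x0 i + ξ i) j ^ 2 ≤ (2*m+1) * (2*L)^2) ∧
      (∑ j, Df m (fun i => (fpU m x0 H ξ i).re) j ^ 2 ≤ (2*m+1) * 1^2) ∧
      ∀ j, ξ j = g j * fpq m (fpU m x0 H ξ) j := by
  have hN : (0:ℝ) < 2*m+1 := by positivity
  have hKL : 1 ≤ K * L^2 := by nlinarith
  have hr1 : r ≤ 1 := by nlinarith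
  have hrk : r^2 * (196 * K^2 * L^4) ≤ 1 := by
    have : r^2 * (196 * K^2 * L^4) = (r * (14 * K * L^2))^2 := by ring
    rw [this]; exact pow_le_one₀ (by positivity) hr0
  have hL24 : L^2 ≤ L^4 := pow_le_pow_right₀ hL (by norm_num)
  have hL2 : 1 ≤ L^2 := one_le_pow₀ hL
  have hrkL : r^2 * (196 * K^2 * L^2) ≤ 1 := le_trans (by gcongr) hrk
  let S : Set (ZMod (2*m+1) → ℝ) := {ξ | ∑ j, ξ j ^ 2 ≤ (2*m+1) * r^2 ∧ ∑ j, Df m ξ j ^ 2 ≤ (2*m+1) * r^2}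
  have hSc : IsClosed S := by
    have c1 : IsClosed {ξ : ZMod (2*m+1) → ℝ | ∑ j, ξ j ^ 2 ≤ (2*m+1) * r^2} :=
      isClosed_le (by fun_prop) continuous_const
    have c2 : IsClosed {ξ : ZMod (2*m+1) → ℝ | ∑ j, Df m ξ j ^ 2 ≤ (2*m+1) * r^2} :=
      isClosed_le (by simp only [Df]; fun_prop) continuous_const
    exact c1.inter c2
  have hS0 : (fun _ => (0:ℝ)) ∈ S := by
    constructor
    · simp; positivity
    · simp [Df]; positivity
  have A1 : ∀ ξ ∈ S, ∀ j, |ξ j| ≤ 2*r := by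
    intro ξ hξ j
    have := nd_sup_le m ξ r r hr.le hr.le hξ.1 hξ.2 j
    linarith
  have hLr : 2 * ((2*m+1) * L^2 + (2*m+1) * r^2) ≤ (2*m+1) * (2*L)^2 := by
    have : r^2 ≤ L^2 := by gcongr; linarith
    nlinarith
  have A2 : ∀ ξ ∈ S, ∑ j, (x0 j + ξ j) ^ 2 ≤ (2*m+1) * (2*L)^2 := by
    intro ξ hξ
    exact (sum_two (fun j => x0 j + ξ j) x0 ξ _ _ (fun i => abs_add_le _ _) (sum_const_le m x0 L hx0) hξ.1).trans hLr
  have A3 : ∀ ξ ∈ S, ∑ j, Df m (fun i => x0 i + ξ i) j ^ 2 ≤ (2*m+1) * (2*L)^2 := by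
    intro ξ hξ
    refine (sum_two (Df m (fun i => x0 i + ξ i)) (Df m x0) (Df m ξ) _ _ (fun i => ?_) (sum_const_le m _ L hDx0) hξ.2).trans hLr
    rw [Df_add]; exact abs_add_le _ _
  have A4 : ∀ ξ ∈ S, ∑ j, Df m (Tr m (fun i => x0 i + ξ i)) j ^ 2 ≤ (2*m+1) * (2*L)^2 := by
    intro ξ hξ
    simp only [← Tr_Df]
    exact (Tr_norm _ _).trans (A3 ξ hξ)
  have A5 : ∀ ξ ∈ S, ∀ j, |Tr m (fun i => x0 i + ξ i) j| ≤ 4*L := by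
    intro ξ hξ j
    have := nd_sup_le m _ (2*L) (2*L) (by positivity) (by positivity) ((Tr_norm _ _).trans (A2 ξ hξ)) (A4 ξ hξ) j
    linarith
  have A6 : ∀ ξ ∈ S, ∑ j, ‖fpU m x0 H ξ j‖^2 ≤ (2*m+1) * (K*r^2)^2 := by
    intro ξ hξ
    apply sum_const_le m (fun j => ‖fpU m x0 H ξ j‖)
    intro i
    rw [abs_norm]
    exact hH0 _ _ _ (A1 ξ hξ i) (A5 ξ hξ i)
  have A7 : ∀ ξ ∈ S, ∑ j, ‖(2*m+1) * (fpU m x0 H ξ (j+1) - fpU m x0 H ξ j)‖^2 ≤ (2*m+1) * (22 * K^2*r^4*L^2) := by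
    intro ξ hξ
    set y := Tr m (fun i => x0 i + ξ i) with hy
    have hp : ∀ j, ‖(2*m+1) * (fpU m x0 H ξ (j+1) - fpU m x0 H ξ j)‖ ≤ K*r*|Df m ξ j| + (K*r^2*|Df m y j| + K*r^2) := by
      intro j
      have e1 := hH1 (j+1) _ _ _ _ (A1 ξ hξ (j+1)) (A5 ξ hξ (j+1)) (A1 ξ hξ j) (A5 ξ hξ j)
      have e2 := hH2 j _ _ (A1 ξ hξ j) (A5 ξ hξ j)
      rw [norm_mul]
      have e3 : ‖(2*m+1:ℂ)‖ = 2*m+1 := by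
        have : (2*m+1 : ℂ) = ((2*m+1 : ℝ) : ℂ) := by push_cast; ring
        rw [this, Complex.norm_real, Real.norm_of_nonneg hN.le]
      rw [e3]
      have e4 := norm_add_le (H (j+1) (ξ (j+1)) (y (j+1)) - H (j+1) (ξ j) (y j)) (H (j+1) (ξ j) (y j) - H j (ξ j) (y j))
      rw [sub_add_sub_cancel] at e4
      have e5 : |Df m ξ j| = (2*m+1) * |ξ (j+1) - ξ j| := by rw [Df, abs_mul, abs_of_pos hN]
      have e6 : |Df m y j| = (2*m+1) * |y (j+1) - y j| := by rw [Df, abs_mul, abs_of_pos hN]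
      rw [e5, e6]
      calc _ ≤ (2*m+1) * (‖H (j+1) (ξ (j+1)) (y (j+1)) - H (j+1) (ξ j) (y j)‖ + ‖H (j+1) (ξ j) (y j) - H j (ξ j) (y j)‖) := by
              gcongr; exact e4
        _ ≤ (2*m+1) * (K * r * |ξ (j+1) -ξ j| + K * r^2 * |y (j+1) - y j|) + K*r^2 := by
              rw [mul_add]; gcongr
        _ = _ := by ring
    have s1 : ∑ j, (K*r^2*|Df m y j|)^2 ≤ (K*r^2)^2 * ((2*m+1) * (2*L)^2) := by
      apply sum_scale _ (Df m y) _ _ _ (A4 ξ hξ)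
      intro i; rw [abs_of_nonneg (by positivity)]
    have s2 : ∑ j, (K*r*|Df m ξ j|)^2 ≤ (K*r)^2 * ((2*m+1) * r^2) := by
      apply sum_scale _ (Df m ξ) _ _ _ hξ.2
      intro i; rw [abs_of_nonneg (by positivity)]
    have s3 := sum_two (fun j => K*r^2*|Df m y j| + K*r^2) (fun j => K*r^2*|Df m y j|) (fun j => K*r^2) _ _
      (fun i => abs_add_le _ _) s1 (sum_const_le m _ (K*r^2) (fun i => by rw [abs_of_nonneg (by positivity)]))
    have s4 := sum_two (fun j => ‖(2*m+1) * (fpU m x0 H ξ (j+1) - fpU m x0 H ξ j)‖) _ _ _ _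
      (fun i => by
        rw [abs_norm]
        refine (hp i).trans ?_
        apply add_le_add (le_abs_self _) (le_abs_self _)) s2 s3
    refine s4.trans ?_
    have : 2 * ((K * r) ^ 2 * ((2 * m + 1) * r ^ 2) + 2 * ((K * r ^ 2) ^ 2 * ((2 * m + 1) * (2 * L) ^ 2) + (2 * m + 1) * (K * r ^ 2) ^ 2))
      = (2*m+1) * (K^2*r^4*(6 + 16*L^2)) := by ring
    rw [this]
    have : K^2*r^4*(6 + 16*L^2) ≤ K^2*r^4*(22*L^2) := by gcongr; linarith
    nlinarith
  let Φ : (ZMod (2*m+1) → ℝ) → ZMod (2*m+1) → ℝ := fun ξ j => g j * fpq m (fpU m x0 H ξ) j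
  have hmap : ∀ ξ ∈ S, Φ ξ ∈ S := by
    intro ξ hξ
    have q1 := fpq_norm m _ _ (A6 ξ hξ)
    have q2 := fpq_norm m _ _ (A7 ξ hξ)
    simp only [fpq_Df] at q2
    constructor
    · have := sum_scale (Φ ξ) _ L _ (fun i => by
        simp only [Φ]; rw [abs_mul]; gcongr; exact hg i) q1
      refine this.trans ?_
      have e : L ^ 2 * (4 * ((2 * m + 1) * (K * r ^ 2) ^ 2)) = (2*m+1) * (r^2 * (r^2 * (4*K^2*L^2))) := by ring
      rw [e]; gcongr
      apply mul_le_of_le_one_right (by positivity)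
      refine le_trans ?_ hrkL
      gcongr; norm_num
    · have t1 : ∑ j, (L * Df m (fpq m (fpU m x0 H ξ)) j)^2 ≤ L^2 * _ := sum_scale _ _ L _ (fun i => by
        rw [abs_mul, abs_of_nonneg (by positivity : 0 ≤ L)]) q2
      have t2 : ∑ j, (L * fpq m (fpU m x0 H ξ) j)^2 ≤ L^2 * _ := sum_scale _ _ L _ (fun i => by
        rw [abs_mul, abs_of_nonneg (by positivity : 0 ≤ L)]) q1
      have t3 := sum_two (Df m (Φ ξ)) _ _ _ _ (fun i => by
        have : Df m (Φ ξ) i = g (i+1) * Df m (fpq m (fpU m x0 H ξ)) i + Df m g i * fpq m (fpU m x0 H ξ) i := by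
          simp only [Df, Φ]; ring
        rw [this]
        refine (abs_add_le _ _).trans ?_
        rw [abs_mul, abs_mul, abs_mul, abs_mul, abs_of_nonneg (by positivity : 0 ≤ L)]
        gcongr
        · exact hg _
        · exact hDg _) t1 t2
      refine t3.trans ?_
      have e : 2 * (L ^ 2 * (4 * ((2 * m + 1) * (22 * K ^ 2 * r ^ 4 * L ^ 2))) + L ^ 2 * (4 * ((2 * m + 1) * (K * r ^ 2) ^ 2)))
        = (2*m+1) * (r^2 * (r^2*(176*K^2*L^4 + 8*K^2*L^2))) := by ring
      rw [e]; gcongr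
      apply mul_le_of_le_one_right (by positivity)
      refine le_trans ?_ hrk
      gcongr
      nlinarith [mul_le_mul_of_nonneg_left hL24 (sq_nonneg K)]
  have hcon : ∀ x ∈ S, ∀ y ∈ S, ∑ i, (Φ x i - Φ y i)^2 ≤ (1/4) * ∑ i, (x i - y i)^2 := by
    intro x hx y hy
    have s0 : ∑ j, (Tr m (fun i => x0 i + x i) j - Tr m (fun i => x0 i + y i) j)^2 ≤ ∑ i, (x i - y i)^2 := by
      have := Tr_norm m (fun i => x i - y i)
      refine le_trans (le_of_eq ?_) this
      apply Finset.sum_congr rfl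
      intro j _
      rw [← Tr_sub]
      congr 3; ext i; ring
    have s1 : ∑ j, (K*r*|x j - y j|)^2 ≤ (K*r)^2 * (∑ i, (x i - y i)^2) := by
      apply sum_scale _ (fun j => x j - y j) _ _ _ le_rfl
      intro i; rw [abs_of_nonneg (by positivity)]
    have s2 : ∑ j, (K*r^2*|Tr m (fun i => x0 i + x i) j - Tr m (fun i => x0 i + y i) j|)^2 ≤ (K*r^2)^2 * (∑ i, (x i - y i)^2) := by
      apply sum_scale _ (fun j => Tr m (fun i => x0 i + x i) j - Tr m (fun i => x0 i + y i) j) _ _ _ s0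
      intro i; rw [abs_of_nonneg (by positivity)]
    have s3 := sum_two (fun j => ‖fpU m x0 H x j - fpU m x0 H y j‖) _ _ _ _ (fun i => by
      rw [abs_norm]
      refine (hH1 i _ _ _ _ (A1 x hx i) (A5 x hx i) (A1 y hy i) (A5 y hy i)).trans ?_
      exact add_le_add (le_abs_self _) (le_abs_self _)) s1 s2
    have q := fpq_norm m (fun j => fpU m x0 H x j - fpU m x0 H y j) _ s3
    simp only [fpq_sub] at q
    have := sum_scale (fun i => Φ x i - Φ y i) _ L _ (fun i => by
        simp only [Φ]; rw [← mul_sub, abs_mul]; gcongr; exact hg i) q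
    refine this.trans ?_
    set D := ∑ i, (x i - y i)^2
    have hD : 0 ≤ D := Finset.sum_nonneg (fun i _ => sq_nonneg _)
    have e : L ^ 2 * (4 * (2 * ((K * r) ^ 2 * D + (K * r ^ 2) ^ 2 * D))) = (r^2 * (8*K^2*L^2 + 8*K^2*L^2*r^2)) * D := by ring
    rw [e]
    gcongr
    have hr2 : r^2 ≤ 1 := pow_le_one₀ hr.le hr1
    have : r^2 * (8*K^2*L^2 + 8*K^2*L^2*r^2) ≤ r^2 * (49 * K^2*L^2) := by
      gcongr
      have : 0 ≤ K^2*L^2 := by positivity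
      nlinarith
    linarith
  obtain ⟨ξ, hξ, hfix⟩ := exists_fix S hSc _ hS0 Φ hmap hcon
  refine ⟨ξ, A1 ξ hξ, A5 ξ hξ, A3 ξ hξ, ?_, fun j => (congrFun hfix j).symm⟩
  have h7 := A7 ξ hξ
  have : ∑ j, Df m (fun i => (fpU m x0 H ξ i).re) j ^ 2 ≤ (2*m+1) * (22 * K^2*r^4*L^2) := by
    refine le_trans (Finset.sum_le_sum fun j _ => ?_) h7
    rw [← sq_abs]
    apply pow_le_pow_left₀ (abs_nonneg _)
    refine le_trans (le_of_eq ?_) (Complex.abs_re_le_norm _)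
    have : (2*m+1 : ℂ) = ((2*m+1 : ℝ) : ℂ) := by push_cast; ring
    rw [this, Complex.re_ofReal_mul, Complex.sub_re]; rfl
  refine this.trans ?_
  gcongr
  have hr2 : r^2 ≤ 1 := pow_le_one₀ hr.le hr1
  have : 22 * K^2*r^4*L^2 = r^2 * (22 * K^2*L^2) * r^2 := by ring
  rw [this, one_pow]
  apply mul_le_one₀ _ (by positivity) hr2
  refine le_trans ?_ hrkL
  gcongr; norm_num

end SecPC

section SecPD

open Complex ComplexConjugate

lemma exp_lip (M : ℝ) (a b : ℂ) (ha : a.re ≤ M) (hb : b.re ≤ M) : ‖exp a - exp b‖ ≤ Real.exp M * ‖a - b‖ := by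
  have hconv : Convex ℝ {z : ℂ | z.re ≤ M} := convex_halfSpace_re_le M
  refine hconv.norm_image_sub_le_of_norm_hasDerivWithin_le (f := exp) (f' := exp) (fun x hx => (Complex.hasDerivAt_exp x).hasDerivWithinAt) ?_ hb ha
  intro x hx
  rw [Complex.norm_exp]
  exact Real.exp_le_exp.mpr hx

/-- bounded Lipschitz pair -/
def BL (M d : ℝ) (f f' : ℂ) : Prop := ‖f‖ ≤ M ∧ ‖f'‖ ≤ M ∧ ‖f - f'‖ ≤ M * d

lemma BL.mul {M M' d : ℝ} {f f' g g' : ℂ} (h : BL M d f f') (h' : BL M' d g g') (hd : 0 ≤ d) : BL (2*M*M') d (f*g) (f'*g') := by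
  obtain ⟨h1, h2, h3⟩ := h
  obtain ⟨k1, k2, k3⟩ := h'
  have hM : 0 ≤ M := (norm_nonneg _).trans h1
  have hM' : 0 ≤ M' := (norm_nonneg _).trans k1
  have hMM := mul_nonneg hM hM'
  refine ⟨?_, ?_, ?_⟩
  · rw [norm_mul]; nlinarith [mul_le_mul h1 k1 (norm_nonneg _) hM]
  · rw [norm_mul]; nlinarith [mul_le_mul h2 k2 (norm_nonneg _) hM]
  · have : f*g - f'*g' = f*(g-g') + (f-f')*g' := by ring
    rw [this]
    refine (norm_add_le _ _).trans ?_
    rw [norm_mul, norm_mul]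
    have := mul_le_mul h1 k3 (norm_nonneg _) hM
    have := mul_le_mul h3 k2 (norm_nonneg _) (by positivity)
    nlinarith

lemma BL.mono {M M' d d' : ℝ} {f f' : ℂ} (h : BL M d f f') (hM : M ≤ M') (hd0 : 0 ≤ d) (hd : d ≤ d') : BL M' d' f f' := by
  obtain ⟨h1, h2, h3⟩ := h
  have h0 : 0 ≤ M := (norm_nonneg _).trans h1
  exact ⟨h1.trans hM, h2.trans hM, h3.trans (by gcongr; linarith)⟩

/-- bounded Lipschitz on unit circle -/
def LC (f : ℂ → ℂ) : Prop := ∃ M : ℝ, ∀ s s', ‖s‖ = 1 → ‖s'‖ = 1 → BL M ‖s - s'‖ (f s) (f s')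

lemma LC.mul {f g : ℂ → ℂ} (hf : LC f) (hg : LC g) : LC (fun s => f s * g s) := by
  obtain ⟨M, hM⟩ := hf
  obtain ⟨M', hM'⟩ := hg
  exact ⟨2*M*M', fun s s' hs hs' => (hM s s' hs hs').mul (hM' s s' hs hs') (norm_nonneg _)⟩

lemma LC.add {f g : ℂ → ℂ} (hf : LC f) (hg : LC g) : LC (fun s => f s + g s) := by
  obtain ⟨M, hM⟩ := hf
  obtain ⟨M', hM'⟩ := hg
  refine ⟨M+M', fun s s' hs hs' => ?_⟩
  obtain ⟨h1, h2, h3⟩ := hM s s' hs hs'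
  obtain ⟨k1, k2, k3⟩ := hM' s s' hs hs'
  refine ⟨(norm_add_le _ _).trans (by linarith), (norm_add_le _ _).trans (by linarith), ?_⟩
  have : f s + g s - (f s' + g s') = (f s - f s') + (g s - g s') := by ring
  rw [this]
  exact (norm_add_le _ _).trans (by linarith)

lemma LC.const (a : ℂ) : LC (fun _ => a) := ⟨‖a‖, fun s s' _ _ => ⟨le_rfl, le_rfl, by simp; positivity⟩⟩

lemma LC.id : LC (fun s => s) := ⟨1, fun s s' hs hs' => ⟨hs.le, hs'.le, by simp⟩⟩

lemma LC.conj {f : ℂ → ℂ} (hf : LC f) : LC (fun s => conj (f s)) := by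
  obtain ⟨M, hM⟩ := hf
  refine ⟨M, fun s s' hs hs' => ?_⟩
  obtain ⟨h1, h2, h3⟩ := hM s s' hs hs'
  refine ⟨by simpa using h1, by simpa using h2, ?_⟩
  rw [← map_sub, Complex.norm_conj]; exact h3

lemma LC.inv {f : ℂ → ℂ} (hf : LC f) (c : ℝ) (hc : 0 < c) (h : ∀ s, ‖s‖ = 1 → c ≤ ‖f s‖) : LC (fun s => (f s)⁻¹) := by
  obtain ⟨M, hM⟩ := hf
  have hM0 : 0 ≤ M := (norm_nonneg _).trans (hM 1 1 (by simp) (by simp)).1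
  refine ⟨c⁻¹ + c⁻¹*c⁻¹*M, fun s s' hs hs' => ?_⟩
  obtain ⟨h1, h2, h3⟩ := hM s s' hs hs'
  have i1 : ‖(f s)⁻¹‖ ≤ c⁻¹ := by rw [norm_inv]; exact inv_anti₀ hc (h s hs)
  have i2 : ‖(f s')⁻¹‖ ≤ c⁻¹ := by rw [norm_inv]; exact inv_anti₀ hc (h s' hs')
  have hp : 0 ≤ c⁻¹*c⁻¹*M := by positivity
  refine ⟨by linarith, by linarith, ?_⟩
  have n1 : f s ≠ 0 := by rw [← norm_pos_iff]; linarith [h s hs]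
  have n2 : f s' ≠ 0 := by rw [← norm_pos_iff]; linarith [h s' hs']
  have : (f s)⁻¹ - (f s')⁻¹ = (f s)⁻¹ * (f s')⁻¹ * (f s' - f s) := by field_simp
  rw [this, norm_mul, norm_mul, norm_sub_rev]
  calc _ ≤ c⁻¹ * c⁻¹ * (M * ‖s - s'‖) := by gcongr
    _ ≤ _ := by
      have : 0 ≤ c⁻¹ * ‖s - s'‖ := by positivity
      nlinarith

lemma LC.expI {f : ℂ → ℂ} (hf : LC f) (h : ∀ s, (f s).re = 0) : LC (fun s => exp (f s)) := by
  obtain ⟨M, hM⟩ := hf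
  have hM0 : 0 ≤ M := (norm_nonneg _).trans (hM 1 1 (by simp) (by simp)).1
  refine ⟨1+M, fun s s' hs hs' => ?_⟩
  obtain ⟨h1, h2, h3⟩ := hM s s' hs hs'
  refine ⟨?_, ?_, ?_⟩
  · rw [Complex.norm_exp, h]; simp [hM0]
  · rw [Complex.norm_exp, h]; simp [hM0]
  · refine (exp_lip 0 _ _ (h s).le (h s').le).trans ?_
    rw [Real.exp_zero, one_mul]
    nlinarith [norm_nonneg (s-s')]

lemma LC.comp_sq {f : ℂ → ℂ} (hf : LC f) : LC (fun s => f (s^2)) := by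
  obtain ⟨M, hM⟩ := hf
  have hM0 : 0 ≤ M := (norm_nonneg _).trans (hM 1 1 (by simp) (by simp)).1
  refine ⟨2*M, fun s s' hs hs' => ?_⟩
  obtain ⟨h1, h2, h3⟩ := hM (s^2) (s'^2) (by simp [hs]) (by simp [hs'])
  refine ⟨by linarith, by linarith, h3.trans ?_⟩
  have : s^2 - s'^2 = (s+s')*(s-s') := by ring
  rw [this, norm_mul]
  have : ‖s + s'‖ ≤ 2 := (norm_add_le _ _).trans (by linarith)
  have : ‖s+s'‖ * ‖s-s'‖ ≤ 2 * ‖s-s'‖ := by gcongr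
  nlinarith

/-- Q and its bits -/
noncomputable def Qf (t : ℝ) (σ : ℂ) : ℂ := σ + (t:ℂ)*σ^2 + ((t:ℂ)^2/3)*σ^3

/-- phi k ξ = exp(-2ikξ) - 1 + 2ikξ -/
noncomputable def phk (k : ℕ) (ξ : ℝ) : ℂ := exp (-2*I*k*ξ) - 1 + 2*I*k*ξ

lemma phk_sub (k : ℕ) (r ξ ξ' : ℝ) (h : |ξ| ≤ r) (h' : |ξ'| ≤ r) : ‖phk k ξ - phk k ξ'‖ ≤ 4*k^2*r*|ξ-ξ'| := by
  have hd : ∀ x : ℝ, HasDerivAt (phk k) (-2*I*k*exp (-2*I*k*x) + 2*I*k) x := by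
    intro x
    have h1 : HasDerivAt (fun x : ℝ => (-2*I*k*(x:ℂ))) (-2*I*k) x := by
      simpa using (Complex.ofRealCLM.hasDerivAt (x := x)).const_mul (-2*I*k : ℂ)
    have h2 : HasDerivAt (fun x : ℝ => (2*I*k*(x:ℂ))) (2*I*k) x := by
      simpa using (Complex.ofRealCLM.hasDerivAt (x := x)).const_mul (2*I*k : ℂ)
    have := (h1.cexp.sub_const 1).add h2
    exact this.congr_deriv (by ring)
  have hconv : Convex ℝ (Set.Icc (-r) r) := convex_Icc _ _
  have := hconv.norm_image_sub_le_of_norm_hasDerivWithin_le (f := phk k) (C := 4*k^2*r) (fun x hx => (hd x).hasDerivWithinAt) ?_ (abs_le.mp h') (abs_le.mp h)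
  · simpa [Real.norm_eq_abs] using this
  · intro x hx
    have : -2*I*k*exp (-2*I*k*x) + 2*I*k = (-2*I*k) * (exp (-2*I*k*x) - exp 0) := by rw [Complex.exp_zero]; ring
    rw [this, norm_mul]
    have e1 := exp_lip 0 (-2*I*k*x) 0 (by simp) (by simp)
    have hx' : |x| ≤ r := abs_le.mpr hx
    simp at e1 ⊢
    calc 2 * (k:ℝ) * ‖exp (-(2*I*k*x)) - 1‖ ≤ 2*k*(2*k*|x|) := by gcongr
      _ ≤ 2*k*(2*k*r) := by gcongr
      _ = _ := by ring

lemma phk_le (k : ℕ) (r ξ : ℝ) (h : |ξ| ≤ r) : ‖phk k ξ‖ ≤ 4*k^2*r^2 := by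
  have hr : 0 ≤ r := (abs_nonneg _).trans h
  have := phk_sub k r ξ 0 h (by simpa using hr)
  have h0 : phk k 0 = 0 := by simp [phk]
  rw [h0, sub_zero, sub_zero] at this
  refine this.trans ?_
  have : 4*k^2*r^2 = 4*k^2*r*r := by ring
  rw [this]; gcongr

/-- quadratic remainder -/
noncomputable def Arem (t : ℝ) (τ : ℂ) (ξ : ℝ) : ℂ := τ * phk 1 ξ + (t:ℂ)*τ^2*phk 2 ξ + ((t:ℂ)^2/3)*τ^3*phk 3 ξ

lemma Arem_eq (t : ℝ) (τ : ℂ) (ξ : ℝ) :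
    Arem t τ ξ = Qf t (τ * exp (-2*I*ξ)) - Qf t τ + 2*I*τ*(1+t*τ)^2*ξ := by
  simp only [Arem, Qf, phk, mul_pow, ← Complex.exp_nat_mul]
  have e1 : -2*I*((1:ℕ):ℂ)*ξ = -2*I*ξ := by push_cast; ring
  have e2 : ((2:ℕ):ℂ)*(-2*I*ξ) = -2*I*((2:ℕ):ℂ)*ξ := by ring
  have e3 : ((3:ℕ):ℂ)*(-2*I*ξ) = -2*I*((3:ℕ):ℂ)*ξ := by ring
  rw [e1, e2, e3]
  push_cast
  ring

lemma norm_add3 (a b c : ℂ) : ‖a+b+c‖ ≤ ‖a‖+‖b‖+‖c‖ := (norm_add_le _ _).trans (by gcongr; exact norm_add_le _ _)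

lemma Arem_le (t : ℝ) (ht : |t| ≤ 1) (τ : ℂ) (hτ : ‖τ‖ = 1) (r ξ : ℝ) (h : |ξ| ≤ r) : ‖Arem t τ ξ‖ ≤ 100*r^2 := by
  refine (norm_add3 _ _ _).trans ?_
  have h1 := phk_le 1 r ξ h
  have h2 := phk_le 2 r ξ h
  have h3 := phk_le 3 r ξ h
  have t2 : |t|^2/3 ≤ 1 := by nlinarith [abs_nonneg t]
  simp only [norm_mul, norm_pow, norm_div, Complex.norm_real, Real.norm_eq_abs, hτ, one_pow, mul_one, one_mul]
  simp at h1 h2 h3 ⊢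
  have := mul_le_mul ht h2 (norm_nonneg _) zero_le_one
  have := mul_le_mul (by simpa using t2) h3 (norm_nonneg _) zero_le_one
  rw [sq_abs] at *
  nlinarith

lemma Arem_sub_ξ (t : ℝ) (ht : |t| ≤ 1) (τ : ℂ) (hτ : ‖τ‖ = 1) (r ξ ξ' : ℝ) (h : |ξ| ≤ r) (h' : |ξ'| ≤ r) :
    ‖Arem t τ ξ - Arem t τ ξ'‖ ≤ 100*r*|ξ-ξ'| := by
  have : Arem t τ ξ - Arem t τ ξ' = τ * (phk 1 ξ - phk 1 ξ') + (t:ℂ)*τ^2*(phk 2 ξ - phk 2 ξ') + ((t:ℂ)^2/3)*τ^3*(phk 3 ξ - phk 3 ξ') := by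
    simp only [Arem]; ring
  rw [this]
  refine (norm_add3 _ _ _).trans ?_
  have h1 := phk_sub 1 r ξ ξ' h h'
  have h2 := phk_sub 2 r ξ ξ' h h'
  have h3 := phk_sub 3 r ξ ξ' h h'
  have t2 : |t|^2/3 ≤ 1 := by nlinarith [abs_nonneg t]
  simp only [norm_mul, norm_pow, norm_div, Complex.norm_real, Real.norm_eq_abs, hτ, one_pow, mul_one, one_mul]
  have hr : 0 ≤ r * |ξ - ξ'| := mul_nonneg ((abs_nonneg _).trans h) (abs_nonneg _)
  simp at h1 h2 h3 ⊢
  have := mul_le_mul ht h2 (norm_nonneg _) zero_le_one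
  have := mul_le_mul (by simpa using t2) h3 (norm_nonneg _) zero_le_one
  rw [sq_abs] at *
  nlinarith

lemma Arem_sub_τ (t : ℝ) (ht : |t| ≤ 1) (τ τ' : ℂ) (hτ : ‖τ‖ = 1) (hτ' : ‖τ'‖ = 1) (r ξ : ℝ) (h : |ξ| ≤ r) :
    ‖Arem t τ ξ - Arem t τ' ξ‖ ≤ 200*r^2*‖τ-τ'‖ := by
  have : Arem t τ ξ - Arem t τ' ξ = (τ-τ') * phk 1 ξ + (t:ℂ)*((τ+τ')*(τ-τ'))*phk 2 ξ + ((t:ℂ)^2/3)*((τ^2+τ*τ'+τ'^2)*(τ-τ'))*phk 3 ξ := by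
    simp only [Arem]; ring
  rw [this]
  refine (norm_add3 _ _ _).trans ?_
  have h1 := phk_le 1 r ξ h
  have h2 := phk_le 2 r ξ h
  have h3 := phk_le 3 r ξ h
  have t2 : |t|^2/3 ≤ 1/3 := by nlinarith [abs_nonneg t]
  have a1 : ‖τ+τ'‖ ≤ 2 := (norm_add_le _ _).trans (by linarith)
  have a2 : ‖τ^2+τ*τ'+τ'^2‖ ≤ 3 := (norm_add3 _ _ _).trans (by simp [hτ, hτ']; norm_num)
  simp only [norm_mul, norm_div, norm_pow, Complex.norm_real, Real.norm_eq_abs]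
  simp only [Nat.cast_one, Nat.cast_ofNat] at h1 h2 h3
  calc ‖τ-τ'‖*‖phk 1 ξ‖ + |t|  * (‖τ+τ'‖*‖τ-τ'‖)*‖phk 2 ξ‖ + |t|^2/‖(3:ℂ)‖*(‖τ^2+τ*τ'+τ'^2‖*‖τ-τ'‖)*‖phk 3 ξ‖
      ≤ ‖τ-τ'‖*(4*1^2*r^2) + 1*(2*‖τ-τ'‖)*(4*2^2*r^2) + (1/3)*(3*‖τ-τ'‖)*(4*3^2*r^2) := by
        have t3 : |t| ^ 2/‖(3:ℂ)‖ ≤ 1/3 := by simpa using t2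
        refine add_le_add (add_le_add ?_ ?_) ?_
        · gcongr
        · gcongr
        · refine mul_le_mul (mul_le_mul t3 ?_ (by positivity) (by norm_num)) h3 (by positivity) (by positivity)
          gcongr
    _ ≤ _ := by
        have : 0 ≤ r^2*‖τ-τ'‖ := by positivity
        nlinarith

end SecPD

section SecPE

open Complex ComplexConjugate

noncomputable def tauf (X : ℂ → ℝ) (ζ : ℂ) : ℂ := conj ζ * exp (-2*I*X ζ)

structure IsBase (t : ℝ) (X W : ℂ → ℝ) (E b : ℂ → ℂ) : Prop where
  hE : DiffContOnCl ℂ E (Metric.ball 0 1)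
  hb : DiffContOnCl ℂ b (Metric.ball 0 1)
  hX : LC (fun s => (X s : ℂ))
  hW : LC (fun s => (W s : ℂ))
  hc : ∃ c > 0, ∀ ζ : ℂ, ‖ζ‖ = 1 → c ≤ W ζ
  h1 : ∀ ζ : ℂ, ‖ζ‖ = 1 → exp (E ζ) * conj ζ = Qf t (tauf X ζ)
  h2 : ∀ ζ : ℂ, ‖ζ‖ = 1 → tauf X ζ * (1 + t * tauf X ζ)^2 = W ζ * b ζ * Qf t (tauf X ζ)

noncomputable def zfun (x0 : ℂ → ℝ) (s : ℂ) (ξ y : ℝ) : ℂ := s * exp (-y + I * (x0 s + ξ))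

lemma zfun_norm (x0 : ℂ → ℝ) (s : ℂ) (hs : ‖s‖ = 1) (ξ y : ℝ) : ‖zfun x0 s ξ y‖ = Real.exp (-y) := by
  rw [zfun, norm_mul, hs, Complex.norm_exp]; simp

lemma P_est (L M : ℝ) (hM : 0 ≤ M) : ∃ C : ℝ, 0 ≤ C ∧ ∀ (ε : ℝ), 0 ≤ ε → ∀ (x0 : ℂ → ℝ), 
    (∀ s s', ‖s‖ = 1 → ‖s'‖ = 1 → |x0 s - x0 s'| ≤ M * ‖s - s'‖) → ∀ Fh : ℂ → ℂ,
    (∀ z, ‖z‖ ≤ Real.exp (4*L) → ‖Fh z‖ ≤ ε) → 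
    (∀ z z', ‖z‖ ≤ Real.exp (4*L) → ‖z'‖ ≤ Real.exp (4*L) → ‖Fh z - Fh z'‖ ≤ ε * ‖z - z'‖) →
    ∀ s s' ξ ξ' y y', ‖s‖ = 1 → ‖s'‖ = 1 → |y| ≤ 4*L → |y'| ≤ 4*L →
    BL (C*ε) (‖s-s'‖ + |ξ-ξ'| + |y-y'|) (Fh (zfun x0 s ξ y) * (zfun x0 s ξ y)⁻¹^3) (Fh (zfun x0 s' ξ' y') * (zfun x0 s' ξ' y')⁻¹^3) := by
  set e := Real.exp (4*L) with he
  have he0 : 0 < e := Real.exp_pos _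
  refine ⟨(2*(1+2*e)*(2*(2*(2*e)*(2*e))*(2*e)))*(M+1), by positivity, ?_⟩
  intro ε hε x0 hx0 Fh hF1 hF2 s s' ξ ξ' y y' hs hs' hy hy'
  set d := (M+1)*‖s-s'‖ + |ξ-ξ'| + |y-y'| with hd
  have hd0 : 0 ≤ d := by positivity
  have hv : ‖(-y + I * (x0 s + ξ) : ℂ) - (-y' + I * (x0 s' + ξ'))‖ ≤ d := by
    have : (-y + I * (x0 s + ξ) : ℂ) - (-y' + I * (x0 s' + ξ')) = I * ((x0 s - x0 s' : ℝ):ℂ) + I*((ξ-ξ':ℝ):ℂ) + -((y-y':ℝ):ℂ) := by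
      push_cast; ring
    rw [this]
    refine (norm_add3 _ _ _).trans ?_
    rw [norm_neg, norm_mul, norm_mul, Complex.norm_I, Complex.norm_real, Complex.norm_real, Complex.norm_real]
    simp only [Real.norm_eq_abs, one_mul]
    have := hx0 s s' hs hs'
    have : M * ‖s-s'‖ ≤ (M+1)*‖s-s'‖ := by gcongr; linarith
    linarith
  have hsd : ‖s-s'‖ ≤ d := by
    have : ‖s-s'‖ ≤ (M+1)*‖s-s'‖ := le_mul_of_one_le_left (norm_nonneg _) (by linarith)
    have := abs_nonneg (ξ-ξ')
    have := abs_nonneg (y-y')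
    linarith
  have bs : BL 1 d s s' := ⟨hs.le, hs'.le, by linarith⟩
  have bcs : BL 1 d (conj s) (conj s') := ⟨by simp [hs], by simp [hs'], by rw [← map_sub, Complex.norm_conj]; linarith⟩
  have r1 : ∀ (x ξ y : ℝ), |y| ≤ 4*L → (-y + I * (x + ξ) : ℂ).re ≤ 4*L := by
    intro x ξ y h; simp; linarith [(abs_le.mp h).1]
  have r2 : ∀ (x ξ y : ℝ), |y| ≤ 4*L → (-(-y + I * (x + ξ)) : ℂ).re ≤ 4*L := by
    intro x ξ y h; simp; linarith [(abs_le.mp h).2]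
  have be : BL e d (exp (-y + I * (x0 s + ξ))) (exp (-y' + I * (x0 s' + ξ'))) := by
    refine ⟨?_, ?_, ?_⟩
    · rw [Complex.norm_exp]; exact Real.exp_le_exp.mpr (r1 _ _ _ hy)
    · rw [Complex.norm_exp]; exact Real.exp_le_exp.mpr (r1 _ _ _ hy')
    · refine (exp_lip (4*L) _ _ (r1 _ _ _ hy) (r1 _ _ _ hy')).trans ?_
      gcongr
  have bei : BL e d (exp (-(-y + I * (x0 s + ξ)))) (exp (-(-y' + I * (x0 s' + ξ')))) := by
    refine ⟨?_, ?_, ?_⟩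
    · rw [Complex.norm_exp]; exact Real.exp_le_exp.mpr (r2 _ _ _ hy)
    · rw [Complex.norm_exp]; exact Real.exp_le_exp.mpr (r2 _ _ _ hy')
    · refine (exp_lip (4*L) _ _ (r2 _ _ _ hy) (r2 _ _ _ hy')).trans ?_
      rw [neg_sub_neg, norm_sub_rev]
      gcongr
  have bz := bs.mul be hd0
  have bzi := bcs.mul bei hd0
  have zi : ∀ s ξ y, ‖s‖ = 1 → (zfun x0 s ξ y)⁻¹ = conj s * exp (-(-y + I * (x0 s + ξ))) := by
    intro s ξ y hs
    rw [zfun, mul_inv, Complex.exp_neg]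
    congr 1
    rw [Complex.inv_def, Complex.normSq_eq_norm_sq, hs]; simp
  have zn : ∀ s ξ y, ‖s‖ = 1 → |y| ≤ 4*L → ‖zfun x0 s ξ y‖ ≤ e := by
    intro s ξ y hs hy
    rw [zfun_norm _ _ hs]; exact Real.exp_le_exp.mpr (by linarith [(abs_le.mp hy).1])
  have bF : BL (ε*(1+2*e)) d (Fh (zfun x0 s ξ y)) (Fh (zfun x0 s' ξ' y')) := by
    have k : ε ≤ ε*(1+2*e) := by nlinarith
    refine ⟨(hF1 _ (zn _ _ _ hs hy)).trans k, (hF1 _ (zn _ _ _ hs' hy')).trans k, ?_⟩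
    refine (hF2 _ _ (zn _ _ _ hs hy) (zn _ _ _ hs' hy')).trans ?_
    have : ‖zfun x0 s ξ y - zfun x0 s' ξ' y'‖ ≤ 2*1*e*d := bz.2.2
    calc _ ≤ ε * (2*1*e*d) := by gcongr
      _ ≤ _ := by nlinarith [mul_nonneg hε hd0]
  have bP := bF.mul ((bzi.mul bzi hd0).mul bzi hd0) hd0
  rw [← zi s ξ y hs, ← zi s' ξ' y' hs'] at bP
  have c3 : ∀ z : ℂ, z*z*z = z^3 := by intro z; ring
  rw [c3, c3] at bP
  obtain ⟨p1, p2, p3⟩ := bP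
  have kk : 2 * (ε * (1 + 2 * e)) * (2 * (2 * (2 * 1 * e) * (2 * 1 * e)) * (2 * 1 * e)) ≤ (2*(1+2*e)*(2*(2*(2*e)*(2*e))*(2*e)))*(M+1) * ε := by
    have : 0 ≤ 2 * (ε * (1 + 2 * e)) * (2 * (2 * (2 * 1 * e) * (2 * 1 * e)) * (2 * 1 * e)) := by positivity
    nlinarith
  refine ⟨p1.trans kk, p2.trans kk, p3.trans ?_⟩
  have hdd : d ≤ (M+1) * (‖s-s'‖ + |ξ-ξ'| + |y-y'|) := by
    have := abs_nonneg (ξ-ξ')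
    have := abs_nonneg (y-y')
    rw [hd]; nlinarith
  calc _ ≤ 2 * (ε * (1 + 2 * e)) * (2 * (2 * (2 * 1 * e) * (2 * 1 * e)) * (2 * 1 * e)) * ((M+1) * (‖s-s'‖ + |ξ-ξ'| + |y-y'|)) := by gcongr
    _ = _ := by ring

noncomputable def Hfun (t : ℝ) (a τ0 : ℂ → ℂ) (x0 : ℂ → ℝ) (Fh : ℂ → ℂ) (s : ℂ) (ξ y : ℝ) : ℂ :=
  a s * (Arem t (τ0 s) ξ + Fh (zfun x0 s ξ y) * (zfun x0 s ξ y)⁻¹^3)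

lemma H_est (t : ℝ) (ht : |t| ≤ 1) (a τ0 : ℂ → ℂ) (x0 : ℂ → ℝ) (L : ℝ) (ha : LC a) (hτ : LC τ0)
    (hτ1 : ∀ s, ‖s‖ = 1 → ‖τ0 s‖ = 1) (hx : LC (fun s => (x0 s : ℂ))) :
    ∃ K : ℝ, 1 ≤ K ∧ ∀ r, 0 < r → r ≤ 1 → ∀ Fh : ℂ → ℂ,
    (∀ z, ‖z‖ ≤ Real.exp (4*L) → ‖Fh z‖ ≤ r^2) → 
    (∀ z z', ‖z‖ ≤ Real.exp (4*L) → ‖z'‖ ≤ Real.exp (4*L) → ‖Fh z - Fh z'‖ ≤ r^2 * ‖z - z'‖) →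
    (∀ s ξ y, ‖s‖ = 1 → |ξ| ≤ 2*r → |y| ≤ 4*L → ‖Hfun t a τ0 x0 Fh s ξ y‖ ≤ K * r^2) ∧
    (∀ s ξ y ξ' y', ‖s‖ = 1 → |ξ| ≤ 2*r → |y| ≤ 4*L → |ξ'| ≤ 2*r → |y'| ≤ 4*L →
      ‖Hfun t a τ0 x0 Fh s ξ y - Hfun t a τ0 x0 Fh s ξ' y'‖ ≤ K * r * |ξ-ξ'| + K * r^2 * |y - y'|) ∧
    (∀ s s' ξ y, ‖s‖ = 1 → ‖s'‖ = 1 → |ξ| ≤ 2*r → |y| ≤ 4*L →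
      7 * ‖Hfun t a τ0 x0 Fh s ξ y - Hfun t a τ0 x0 Fh s' ξ y‖ ≤ K * r^2 * ‖s - s'‖) := by
  obtain ⟨Ma, hMa⟩ := ha
  obtain ⟨Mτ, hMτ⟩ := hτ
  obtain ⟨Mx, hMx⟩ := hx
  have hMa0 : 0 ≤ Ma := (norm_nonneg _).trans (hMa 1 1 (by simp) (by simp)).1
  have hMτ0 : 0 ≤ Mτ := (norm_nonneg _).trans (hMτ 1 1 (by simp) (by simp)).1
  have hMx0 : 0 ≤ Mx := (norm_nonneg _).trans (hMx 1 1 (by simp) (by simp)).1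
  obtain ⟨C, hC0, hC⟩ := P_est L Mx hMx0
  refine ⟨1 + 7*(2*Ma*(400+C) + Ma*(800*Mτ+C)), by nlinarith [mul_nonneg hMa0 hMτ0, mul_nonneg hMa0 hC0], ?_⟩
  set K := 1 + 7*(2*Ma*(400+C) + Ma*(800*Mτ+C)) with hK
  have hK1 : Ma*(400+C) ≤ K := by nlinarith [mul_nonneg hMa0 hMτ0, mul_nonneg hMa0 hC0]
  intro r hr hr1 Fh hF1 hF2
  have hP := hC (r^2) (by positivity) x0 (fun s s' hs hs' => by
    have := (hMx s s' hs hs').2.2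
    rw [← Complex.ofReal_sub, Complex.norm_real] at this
    exact this) Fh hF1 hF2
  have hr2 : r^2 ≤ r := by nlinarith
  refine ⟨?_, ?_, ?_⟩
  · intro s ξ y hs hξ hy
    have h1 := (hP s s ξ ξ y y hs hs hy hy).1
    have h2 := Arem_le t ht (τ0 s) (hτ1 s hs) _ ξ hξ
    rw [Hfun, norm_mul]
    calc _ ≤ Ma * (100*(2*r)^2 + C*r^2) := by
            gcongr
            · exact (hMa s s hs hs).1
            · exact (norm_add_le _ _).trans (add_le_add h2 h1)
      _ = Ma*(400+C) * r^2 := by ring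
      _ ≤ _ := by gcongr
  · intro s ξ y ξ' y' hs hξ hy hξ' hy'
    have h1 := (hP s s ξ ξ' y y' hs hs hy hy').2.2
    have h2 := Arem_sub_ξ t ht (τ0 s) (hτ1 s hs) _ ξ ξ' hξ hξ'
    rw [sub_self, norm_zero, zero_add] at h1
    rw [Hfun, Hfun, ← mul_sub, norm_mul]
    have e : ∀ a b c d : ℂ, a + b - (c + d) = (a - c) + (b - d) := by intros; ring
    rw [e]
    calc _ ≤ Ma * (100*(2*r)*|ξ-ξ'| + C*r^2*(|ξ-ξ'|+|y-y'|)) := by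
            gcongr
            · exact (hMa s s hs hs).1
            · exact (norm_add_le _ _).trans (add_le_add h2 h1)
      _ = Ma*(200*r+C*r^2)*|ξ-ξ'| + Ma*C*r^2*|y-y'| := by ring
      _ ≤ Ma*((400+C)*r) * |ξ-ξ'| + Ma*(400+C)*r^2*|y-y'| := by
            gcongr
            · nlinarith
            · linarith
      _ = Ma*(400+C)*r * |ξ-ξ'| + Ma*(400+C)*r^2*|y-y'| := by ring
      _ ≤ _ := by gcongr
  · intro s s' ξ y hs hs' hξ hy
    have h1 := (hP s s' ξ ξ y y hs hs' hy hy).2.2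
    have h0 := (hP s s' ξ ξ y y hs hs' hy hy).1
    have h2 := Arem_sub_τ t ht (τ0 s) (τ0 s') (hτ1 s hs) (hτ1 s' hs') _ ξ hξ
    have h3 := Arem_le t ht (τ0 s) (hτ1 s hs) _ ξ hξ
    have h4 := (hMτ s s' hs hs').2.2
    obtain ⟨a1, a2, a3⟩ := hMa s s' hs hs'
    simp only [sub_self, abs_zero, add_zero] at h1
    rw [Hfun, Hfun]
    have e : ∀ a a' b c b' c' : ℂ, a * (b + c) - a' * (b' + c') = (a - a') * (b + c) + a' * ((b - b') + (c - c')) := by intros; ring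
    rw [e]
    calc _ ≤ 7 * ((Ma * ‖s-s'‖) * (100*(2*r)^2 + C*r^2) + Ma * (200*(2*r)^2*(Mτ * ‖s-s'‖) + C*r^2*‖s-s'‖)) := by
            gcongr
            refine (norm_add_le _ _).trans ?_
            rw [norm_mul, norm_mul]
            gcongr
            · exact (norm_add_le _ _).trans (add_le_add h3 h0)
            · refine (norm_add_le _ _).trans (add_le_add (h2.trans ?_) h1)
              gcongr
      _ = 7*(Ma*(400+C) + Ma*(800*Mτ+C)) * r^2 * ‖s-s'‖ := by ring
      _ ≤ _ := by
            gcongr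
            rw [hK]; nlinarith [mul_nonneg hMa0 hC0]

end SecPE

section SecPF

open Complex ComplexConjugate

noncomputable def pfun (t : ℝ) (z : ℂ) : ℂ := z^2 * conj z + (t:ℂ) * z * (conj z)^2 + ((t:ℂ)^2/3) * (conj z)^3

lemma norm_exp_I_sub (a b : ℝ) : ‖exp (a*I) - exp (b*I)‖ ≤ |a - b| := by
  have := exp_lip 0 (a*I) (b*I) (by simp) (by simp)
  rw [← sub_mul, norm_mul, Complex.norm_I, ← Complex.ofReal_sub, Complex.norm_real] at this
  simpa using this

lemma nd_step (m : ℕ) (j : ZMod (2*m+1)) : (2*m+1) * ‖nd m (j+1) - nd m j‖ ≤ 7 := by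
  have hN : (0:ℝ) < 2*m+1 := by positivity
  have : nd m (j+1) - nd m j = nd m j * (nd m 1 - 1) := by rw [nd_add]; ring
  rw [this, norm_mul, nd_norm, one_mul, nd_one_eq]
  have := norm_exp_I_sub (2 * Real.pi / (2*m+1)) 0
  simp only [Complex.ofReal_zero, zero_mul, Complex.exp_zero, sub_zero] at this
  rw [abs_of_nonneg (by positivity)] at this
  calc _ ≤ (2*m+1) * (2 * Real.pi / (2*m+1)) := by gcongr
    _ = 2*Real.pi := by field_simp
    _ ≤ 7 := by linarith [Real.pi_lt_d2]

lemma nd_near (m : ℕ) (s : ℂ) (hs : ‖s‖ = 1) : ∃ j, ‖s - nd m j‖ ≤ 7/(2*m+1) := by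
  have hN : (0:ℝ) < 2*m+1 := by positivity
  set θ := arg s
  have hsθ : s = exp (θ*I) := by
    have := Complex.norm_mul_exp_arg_mul_I s
    rw [hs] at this; simpa using this.symm
  set k : ℤ := ⌊θ * (2*m+1) / (2*Real.pi)⌋ with hk
  refine ⟨(k : ZMod (2*m+1)), ?_⟩
  have e : nd m (k : ZMod (2*m+1)) = exp (((2*Real.pi*k/(2*m+1) : ℝ):ℂ)*I) := by
    rw [nd, ZMod.stdAddChar_coe]; congr 1; push_cast; ring
  rw [e, hsθ]
  refine (norm_exp_I_sub _ _).trans ?_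
  have h1 := Int.floor_le (θ * (2*m+1) / (2*Real.pi))
  have h2 := Int.lt_floor_add_one (θ * (2*m+1) / (2*Real.pi))
  rw [← hk] at h1 h2
  have hpi := Real.pi_pos
  have e2 : θ - 2*Real.pi*k/(2*m+1) = (θ * (2*m+1) / (2*Real.pi) - k) * (2*Real.pi/(2*m+1)) := by field_simp
  rw [e2, abs_mul, abs_of_nonneg (by linarith), abs_of_nonneg (by positivity)]
  calc _ ≤ 1 * (2*Real.pi/(2*m+1)) := by gcongr; linarith
    _ ≤ _ := by rw [one_mul]; gcongr; linarith [Real.pi_lt_d2]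

lemma node_id (t : ℝ) (X W : ℂ → ℝ) (E b : ℂ → ℂ) (hB : IsBase t X W E b) (ht : |t| < 1)
    (Fh : ℂ → ℂ) (s : ℂ) (hs : ‖s‖ = 1) (ξ y T : ℝ) (S SV : ℂ)
    (hS : S = ((X (s^2) + ξ : ℝ) : ℂ) + y * I)
    (u : ℂ) (hu : u = Hfun t (fun s => W (s^2) * (tauf X (s^2) * (1 + t * tauf X (s^2))^2)⁻¹)
      (fun s => tauf X (s^2)) (fun s => X (s^2)) Fh s ξ y)
    (hSV : SV = u.re + T * I) (hfix : ξ = (2*W (s^2))⁻¹ * (u.im - T)) :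
    s * exp (I * S) = zfun (fun s => X (s^2)) s ξ y ∧
    s * exp (3*I*S + E (s^2)) * (1 + SV * b (s^2)) = pfun t (s * exp (I*S)) + Fh (s * exp (I*S)) := by
  have hs2 : ‖s^2‖ = 1 := by simp [hs]
  have hz : s * exp (I * S) = zfun (fun s => X (s^2)) s ξ y := by
    rw [zfun, hS]; congr 2; push_cast; linear_combination (y:ℂ) * Complex.I_mul_I
  refine ⟨hz, ?_⟩
  set z := s * exp (I * S) with hzd
  have hz0 : z ≠ 0 := by
    rw [← norm_pos_iff, hz, zfun_norm _ _ hs]; exact Real.exp_pos _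
  have hss : s * conj s = 1 := by rw [Complex.mul_conj, Complex.normSq_eq_norm_sq, hs]; simp
  set τ := tauf X (s^2) with hτ
  have hτn : ‖τ‖ = 1 := by rw [hτ, tauf, norm_mul, Complex.norm_conj, hs2, Complex.norm_exp]; simp
  have hτ0 : τ ≠ 0 := by rw [← norm_pos_iff, hτn]; norm_num
  have hq0 : (1 + t*τ) ≠ 0 := by
    intro h
    have : t*τ = -1 := by linear_combination h
    have := congrArg norm this
    rw [norm_mul, hτn, Complex.norm_real] at this
    simp at this; linarith
  have h1 := hB.h1 (s^2) hs2
  have h2 := hB.h2 (s^2) hs2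
  rw [← hτ] at h1 h2
  have hW0 : (W (s^2) : ℂ) ≠ 0 := by
    obtain ⟨c, hc, hc'⟩ := hB.hc
    have := hc' _ hs2
    exact_mod_cast (by linarith : W (s^2) ≠ 0)
  have hP : τ * (1+t*τ)^2 ≠ 0 := mul_ne_zero hτ0 (pow_ne_zero _ hq0)
  have hub : u * b (s^2) * Qf t τ = Arem t τ ξ + Fh z * z⁻¹^3 := by
    rw [hu, Hfun, ← hz, ← hτ]
    have : (W (s^2) : ℂ) * (τ * (1+t*τ)^2)⁻¹ * (b (s^2) * Qf t τ) = 1 := by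
      rw [mul_right_comm, ← mul_assoc, ← h2]
      exact mul_inv_cancel₀ hP
    linear_combination (Arem t τ ξ + Fh z * z⁻¹^3) * this
  have hT : (T : ℂ) = u.im - 2 * W (s^2) * ξ := by
    have hW1 : W (s^2) ≠ 0 := by exact_mod_cast hW0
    have : T = u.im - 2 * W (s^2) * ξ := by
      rw [hfix]; field_simp; ring
    rw [this]; push_cast; ring
  have hSV2 : SV = u - 2*I*W (s^2)*ξ := by
    rw [hSV, hT]
    nth_rewrite 3 [← Complex.re_add_im u]
    ring
  have hcz : conj z = z * (τ * exp (-2*I*ξ)) := by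
    rw [hzd, hτ, tauf, map_mul, ← Complex.exp_conj, hS]
    have e1 : conj (I * (((X (s^2) + ξ : ℝ) : ℂ) + y * I)) = I * (((X (s^2) + ξ : ℝ) : ℂ) + y * I) + -2*I*X (s^2) + -2*I*ξ := by
      simp only [map_mul, map_add, Complex.conj_I, Complex.conj_ofReal]; push_cast; ring
    rw [e1, Complex.exp_add, Complex.exp_add, map_pow]
    linear_combination (-conj s * exp (I * (((X (s^2) + ξ : ℝ) : ℂ) + y * I)) * exp (-2*I*X (s^2)) * exp (-2*I*ξ)) * hss
  have hp : pfun t z = z^3 * Qf t (τ * exp (-2*I*ξ)) := by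
    rw [pfun, hcz, Qf]; ring
  have hA := Arem_eq t τ ξ
  have hz3 : z^3 = s^3 * exp (3*I*S) := by
    rw [hzd, mul_pow, ← Complex.exp_nat_mul]; congr 2; push_cast; ring
  have hzz : z^3 * (Fh z * z⁻¹^3) = Fh z := by
    rw [inv_pow]; field_simp
  have hl : s * exp (3*I*S + E (s^2)) = z^3 * Qf t τ := by
    rw [← h1, hz3, Complex.exp_add, map_pow]
    linear_combination (-s * exp (3*I*S) * exp (E (s^2)) * (s*conj s+1)) * hss
  rw [hl, hp, hSV2, ← hzz]
  linear_combination z^3 * hub + z^3 * hA - 2*I*ξ * z^3 * (-h2)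

end SecPF

section SecPG

open Complex ComplexConjugate Metric

lemma Sc_diff (m : ℕ) (x : ZMod (2*m+1) → ℝ) : Differentiable ℂ (Sc m x) := by
  unfold Sc; fun_prop

lemma LC.bound {f : ℂ → ℝ} (h : LC (fun s => (f s : ℂ))) : ∃ M : ℝ, 0 ≤ M ∧ (∀ s, ‖s‖ = 1 → |f s| ≤ M) ∧
    ∀ s s', ‖s‖ = 1 → ‖s'‖ = 1 → |f s - f s'| ≤ M * ‖s - s'‖ := by
  obtain ⟨M, hM⟩ := h
  refine ⟨M, (norm_nonneg _).trans (hM 1 1 (by simp) (by simp)).1, fun s hs => ?_, fun s s' hs hs' => ?_⟩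
  · have := (hM s s hs hs).1
    rwa [Complex.norm_real] at this
  · have := (hM s s' hs hs').2.2
    rwa [← Complex.ofReal_sub, Complex.norm_real] at this

lemma Df_le (m : ℕ) (f : ℂ → ℝ) (M : ℝ) (hM : 0 ≤ M) (h : ∀ s s', ‖s‖ = 1 → ‖s'‖ = 1 → |f s - f s'| ≤ M * ‖s - s'‖) (j) :
    |Df m (fun j => f (nd m j)) j| ≤ 7*M := by
  have hN : (0:ℝ) < 2*m+1 := by positivity
  rw [Df, abs_mul, abs_of_pos hN]
  have h1 := h (nd m (j+1)) (nd m j) (nd_norm _ _) (nd_norm _ _)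
  have h2 := nd_step m j
  calc _ ≤ (2*m+1) * (M * ‖nd m (j+1) - nd m j‖) := by gcongr
    _ = M * ((2*m+1) * ‖nd m (j+1) - nd m j‖) := by ring
    _ ≤ M * 7 := by gcongr
    _ = _ := by ring

/-- discs through the origin attached to the graph at the nodes -/
theorem discs (t : ℝ) (ht : |t| < 1) (X W : ℂ → ℝ) (E b : ℂ → ℂ) (hB : IsBase t X W E b) :
    ∃ ε > 0, ∃ ρ > 0, ∃ R > 0, ∀ Fh : ℂ → ℂ, (∀ z, ‖z‖ ≤ ρ → ‖Fh z‖ ≤ ε) →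
    (∀ z z', ‖z‖ ≤ ρ → ‖z'‖ ≤ ρ → ‖Fh z - Fh z'‖ ≤ ε * ‖z - z'‖) →
    ∀ m : ℕ, ∃ S V : ℂ → ℂ, Differentiable ℂ S ∧ Differentiable ℂ V ∧
      (∀ s s', ‖s‖ ≤ 1 → ‖s'‖ ≤ 1 → ‖S s - S s'‖ ≤ R * Real.sqrt m * ‖s - s'‖) ∧
      (∀ s s', ‖s‖ ≤ 1 → ‖s'‖ ≤ 1 → ‖V s - V s'‖ ≤ R * Real.sqrt m * ‖s - s'‖) ∧
      ∀ j : ZMod (2*m+1), ‖S (nd m j)‖ ≤ R ∧ ‖V (nd m j)‖ ≤ R ∧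
        ‖nd m j * exp (I * S (nd m j))‖ ≤ ρ ∧
        nd m j * exp (3*I*S (nd m j) + E (nd m j^2)) * (1 + V (nd m j) * b (nd m j^2)) =
          pfun t (nd m j * exp (I*S (nd m j))) + Fh (nd m j * exp (I*S (nd m j))) := by
  obtain ⟨cW, hcW, hcW'⟩ := hB.hc
  have lx : LC (fun s => ((X (s^2) : ℝ) : ℂ)) := LC.comp_sq hB.hX
  have lW : LC (fun s => ((W (s^2) : ℝ) : ℂ)) := LC.comp_sq hB.hW
  have hsq : ∀ s : ℂ, ‖s‖ = 1 → ‖s^2‖ = 1 := by intro s hs; simp [hs]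
  have lg : LC (fun s => (((2*W (s^2))⁻¹ : ℝ) : ℂ)) := by
    have := ((LC.const 2).mul lW).inv (2*cW) (by positivity) (fun s hs => by
      have := hcW' _ (hsq s hs)
      rw [norm_mul, Complex.norm_real, Real.norm_of_nonneg (by linarith)]
      simp; linarith)
    simpa using this
  have lτ : LC (fun s => tauf X (s^2)) := by
    apply LC.comp_sq (f := tauf X)
    unfold tauf
    refine LC.mul LC.id.conj (LC.expI ((LC.const (-2*I)).mul hB.hX) ?_)
    intro s; simp
  have hτ1 : ∀ s : ℂ, ‖s‖ = 1 → ‖tauf X (s^2)‖ = 1 := by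
    intro s hs; rw [tauf, norm_mul, Complex.norm_conj, hsq s hs, Complex.norm_exp]; simp
  have la : LC (fun s => (W (s^2) : ℂ) * (tauf X (s^2) * (1 + t * tauf X (s^2))^2)⁻¹) := by
    have l1 : LC (fun s => 1 + t * tauf X (s^2)) := (LC.const 1).add ((LC.const (t:ℂ)).mul lτ)
    have l2 : LC (fun s => tauf X (s^2) * (1 + t * tauf X (s^2))^2) := by
      have e : (fun s => tauf X (s^2) * (1 + t * tauf X (s^2))^2)
        = fun s => tauf X (s^2) * ((1 + t * tauf X (s^2)) * (1 + t * tauf X (s^2))) := by ext s; ring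
      rw [e]
      exact lτ.mul (l1.mul l1)
    refine lW.mul (l2.inv ((1-|t|)^2) (pow_pos (by linarith) 2) ?_)
    intro s hs
    rw [norm_mul, hτ1 s hs, one_mul, norm_pow]
    apply pow_le_pow_left₀ (by linarith)
    have := norm_sub_norm_le (1:ℂ) (-(t * tauf X (s^2)))
    rw [norm_neg, norm_mul, hτ1 s hs, Complex.norm_real, sub_neg_eq_add] at this
    simpa using this
  obtain ⟨Mx, hMx0, hMx1, hMx2⟩ := lx.bound
  obtain ⟨Mg, hMg0, hMg1, hMg2⟩ := lg.bound
  set L := 1 + 7*Mx + 7*Mg with hL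
  have hL1 : 1 ≤ L := by linarith
  obtain ⟨K, hK1, hK⟩ := H_est t ht.le _ _ (fun s => X (s^2)) L la lτ hτ1 lx
  set r := 1/(14*K*L^2) with hr
  have hKL : 1 ≤ K * L^2 := one_le_mul_of_one_le_of_one_le hK1 (one_le_pow₀ hL1)
  have hrpos : 0 < r := by positivity
  have hrk : r * (14*K*L^2) ≤ 1 := by rw [hr]; field_simp; exact le_rfl
  have hr1 : r ≤ 1 := by nlinarith
  refine ⟨r^2, by positivity, Real.exp (4*L), Real.exp_pos _, 10*L+2*K+2, by positivity, ?_⟩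
  intro Fh hF1 hF2 m
  have hN : (0:ℝ) < 2*m+1 := by positivity
  obtain ⟨k0, k1, k2⟩ := hK r hrpos hr1 Fh hF1 hF2
  obtain ⟨ξ, f1, f2, f3, f4, f5⟩ := fp_exists K L r hK1 hL1 hrpos hrk m (fun j => X (nd m j^2)) (fun j => (2*W (nd m j^2))⁻¹)
    (fun j => (hMx1 _ (nd_norm _ _)).trans (by linarith)) (fun j => (Df_le m (fun s => X (s^2)) Mx hMx0 hMx2 j).trans (by linarith))
    (fun j => (hMg1 _ (nd_norm _ _)).trans (by linarith)) (fun j => (Df_le m (fun s => (2*W (s^2))⁻¹) Mg hMg0 hMg2 j).trans (by linarith))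
    (fun j ξ y => Hfun t (fun s => W (s^2) * (tauf X (s^2) * (1 + t * tauf X (s^2))^2)⁻¹)
      (fun s => tauf X (s^2)) (fun s => X (s^2)) Fh (nd m j) ξ y)
    (fun j ξ y h h' => k0 _ _ _ (nd_norm _ _) h h')
    (fun j ξ y ξ' y' h h' g g' => k1 _ _ _ _ _ (nd_norm _ _) h h' g g')
    (fun j ξ y h h' => by
      have h1 := k2 (nd m (j+1)) (nd m j) ξ y (nd_norm _ _) (nd_norm _ _) h h'
      have h2 := nd_step m j
      have h3 : K * r^2 * ((2*m+1) * ‖nd m (j+1) - nd m j‖) ≤ K*r^2*7 := by gcongr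
      have h4 := mul_le_mul_of_nonneg_left h1 hN.le
      linarith)
  set x : ZMod (2*m+1) → ℝ := fun i => X (nd m i^2) + ξ i with hx
  set H : ZMod (2*m+1) → ℝ → ℝ → ℂ := (fun j ξ y => Hfun t (fun s => W (s^2) * (tauf X (s^2) * (1 + t * tauf X (s^2))^2)⁻¹)
      (fun s => tauf X (s^2)) (fun s => X (s^2)) Fh (nd m j) ξ y) with hH
  set u := fpU m (fun j => X (nd m j^2)) H ξ with hu
  have hKr : K * r^2 ≤ K := by
    have : r^2 ≤ 1 := pow_le_one₀ hrpos.le hr1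
    nlinarith
  have hub : ∀ j, |(u j).re| ≤ K := fun j => ((Complex.abs_re_le_norm _).trans (k0 _ _ _ (nd_norm _ _) (f1 j) (f2 j))).trans hKr
  have hTb : ∀ j, |Tr m (fun i => (u i).re) j| ≤ K + 1 := by
    apply nd_sup_le m _ K 1 (by linarith) (by linarith)
    · exact (Tr_norm _ _).trans (sum_const_le m _ K hub)
    · simp only [← Tr_Df]; exact (Tr_norm _ _).trans f4
  refine ⟨Sc m x, Sc m (fun i => (u i).re), Sc_diff _ _, Sc_diff _ _, ?_, ?_, ?_⟩
  · intro s s' hs hs'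
    refine (Sc_between m x (2*L) (by positivity) f3 s s' hs hs').trans ?_
    gcongr; linarith
  · intro s s' hs hs'
    refine (Sc_between m _ 1 (by positivity) f4 s s' hs hs').trans ?_
    gcongr; linarith
  · intro j
    have hn := node_id t X W E b hB ht Fh (nd m j) (nd_norm _ _) (ξ j) (Tr m x j) (Tr m (fun i => (u i).re) j)
      (Sc m x (nd m j)) (Sc m (fun i => (u i).re) (nd m j)) (by rw [Sc_node]) (u j) rfl (Sc_node _ _ _) (f5 j)
    refine ⟨?_, ?_, ?_, hn.2⟩
    · rw [Sc_node]
      refine (norm_add_le _ _).trans ?_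
      rw [norm_mul, Complex.norm_real, Complex.norm_real, Complex.norm_I, mul_one, Real.norm_eq_abs, Real.norm_eq_abs]
      have h1 := f2 j
      have h2 : |x j| ≤ |X (nd m j^2)| + |ξ j| := abs_add_le _ _
      have h3 := hMx1 _ (nd_norm m j)
      have h4 := f1 j
      linarith
    · rw [Sc_node]
      refine (norm_add_le _ _).trans ?_
      rw [norm_mul, Complex.norm_real, Complex.norm_real, Complex.norm_I, mul_one, Real.norm_eq_abs, Real.norm_eq_abs]
      have h1 := hub j
      have h2 := hTb j
      linarith
    · rw [hn.1, zfun_norm _ _ (nd_norm _ _)]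
      apply Real.exp_le_exp.mpr
      linarith [(abs_le.mp (f2 j)).1]

lemma disc_cont {α : Type*} [TopologicalSpace α] {K : Set α} {a b c d e : α → ℂ} (ha : ContinuousOn a K)
    (hb : ContinuousOn b K) (hc : ContinuousOn c K) (hd : ContinuousOn d K) (he : ContinuousOn e K) :
    ContinuousOn (fun q => (a q * exp (I * b q), a q * exp (3*I*b q + c q) * (1 + d q * e q))) K := by
  refine ContinuousOn.prodMk (ha.mul (continuousOn_const.mul hb).cexp) ?_
  exact (ha.mul ((continuousOn_const.mul hb).add hc).cexp).mul (continuousOn_const.add (hd.mul he))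

lemma disc_diff {K : Set ℂ} {a b c d e : ℂ → ℂ} (ha : DifferentiableOn ℂ a K)
    (hb : DifferentiableOn ℂ b K) (hc : DifferentiableOn ℂ c K) (hd : DifferentiableOn ℂ d K) (he : DifferentiableOn ℂ e K) :
    DifferentiableOn ℂ (fun q => (a q * exp (I * b q), a q * exp (3*I*b q + c q) * (1 + d q * e q))) K := by
  refine DifferentiableOn.prodMk (ha.mul ((differentiableOn_const _).mul hb).cexp) ?_
  exact (ha.mul (((differentiableOn_const _).mul hb).add hc).cexp).mul ((differentiableOn_const _).add (hd.mul he))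

theorem core (t : ℝ) (ht : |t| < 1) (X W : ℂ → ℝ) (E b : ℂ → ℂ) (hB : IsBase t X W E b) :
    ∃ ε > 0, ∃ ρ > 0, ∀ Fh : ℂ → ℂ, (∀ z, ‖z‖ ≤ ρ → ‖Fh z‖ ≤ ε) →
    (∀ z z', ‖z‖ ≤ ρ → ‖z'‖ ≤ ρ → ‖Fh z - Fh z'‖ ≤ ε * ‖z - z'‖) →
    ∀ P : ℂ × ℂ → ℂ, Differentiable ℂ P → ∀ C : ℝ, (∀ z, ‖z‖ ≤ ρ → ‖P (z, pfun t z + Fh z)‖ ≤ C) → ‖P (0,0)‖ ≤ C := by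
  obtain ⟨ε, hε, ρ, hρ, R, hR, H⟩ := discs t ht X W E b hB
  refine ⟨ε, hε, ρ, hρ, ?_⟩
  intro Fh hF1 hF2 P hP C hC
  -- continuous on closed disc
  have cE : ContinuousOn E (closedBall 0 1) := by
    have := hB.hE.continuousOn; rwa [closure_ball _ one_ne_zero] at this
  have cb : ContinuousOn b (closedBall 0 1) := by
    have := hB.hb.continuousOn; rwa [closure_ball _ one_ne_zero] at this
  have msq : Set.MapsTo (fun s : ℂ => s^2) (closedBall 0 1) (closedBall 0 1) := by
    intro s hs; simp at hs ⊢; exact hs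
  have msqb : Set.MapsTo (fun s : ℂ => s^2) (ball 0 1) (ball 0 1) := by
    intro s hs; simp at hs ⊢; exact hs
  have cE2 : ContinuousOn (fun s => E (s^2)) (closedBall 0 1) := cE.comp (by fun_prop) msq
  have cb2 : ContinuousOn (fun s => b (s^2)) (closedBall 0 1) := cb.comp (by fun_prop) msq
  let Θ : ℂ × ℂ × ℂ → ℂ := fun q => P (q.1 * exp (I * q.2.1), q.1 * exp (3*I*q.2.1 + E (q.1^2)) * (1 + q.2.2 * b (q.1^2)))
  let Kc : Set (ℂ × ℂ × ℂ) := closedBall 0 1 ×ˢ closedBall 0 (R+1) ×ˢ closedBall 0 (R+1)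
  have hKc : IsCompact Kc := (isCompact_closedBall _ _).prod ((isCompact_closedBall _ _).prod (isCompact_closedBall _ _))
  have m1 : Set.MapsTo (fun q : ℂ × ℂ × ℂ => q.1) Kc (closedBall 0 1) := fun q hq => hq.1
  have cΘ : ContinuousOn Θ Kc := by
    have e1 : ContinuousOn (fun q : ℂ × ℂ × ℂ => E (q.1^2)) Kc := cE2.comp (by fun_prop) m1
    have e2 : ContinuousOn (fun q : ℂ × ℂ × ℂ => b (q.1^2)) Kc := cb2.comp (by fun_prop) m1
    refine hP.continuous.comp_continuousOn ?_
    exact disc_cont (by fun_prop) (by fun_prop) e1 (by fun_prop) e2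
  have uΘ := hKc.uniformContinuousOn_of_continuous cΘ
  rw [Metric.uniformContinuousOn_iff] at uΘ
  apply le_of_forall_pos_le_add
  intro η hη
  obtain ⟨δ, hδ, hδ'⟩ := uΘ η hη
  have hlim : Filter.Tendsto (fun m : ℕ => 7*(R+1) / Real.sqrt m) Filter.atTop (nhds 0) := by
    apply Filter.Tendsto.const_div_atTop
    exact Real.tendsto_sqrt_atTop.comp tendsto_natCast_atTop_atTop
  obtain ⟨m, hm1, hm⟩ : ∃ m : ℕ, 1 ≤ m ∧ 7*(R+1) / Real.sqrt m < min δ 1 := by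
    have h1 := (hlim.eventually_lt_const (lt_min hδ one_pos))
    obtain ⟨m, hm⟩ := (h1.and (Filter.eventually_ge_atTop 1)).exists
    exact ⟨m, hm.2, hm.1⟩
  obtain ⟨S, V, hS, hV, hSl, hVl, hnode⟩ := H Fh hF1 hF2 m
  have hm1' : (1:ℝ) ≤ m := by exact_mod_cast hm1
  have hsq1 : 1 ≤ Real.sqrt m := by rw [Real.one_le_sqrt]; exact hm1'
  have hmm : Real.sqrt m * Real.sqrt m = m := Real.mul_self_sqrt (by linarith)
  have bd1 : Real.sqrt m * (7/(2*m+1)) ≤ 7 / Real.sqrt m := by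
    rw [← mul_div_assoc, div_le_div_iff₀ (by positivity) (by positivity)]
    nlinarith
  have bd2 : 7/(2*(m:ℝ)+1) ≤ 7 / Real.sqrt m := by
    gcongr; nlinarith
  let f : ℂ → ℂ := fun s => Θ (s, S s, V s)
  have hbound : ∀ s, ‖s‖ = 1 → ‖f s‖ ≤ C + η := by
    intro s hs
    obtain ⟨j, hj⟩ := nd_near m s hs
    obtain ⟨n1, n2, n3, n4⟩ := hnode j
    have hnn := nd_norm m j
    have q0 : R * Real.sqrt m * ‖s - nd m j‖ ≤ 7*R/Real.sqrt m := by
      calc _ ≤ R * Real.sqrt m * (7/(2*m+1)) := by gcongr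
        _ = R * (Real.sqrt m * (7/(2*m+1))) := by ring
        _ ≤ R * (7 / Real.sqrt m) := by gcongr
        _ = _ := by ring
    have q1 : 7*R/Real.sqrt m ≤ 7*(R+1)/Real.sqrt m := by gcongr; linarith
    have q2 : 7/Real.sqrt m ≤ 7*(R+1)/Real.sqrt m := by gcongr; linarith
    have hm2 := lt_min_iff.mp hm
    have d1 := hSl s (nd m j) hs.le hnn.le
    have d2 := hVl s (nd m j) hs.le hnn.le
    have z1 : (s, S s, V s) ∈ Kc := by
      refine ⟨by simp [hs], ?_, ?_⟩
      · rw [mem_closedBall_zero_iff]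
        have := norm_sub_norm_le (S s) (S (nd m j))
        show ‖S s‖ ≤ R + 1
        linarith
      · rw [mem_closedBall_zero_iff]
        have := norm_sub_norm_le (V s) (V (nd m j))
        show ‖V s‖ ≤ R + 1
        linarith
    have z2 : (nd m j, S (nd m j), V (nd m j)) ∈ Kc := by
      refine ⟨by simp [hnn], ?_, ?_⟩
      · rw [mem_closedBall_zero_iff]; show ‖S (nd m j)‖ ≤ R + 1; linarith
      · rw [mem_closedBall_zero_iff]; show ‖V (nd m j)‖ ≤ R + 1; linarith
    have z3 : dist (s, S s, V s) (nd m j, S (nd m j), V (nd m j)) < δ := by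
      rw [Prod.dist_eq, Prod.dist_eq]
      simp only [dist_eq_norm]
      apply max_lt _ (max_lt _ _) <;> linarith
    have z4 := hδ' _ z1 _ z2 z3
    have z5 : ‖Θ (nd m j, S (nd m j), V (nd m j))‖ ≤ C := by
      have := hC _ n3
      rw [← n4] at this
      exact this
    rw [dist_eq_norm] at z4
    have := norm_sub_norm_le (Θ (s, S s, V s)) (Θ (nd m j, S (nd m j), V (nd m j)))
    show ‖Θ (s, S s, V s)‖ ≤ _
    linarith
  have hfd : DiffContOnCl ℂ f (ball 0 1) := by
    have dsq : DiffContOnCl ℂ (fun s : ℂ => s^2) (ball 0 1) := (by fun_prop : Differentiable ℂ (fun s : ℂ => s^2)).diffContOnCl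
    have e1 : DiffContOnCl ℂ (fun s => E (s^2)) (ball 0 1) := hB.hE.comp dsq msqb
    have e2 : DiffContOnCl ℂ (fun s => b (s^2)) (ball 0 1) := hB.hb.comp dsq msqb
    constructor
    · have e1' := e1.differentiableOn
      have e2' := e2.differentiableOn
      have h1 := hS.differentiableOn (s := ball (0:ℂ) 1)
      have h2 := hV.differentiableOn (s := ball (0:ℂ) 1)
      refine hP.comp_differentiableOn ?_
      exact disc_diff differentiableOn_id h1 e1' h2 e2'
    · have e1' := e1.continuousOn
      have e2' := e2.continuousOn
      have h1 := hS.continuous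
      have h2 := hV.continuous
      refine hP.continuous.comp_continuousOn ?_
      exact disc_cont continuousOn_id h1.continuousOn e1' h2.continuousOn e2'
  have := Complex.norm_le_of_forall_mem_frontier_norm_le (isBounded_ball) hfd (C := C + η) (fun z hz => by
    rw [frontier_ball _ one_ne_zero] at hz
    exact hbound z (by simpa using hz)) (z := 0) (subset_closure (by simp))
  have hf0 : f 0 = P (0,0) := by simp [f, Θ]
  rwa [hf0] at this

end SecPG

section SecPI

open Complex ComplexConjugate

noncomputable def om : ℂ := -1/2 + (Real.sqrt 3/2 : ℝ) * I

lemma om_root : om^2 + om + 1 = 0 := by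
  have h : ((Real.sqrt 3 : ℝ) : ℂ)^2 = 3 := by
    rw [← Complex.ofReal_pow, Real.sq_sqrt (by norm_num)]; norm_num
  unfold om; push_cast
  linear_combination (1/4) * I^2 * h + (3/4) * Complex.I_sq

lemma om_root2 : (om^2)^2 + om^2 + 1 = 0 := by
  linear_combination (om^2 - om + 1) * om_root

lemma root_cube {o : ℂ} (ho : o^2 + o + 1 = 0) : o^3 = 1 := by
  linear_combination (o - 1) * ho

lemma root_norm {o : ℂ} (ho : o^2 + o + 1 = 0) : ‖o‖ = 1 := by
  have h := congrArg norm (root_cube ho)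
  rw [norm_pow, norm_one] at h
  exact (pow_eq_one_iff_of_nonneg (norm_nonneg _) (by norm_num)).1 h

lemma root_sub {o : ℂ} (ho : o^2 + o + 1 = 0) : ‖1 - o‖ = Real.sqrt 3 := by
  have h : (1-o)^2 = -3*o := by linear_combination ho
  have h := congrArg norm h
  rw [norm_pow, norm_mul, root_norm ho] at h
  rw [← Real.sqrt_sq (norm_nonneg (1-o)), h]; norm_num

lemma lem_uv {o : ℂ} (ho : o^2 + o + 1 = 0) {t : ℝ} (ht : 0 < t) (σ s : ℂ) :
    Real.sqrt 3 - t*(‖σ‖+‖s‖) ≤ ‖(1+t*σ) - o*(1+t*s)‖ := by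
  have h1 : (1 - o) = ((1+t*σ) - o*(1+t*s)) - (t*σ - o*(t*s)) := by ring
  have h2 : ‖1-o‖ ≤ ‖(1+t*σ) - o*(1+t*s)‖ + ‖(t*σ - o*(t*s) : ℂ)‖ := by
    rw [h1]; exact norm_sub_le _ _
  have h3 : ‖(t*σ - o*(t*s) : ℂ)‖ ≤ t*‖σ‖ + t*‖s‖ := by
    refine (norm_sub_le _ _).trans ?_
    rw [norm_mul, norm_mul, norm_mul, root_norm ho, Complex.norm_real, Real.norm_of_nonneg ht.le]
    simp
  rw [root_sub ho] at h2; linarith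

lemma Q_inj {t : ℝ} (ht : 0 < t) {σ s : ℂ} (h : t*(‖σ‖+‖s‖) < Real.sqrt 3)
    (hq : Qf t σ = Qf t s) : σ = s := by
  have e : (σ - s) * ((1+t*σ) - om*(1+t*s)) * ((1+t*σ) - om^2*(1+t*s)) = 0 := by
    have : 3*(Qf t σ - Qf t s) = (σ - s) * ((1+t*σ) - om*(1+t*s)) * ((1+t*σ) - om^2*(1+t*s)) := by
      unfold Qf
      linear_combination (-(σ-s)*((om-1)*(1+t*s)^2-(1+t*σ)*(1+t*s))) * om_root
    rw [← this, hq]; ring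
  have h1 := lem_uv om_root ht σ s
  have h2 := lem_uv om_root2 ht σ s
  have h1' : (1+t*σ) - om*(1+t*s) ≠ 0 := by rw [← norm_pos_iff]; linarith
  have h2' : (1+t*σ) - om^2*(1+t*s) ≠ 0 := by rw [← norm_pos_iff]; linarith
  simpa [h1', h2', sub_eq_zero] using e

lemma Q_deriv (t : ℝ) (σ : ℂ) : HasStrictDerivAt (Qf t) ((1+t*σ)^2) σ := by
  unfold Qf
  have h := hasStrictDerivAt_id σ
  have := (h.add ((h.pow 2).const_mul (t:ℂ))).add ((h.pow 3).const_mul ((t:ℂ)^2/3))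
  refine this.congr_deriv ?_
  push_cast; simp; ring

lemma Q_cont (t : ℝ) : Continuous (Qf t) := by unfold Qf; fun_prop

lemma u_ne {t : ℝ} (ht : 0 < t) (ht1 : t < 1) {σ : ℂ} (hσ : ‖σ‖ ≤ 1) : (1+t*σ : ℂ) ≠ 0 := by
  intro h
  have : (t*σ:ℂ) = -1 := by linear_combination h
  have := congrArg norm this
  rw [norm_mul, Complex.norm_real, Real.norm_of_nonneg ht.le] at this
  simp at this
  nlinarith [norm_nonneg σ]

def Om (t : ℝ) : Set ℂ := {x | ∀ σ : ℂ, ‖σ‖ ≤ 1 → x * Qf t σ ≠ 1}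

lemma Om_open (t : ℝ) : IsOpen (Om t) := by
  rw [← isClosed_compl_iff]
  have : (Om t)ᶜ = Prod.fst '' ({p : ℂ × (Metric.closedBall (0:ℂ) 1) | p.1 * Qf t p.2 = 1}) := by
    ext x
    simp only [Om, Set.mem_compl_iff, Set.mem_ofPred_eq, Set.mem_image]
    push Not
    constructor
    · rintro ⟨σ, h1, h2⟩; exact ⟨(x, ⟨σ, by simpa using h1⟩), h2, rfl⟩
    · rintro ⟨⟨y, σ⟩, h1, rfl⟩; exact ⟨σ, mem_closedBall_zero_iff.1 σ.2, h1⟩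
  rw [this]
  have : CompactSpace (Metric.closedBall (0:ℂ) 1) := isCompact_iff_compactSpace.1 (isCompact_closedBall _ _)
  apply isClosedMap_fst_of_compactSpace
  apply isClosed_eq _ continuous_const
  exact continuous_fst.mul ((Q_cont t).comp (continuous_subtype_val.comp continuous_snd))

lemma Q_nhds {t : ℝ} (ht : 0 < t) (ht1 : t < 1) {σ : ℂ} (hσ : ‖σ‖ < 1) :
    Qf t '' Metric.closedBall 0 1 ∈ nhds (Qf t σ) := by
  have h := (Q_deriv t σ).map_nhds_eq (pow_ne_zero 2 (u_ne ht ht1 hσ.le))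
  rw [← h]
  apply Filter.image_mem_map
  exact Filter.mem_of_superset (Metric.isOpen_ball.mem_nhds (by simpa using hσ)) Metric.ball_subset_closedBall

lemma Om_bdd {t : ℝ} (ht : 0 < t) (ht1 : t < 1) : Bornology.IsBounded (Om t) := by
  have h := Q_nhds ht ht1 (σ := 0) (by simp)
  have h0 : Qf t 0 = 0 := by simp [Qf]
  rw [h0, Metric.mem_nhds_iff] at h
  obtain ⟨r, hr, h⟩ := h
  rw [isBounded_iff_forall_norm_le]
  refine ⟨r⁻¹, fun x hx => ?_⟩
  by_contra hc
  push Not at hc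
  have hx0 : x ≠ 0 := by
    rintro rfl; simp at hc; linarith
  have : x⁻¹ ∈ Metric.ball (0:ℂ) r := by
    simp only [mem_ball_zero_iff, norm_inv]
    exact inv_lt_of_inv_lt₀ hr hc
  obtain ⟨σ, h1, h2⟩ := h this
  apply hx σ (by simpa using h1)
  rw [h2]; field_simp

theorem MP {t : ℝ} (ht : 0 < t) (ht1 : t < 1) (f : ℂ → ℂ) (hf : Differentiable ℂ f) (C : ℝ)
    (hC : ∀ τ : ℂ, ‖τ‖ = 1 → ‖f (Qf t τ)⁻¹‖ ≤ C) {x : ℂ} (hx : x ∈ Om t) : ‖f x‖ ≤ C := by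
  refine Complex.norm_le_of_forall_mem_frontier_norm_le (Om_bdd ht ht1) hf.diffContOnCl ?_ (subset_closure hx)
  intro z hz
  rw [(Om_open t).frontier_eq] at hz
  obtain ⟨hz1, hz2⟩ := hz
  simp only [Om, Set.mem_ofPred_eq] at hz2
  push Not at hz2
  obtain ⟨σ, h1, h2⟩ := hz2
  have hQ : Qf t σ ≠ 0 := by rintro h; simp [h] at h2
  have hzq : z = (Qf t σ)⁻¹ := eq_inv_of_mul_eq_one_left h2
  rcases h1.lt_or_eq with h3 | h3
  · exfalso
    have hz0 : z ≠ 0 := by rintro rfl; simp at h2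
    have hn := Q_nhds ht ht1 h3
    have : Filter.Tendsto (fun z : ℂ => z⁻¹) (nhds z) (nhds (Qf t σ)) := by
      have := (continuousAt_inv₀ hz0).tendsto
      rwa [show z⁻¹ = Qf t σ by rw [hzq, inv_inv]] at this
    have h4 := this hn
    obtain ⟨y, hy1, hy2⟩ := (mem_closure_iff_nhds.1 hz1) _ (Filter.inter_mem h4 (isOpen_ne.mem_nhds hz0))
    obtain ⟨⟨s, hs1, hs2⟩, hy0⟩ := hy1
    apply hy2 s (by simpa using hs1)
    rw [hs2]; exact mul_inv_cancel₀ hy0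
  · rw [hzq]; exact hC σ h3

lemma Om_zero (t : ℝ) : (0:ℂ) ∈ Om t := by intro σ _; simp

lemma Om_out {t : ℝ} (ht : 0 < t) {σ : ℂ} (h1 : 1 < ‖σ‖) (h2 : t*(1+‖σ‖) < Real.sqrt 3) :
    (Qf t σ)⁻¹ ∈ Om t := by
  intro s hs h
  have h0 : Qf t σ ≠ 0 := by rintro h'; simp [h'] at h
  have : Qf t s = Qf t σ := by field_simp at h; exact h
  have := Q_inj ht (by nlinarith) this
  rw [this] at hs; linarith

lemma Q_ne {t : ℝ} (ht : 0 < t) {σ : ℂ} (h1 : σ ≠ 0) (h2 : t*‖σ‖ < Real.sqrt 3) : Qf t σ ≠ 0 := by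
  intro h
  apply h1
  apply Q_inj ht (s := 0) (by simpa using h2)
  rw [h]; simp [Qf]

end SecPI

section SecPJ

open Complex ComplexConjugate

abbrev XX := AddCircle (2*Real.pi)

instance factTwoPi : Fact (0 < 2*Real.pi) := ⟨Real.two_pi_pos⟩

noncomputable def tauC : C(XX, ℂ) := fourier (-1)

lemma tauC_norm (x : XX) : ‖tauC x‖ = 1 := by
  simp only [tauC, fourier_apply]; exact Circle.norm_coe _

lemma three_lt : Real.sqrt 3 < 2 := by
  rw [Real.sqrt_lt' (by norm_num)]; norm_num

lemma QC_ne {t : ℝ} (ht : 0 < t) (ht1 : t < Real.sqrt 3/2) {σ : ℂ} (h : ‖σ‖ = 1) : Qf t σ ≠ 0 := by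
  apply Q_ne ht
  · rintro rfl; simp at h
  · rw [h]; linarith

theorem functional {t : ℝ} (ht : 0 < t) (ht1 : t < Real.sqrt 3/2) :
    ∃ Λ : C(XX, ℂ) →L[ℂ] ℂ, Λ 1 = 1 ∧ (∀ g, Λ (star g) = conj (Λ g)) ∧
      ∀ G : ℂ → ℂ, Differentiable ℂ G → G 0 = 0 → ∀ g : C(XX,ℂ), (∀ x, g x = G (Qf t (tauC x))⁻¹) → Λ g = 0 := by
  have ht2 : t < 1 := by have := three_lt; linarith
  let S : Set C(XX,ℂ) := {g | ∃ G : ℂ → ℂ, Differentiable ℂ G ∧ G 0 = 0 ∧ ∀ x, (g x).re = (G (Qf t (tauC x))⁻¹).re}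
  let N : Set C(XX,ℂ) := {g | ∀ x, (g x).re < 0}
  have hS : Convex ℝ S := by
    rintro a ⟨G, h1, h2, h3⟩ b ⟨G', h1', h2', h3'⟩ p q hp hq hpq
    refine ⟨fun z => p * G z + q * G' z, by fun_prop, by simp [h2, h2'], fun x => ?_⟩
    simp [h3, h3']
  have hN : Convex ℝ N := by
    rintro a ha b hb p q hp hq hpq x
    simp only [ContinuousMap.add_apply, ContinuousMap.smul_apply, Complex.add_re, Complex.real_smul, Complex.re_ofReal_mul]
    have := ha x
    have := hb x
    rcases hp.eq_or_lt with h | h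
    · have : q = 1 := by linarith
      subst this; rw [← h]; linarith
    · nlinarith
  have hNo : IsOpen N := by
    have : N = {g : C(XX,ℂ) | Set.MapsTo g Set.univ {z | z.re < 0}} := by
      ext g; simp [N, Set.MapsTo]
    rw [this]
    exact ContinuousMap.isOpen_setOfPred_mapsTo isCompact_univ (isOpen_lt Complex.continuous_re continuous_const)
  have hd : Disjoint N S := by
    rw [Set.disjoint_left]
    rintro g hg ⟨G, h1, h2, h3⟩
    obtain ⟨x0, -, hx0⟩ := isCompact_univ.exists_isMaxOn (Set.univ_nonempty (α := XX)) ((Complex.continuous_re.comp g.continuous).continuousOn)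
    have hb : ∀ τ : ℂ, ‖τ‖ = 1 → ‖exp (G (Qf t τ)⁻¹)‖ ≤ Real.exp (g x0).re := by
      intro τ hτ
      have : ∃ x : XX, tauC x = τ := by
        obtain ⟨θ, hθ⟩ := (Complex.norm_eq_one_iff τ).1 hτ
        refine ⟨((-θ : ℝ) : XX), ?_⟩
        rw [tauC, fourier_coe_apply, ← hθ]
        congr 1
        push_cast
        field_simp
      obtain ⟨x, rfl⟩ := this
      rw [Complex.norm_exp, ← h3]
      exact Real.exp_le_exp.2 (hx0 (Set.mem_univ x))
    have := MP ht ht2 (fun z => exp (G z)) (by fun_prop) _ hb (Om_zero t)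
    simp only [h2, Complex.exp_zero, norm_one] at this
    have h4 : Real.exp (g x0).re < 1 := by rw [Real.exp_lt_one_iff]; exact hg x0
    linarith
  obtain ⟨f, u, hf1, hf2⟩ := RCLike.geometric_hahn_banach_open (𝕜 := ℂ) hN hNo hS hd
  have hSs : ∀ g ∈ S, ∀ r : ℝ, (r:ℂ) • g ∈ S := by
    rintro g ⟨G, h1, h2, h3⟩ r
    refine ⟨fun z => r * G z, by fun_prop, by simp [h2], fun x => by simp [h3]⟩
  have hS0 : ∀ g ∈ S, (f g).re = 0 := by
    intro g hg
    by_contra h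
    have := hf2 _ (hSs g hg ((u - 1)/(f g).re))
    rw [map_smul, smul_eq_mul] at this
    simp only [RCLike.re_to_complex, Complex.re_ofReal_mul] at this
    field_simp at this
    linarith
  have hI : ∀ g : C(XX,ℂ), (∀ x, (g x).im = 0) → (f g).im = 0 := by
    intro g hg
    have := hS0 (I • g) ⟨fun _ => 0, by fun_prop, rfl, fun x => by simp [hg]⟩
    rw [map_smul] at this
    simpa using this
  have hu : u ≤ 0 := by
    have := hf2 0 ⟨fun _ => 0, by fun_prop, rfl, fun x => by simp⟩
    simpa using this
  have hpos : 0 < (f 1).re := by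
    have := hf1 (-1) (fun x => by simp)
    simp at this; linarith
  have hone : f 1 = ((f 1).re : ℂ) := by
    apply Complex.ext <;> simp [hI 1 (fun x => by simp)]
  have hc : ∀ g, f (star g) = conj (f g) := by
    intro g
    have h1 := hI (g + star g) (fun x => by simp)
    have h2 := hI (I • (g - star g)) (fun x => by simp)
    rw [map_add] at h1
    rw [map_smul, map_sub] at h2
    simp at h1 h2
    apply Complex.ext
    · simp; linarith
    · simp; linarith
  refine ⟨((f 1).re⁻¹ : ℂ) • f, ?_, ?_, ?_⟩
  · simp only [_root_.smul_apply, smul_eq_mul]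
    conv_lhs => rw [hone]
    have : ((f 1).re : ℂ) ≠ 0 := by exact_mod_cast hpos.ne'
    simp only [Complex.ofReal_re]
    field_simp
  · intro g; simp [hc]
  · intro G h1 h2 g hg
    have e1 := hS0 g ⟨G, h1, h2, fun x => by rw [hg]⟩
    have e2 := hS0 (I • g) ⟨fun z => I * G z, by fun_prop, by simp [h2], fun x => by simp [hg]⟩
    rw [map_smul] at e2
    have : f g = 0 := by
      apply Complex.ext
      · simpa using e1
      · simpa using e2
    simp [this]

end SecPJ

section SecPK

open Complex ComplexConjugate

noncomputable def PS (t : ℝ) : ℕ → ℂ → ℂ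
  | 0, _ => 3
  | 1, c => c
  | 2, c => c^2 + 2*t*c
  | (n+3), c => c * (PS t (n+2) c + t * PS t (n+1) c + (t:ℂ)^2/3 * PS t n c)

lemma PS_diff (t : ℝ) (n : ℕ) : Differentiable ℂ (PS t n) := by
  induction n using Nat.strong_induction_on with
  | _ n ih =>
    match n, ih with
    | 0, _ => simp only [PS]; fun_prop
    | 1, _ => simp only [PS]; fun_prop
    | 2, _ => simp only [PS]; fun_prop
    | (n+3), ih =>
      have h1 := ih (n+2) (by omega)
      have h2 := ih (n+1) (by omega)
      have h3 := ih n (by omega)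
      have : PS t (n+3) = fun c => c * (PS t (n+2) c + t * PS t (n+1) c + (t:ℂ)^2/3 * PS t n c) := by
        funext c; rw [PS]
      rw [this]
      fun_prop

lemma PS_zero (t : ℝ) (n : ℕ) : PS t (n+1) 0 = 0 := by
  match n with
  | 0 => simp [PS]
  | 1 => simp [PS]
  | (n+2) => simp [PS]

lemma PS_eq (t : ℝ) {a b d c : ℂ} (h1 : a + b + d = c) (h2 : a*b+b*d+d*a = -c*t)
    (h3 : a*b*d = c*t^2/3) (n : ℕ) : PS t n c = a^n + b^n + d^n := by
  have key : ∀ x : ℂ, (x-a)*(x-b)*(x-d) = 0 → x^3 = c*(x^2+t*x+t^2/3) := by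
    intro x hx
    linear_combination hx + x^2*h1 - x*h2 + h3
  have ka := key a (by ring)
  have kb := key b (by ring)
  have kd := key d (by ring)
  induction n using Nat.strong_induction_on with
  | _ n ih =>
    match n, ih with
    | 0, _ => simp only [PS]; norm_num
    | 1, _ => simp only [PS]; linear_combination -h1
    | 2, _ => simp only [PS]; linear_combination -(a+b+d+c)*h1 + 2*h2
    | (n+3), ih =>
      rw [PS, ih (n+2) (by omega), ih (n+1) (by omega), ih n (by omega)]
      linear_combination -a^n*ka - b^n*kb - d^n*kd

noncomputable def xk (o : ℂ) (t : ℝ) (σ : ℂ) : ℂ := o*t/(1+t*σ-o)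

lemma D_ne {o : ℂ} (ho : o^2+o+1=0) {t : ℝ} (ht : 0 < t) {σ : ℂ} (h : t*‖σ‖ < Real.sqrt 3) :
    1+t*σ-o ≠ 0 := by
  have := lem_uv ho ht σ 0
  rw [← norm_pos_iff]
  simp at this; linarith

lemma xk_norm {o : ℂ} (ho : o^2+o+1=0) {t : ℝ} (ht : 0 < t) {σ : ℂ} (h : t*‖σ‖ < Real.sqrt 3) :
    ‖xk o t σ‖ ≤ t/(Real.sqrt 3 - t*‖σ‖) := by
  have := lem_uv ho ht σ 0
  simp at this
  rw [xk, norm_div, norm_mul, root_norm ho, Complex.norm_real, Real.norm_of_nonneg ht.le, one_mul]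
  gcongr
  linarith

lemma xk_sums {t : ℝ} (ht : 0 < t) {σ : ℂ} (h0 : σ ≠ 0) (h : t*‖σ‖ < Real.sqrt 3) (n : ℕ) :
    PS t n (Qf t σ)⁻¹ = (σ⁻¹)^n + (xk om t σ)^n + (xk (om^2) t σ)^n := by
  have d1 := D_ne om_root ht h
  have d2 := D_ne om_root2 ht h
  have hQ := Q_ne ht h0 h
  have e12 : (1+t*σ-om)*(1+t*σ-om^2) = (1+t*σ)^2+(1+t*σ)+1 := by
    linear_combination (om - 1 - (1+t*σ)) * om_root
  have eQ : 3*Qf t σ = σ*((1+t*σ)^2+(1+t*σ)+1) := by unfold Qf; ring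
  have hR : (1+t*σ)^2+(1+t*σ)+1 ≠ 0 := by rw [← e12]; exact mul_ne_zero d1 d2
  have s1 : xk om t σ + xk (om^2) t σ = -t*((1+t*σ)+2)/((1+t*σ)^2+(1+t*σ)+1) := by
    rw [← e12]; unfold xk; rw [div_add_div _ _ d1 d2]
    congr 1
    linear_combination (t*(1+t*σ) - 2*t*(om-1)) * om_root
  have s2 : xk om t σ * xk (om^2) t σ = t^2/((1+t*σ)^2+(1+t*σ)+1) := by
    rw [← e12]; unfold xk; rw [div_mul_div_comm]
    congr 1
    linear_combination t^2*(om-1)*om_root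
  have cQ : (Qf t σ)⁻¹ = 3/(σ*((1+t*σ)^2+(1+t*σ)+1)) := by
    rw [← eQ]; field_simp
  generalize hRR : (1+t*σ)^2+(1+t*σ)+1 = R at *
  apply PS_eq
  · rw [add_assoc, s1, cQ]; field_simp; rw [← hRR]; ring
  · rw [show σ⁻¹ * xk om t σ + xk om t σ * xk (om ^ 2) t σ + xk (om ^ 2) t σ * σ⁻¹ = σ⁻¹*(xk om t σ + xk (om^2) t σ) + xk om t σ * xk (om^2) t σ by ring, s1, s2, cQ]
    field_simp; ring
  · rw [mul_assoc, s2, cQ]; field_simp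

lemma cross {o o' : ℂ} (ho : o^2+o+1=0) (ho' : o'^2+o'+1=0) (hoo : o*o'=1) {t : ℝ} (ht : 0 < t)
    (ht1 : t < Real.sqrt 3/2) {τ σ : ℂ} (hτ : ‖τ‖ = 1) (hσ : ‖σ‖ = 1) :
    o'*τ*xk o t τ * (1 + σ*xk o t τ/(1-σ*xk o t τ)) = -(τ*xk o' t σ/(1-τ*xk o' t σ)) := by
  have d1 : 1+t*τ-o ≠ 0 := D_ne ho ht (by rw [hτ]; linarith)
  have d2 : 1+t*σ-o' ≠ 0 := D_ne ho' ht (by rw [hσ]; linarith)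
  have d3 : (1+t*τ) - o*(1+t*σ) ≠ 0 := by
    rw [← norm_pos_iff]; have := lem_uv ho ht τ σ; rw [hτ, hσ] at this; linarith
  have o0 : o ≠ 0 := left_ne_zero_of_mul_eq_one hoo
  have o0' : o' ≠ 0 := right_ne_zero_of_mul_eq_one hoo
  have a1 : 1-σ*xk o t τ = ((1+t*τ) - o*(1+t*σ))/(1+t*τ-o) := by
    unfold xk; field_simp; ring
  have a2 : 1-τ*xk o' t σ = -o'*((1+t*τ) - o*(1+t*σ))/(1+t*σ-o') := by
    unfold xk; field_simp; linear_combination -(1+t*σ)*hoo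
  have e1 : 1 + σ*xk o t τ/(1-σ*xk o t τ) = 1/(1-σ*xk o t τ) := by
    have : 1-σ*xk o t τ ≠ 0 := by rw [a1]; exact div_ne_zero d3 d1
    field_simp; ring
  rw [e1, a1, a2]; unfold xk
  clear e1 a1 a2
  generalize (1+t*τ) - o*(1+t*σ) = A at *
  generalize 1+t*τ-o = B at *
  generalize 1+t*σ-o' = C at *
  field_simp
  linear_combination τ*t*hoo

end SecPK

section SecPL

open Complex ComplexConjugate

structure Dat (t : ℝ) (Λ : C(XX, ℂ) →L[ℂ] ℂ) : Prop where
  ht : 0 < t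
  ht1 : t < Real.sqrt 3/2
  one : Λ 1 = 1
  str : ∀ g, Λ (star g) = conj (Λ g)
  G : ∀ G : ℂ → ℂ, Differentiable ℂ G → G 0 = 0 → ∀ g : C(XX,ℂ), (∀ x, g x = G (Qf t (tauC x))⁻¹) → Λ g = 0

lemma hsc {f g : ℕ → ℂ} {a : ℂ} (h : HasSum f a) (e : ∀ n, g n = f n) : HasSum g a := by
  rw [show g = f from funext e]; exact h

noncomputable def lam (Λ : C(XX, ℂ) →L[ℂ] ℂ) (n : ℕ) : ℂ := Λ (tauC^n)
noncomputable def qq (t : ℝ) : ℝ := t/(Real.sqrt 3 - t)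

lemma qq_pos {t : ℝ} (ht : 0 < t) (ht1 : t < Real.sqrt 3/2) : 0 < qq t := div_pos ht (by linarith)
lemma qq_lt {t : ℝ} (ht : 0 < t) (ht1 : t < Real.sqrt 3/2) : qq t < 1 := by
  unfold qq; rw [div_lt_one (by linarith)]; linarith

noncomputable def xC {o : ℂ} (ho : o^2+o+1=0) {t : ℝ} (ht : 0 < t) (ht1 : t < Real.sqrt 3/2) : C(XX,ℂ) :=
  ⟨fun x => xk o t (tauC x), by
    unfold xk
    refine Continuous.div (by fun_prop) (by fun_prop) (fun x => D_ne ho ht ?_)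
    rw [tauC_norm]; linarith⟩

lemma xC_norm {o : ℂ} (ho : o^2+o+1=0) {t : ℝ} (ht : 0 < t) (ht1 : t < Real.sqrt 3/2) : ‖xC ho ht ht1‖ ≤ qq t := by
  rw [ContinuousMap.norm_le _ (qq_pos ht ht1).le]
  intro x
  have := xk_norm ho ht (σ := tauC x) (by rw [tauC_norm]; linarith)
  rw [tauC_norm, mul_one] at this
  exact this

lemma lam_neg {t : ℝ} {Λ} (hD : Dat t Λ) (n : ℕ) :
    conj (lam Λ (n+1)) = - Λ ((xC om_root hD.ht hD.ht1)^(n+1)) - Λ ((xC om_root2 hD.ht hD.ht1)^(n+1)) := by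
  have h := hD.G (PS t (n+1)) (PS_diff t _) (PS_zero t n)
    (star (tauC^(n+1)) + (xC om_root hD.ht hD.ht1)^(n+1) + (xC om_root2 hD.ht hD.ht1)^(n+1)) (by
      intro x
      have hn := tauC_norm x
      rw [xk_sums hD.ht (by rintro h; simp [h] at hn) (by rw [hn]; linarith [hD.ht1, hD.ht])]
      simp [xC, Complex.inv_eq_conj hn])
  rw [map_add, map_add, hD.str] at h
  unfold lam
  linear_combination h

lemma lam_bound {t : ℝ} {Λ} (hD : Dat t Λ) : ∃ C : ℝ, 0 ≤ C ∧ ∀ n, ‖lam Λ (n+1)‖ ≤ C * (qq t)^n := by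
  have q0 := qq_pos hD.ht hD.ht1
  have q1 := qq_lt hD.ht hD.ht1
  have hx : ∀ (o : ℂ) (ho : o^2+o+1=0) (n : ℕ), ‖Λ ((xC ho hD.ht hD.ht1)^(n+1))‖ ≤ ‖Λ‖*(qq t)^n := by
    intro o ho n
    refine (Λ.le_opNorm _).trans ?_
    gcongr
    refine (norm_pow_le _ _).trans ?_
    refine (pow_le_pow_left₀ (norm_nonneg _) (xC_norm ho hD.ht hD.ht1) _).trans ?_
    exact pow_le_pow_of_le_one q0.le q1.le (by omega)
  refine ⟨2*‖Λ‖, by positivity, fun n => ?_⟩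
  have : ‖lam Λ (n+1)‖ = ‖conj (lam Λ (n+1))‖ := (RCLike.norm_conj _).symm
  rw [this, lam_neg hD]
  refine (norm_sub_le _ _).trans ?_
  rw [norm_neg]
  have := hx _ om_root n
  have := hx _ om_root2 n
  linarith

noncomputable def Lf (Λ : C(XX, ℂ) →L[ℂ] ℂ) (y : ℂ) : ℂ := ∑' n : ℕ, lam Λ (n+1)/((n:ℂ)+1) * y^(n+1)
noncomputable def ell (Λ : C(XX, ℂ) →L[ℂ] ℂ) (y : ℂ) : ℂ := ∑' n : ℕ, lam Λ (n+1) * y^n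

lemma ell_summable {t : ℝ} {Λ} (hD : Dat t Λ) {y : ℂ} (hy : qq t * ‖y‖ < 1) :
    Summable (fun n : ℕ => lam Λ (n+1) * y^n) := by
  obtain ⟨C, hC, h⟩ := lam_bound hD
  have q0 := qq_pos hD.ht hD.ht1
  refine Summable.of_norm_bounded (g := fun n => C*(qq t*‖y‖)^n) ((summable_geometric_of_lt_one (by positivity) hy).mul_left C) ?_
  intro n
  rw [norm_mul, norm_pow, mul_pow, ← mul_assoc]
  gcongr; exact h n

lemma L_deriv {t : ℝ} {Λ} (hD : Dat t Λ) {y : ℂ} (hy : qq t * ‖y‖ < 1) :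
    HasDerivAt (Lf Λ) (ell Λ y) y := by
  obtain ⟨C, hC, h⟩ := lam_bound hD
  have q0 := qq_pos hD.ht hD.ht1
  obtain ⟨r, hr1, hr2⟩ : ∃ r : ℝ, ‖y‖ < r ∧ qq t * r < 1 := by
    obtain ⟨r, h1, h2⟩ := exists_between (show ‖y‖ < 1/qq t by rw [lt_div_iff₀ q0]; linarith)
    exact ⟨r, h1, by rw [lt_div_iff₀ q0] at h2; linarith⟩
  have hr0 : 0 < r := lt_of_le_of_lt (norm_nonneg y) hr1
  refine hasDerivAt_tsum_of_isPreconnected (g := fun (n:ℕ) (y:ℂ) => lam Λ (n+1)/((n:ℂ)+1) * y^(n+1)) (g' := fun (n:ℕ) (y:ℂ) => lam Λ (n+1) * y^n) (u := fun n => C*(qq t*r)^n) (t := Metric.ball (0:ℂ) r) (y₀ := 0)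
    ((summable_geometric_of_lt_one (by positivity) hr2).mul_left C) Metric.isOpen_ball (convex_ball _ _).isPreconnected ?_ ?_ ?_ ?_ ?_
  · intro n z hz
    refine ((hasDerivAt_pow (n+1) z).const_mul _).congr_deriv ?_
    have : ((n:ℂ)+1) ≠ 0 := by exact_mod_cast Nat.succ_ne_zero n
    push_cast
    field_simp
  · intro n z hz
    rw [norm_mul, norm_pow, mul_pow, ← mul_assoc]
    have hz : ‖z‖ ≤ r := (mem_ball_zero_iff.1 hz).le
    gcongr; exact h n
  · simpa using hr0
  · simp
  · simpa using hr1

lemma geo (Λ : C(XX, ℂ) →L[ℂ] ℂ) (a g : C(XX,ℂ)) (ha : ‖a‖ < 1) (hg : ∀ x, g x = a x/(1-a x)) :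
    HasSum (fun n : ℕ => Λ (a^(n+1))) (Λ g) := by
  have hs : Summable (fun n : ℕ => a^(n+1)) := by
    have := summable_geometric_of_norm_lt_one ha
    exact (summable_nat_add_iff 1).2 this
  have : ∑' n : ℕ, a^(n+1) = g := by
    ext x
    have h1 := (ContinuousMap.evalCLM ℂ x).hasSum hs.hasSum
    have hx : ‖a x‖ < 1 := lt_of_le_of_lt (a.norm_coe_le_norm x) ha
    have h2 : HasSum (fun n : ℕ => (a x)^(n+1)) (a x/(1-a x)) := by
      simp_rw [pow_succ', div_eq_mul_inv]
      exact (hasSum_geometric_of_norm_lt_one hx).mul_left _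
    rw [hg]
    refine HasSum.unique ?_ h2
    simpa using h1
  rw [← this]
  exact Λ.hasSum hs.hasSum

noncomputable def gC (a : C(XX,ℂ)) (ha : ‖a‖ < 1) : C(XX,ℂ) :=
  ⟨fun x => a x/(1-a x), by
    refine Continuous.div (by fun_prop) (by fun_prop) (fun x h => ?_)
    have hx : ‖a x‖ < 1 := lt_of_le_of_lt (a.norm_coe_le_norm x) ha
    rw [← sub_eq_zero.1 h] at hx; simp at hx⟩

lemma mm_B {t : ℝ} {Λ} (hD : Dat t Λ) {y : ℂ} (hy : ‖y • tauC‖ < 1) (hy1 : qq t * ‖y‖ < 1) :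
    y * ell Λ y = Λ (gC (y • tauC) hy) := by
  have h1 := geo Λ (y • tauC) (gC _ hy) hy (fun x => rfl)
  have h2 := (ell_summable hD hy1).hasSum.mul_left y
  refine HasSum.unique h2 ?_
  refine hsc h1 (fun n => ?_)
  rw [smul_pow, map_smul, lam, smul_eq_mul]; ring

lemma tauC_norm1 : ‖tauC‖ = 1 := by unfold tauC; exact fourier_norm _

lemma mm_A {t : ℝ} {Λ} (hD : Dat t Λ) {τ : ℂ} (hτ : ‖τ‖ = 1)
    (h1 : ‖τ • xC om_root hD.ht hD.ht1‖ < 1) (h2 : ‖τ • xC om_root2 hD.ht hD.ht1‖ < 1) :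
    conj (τ⁻¹ * ell Λ τ⁻¹) = - Λ (gC _ h1) - Λ (gC _ h2) := by
  have e1 := geo Λ _ (gC _ h1) h1 (fun x => rfl)
  have e2 := geo Λ _ (gC _ h2) h2 (fun x => rfl)
  have h3 := (ell_summable hD (y := τ⁻¹) (by rw [norm_inv, hτ]; simpa using qq_lt hD.ht hD.ht1)).hasSum.mul_left τ⁻¹
  have h4 := Complex.hasSum_conj'.2 (h3)
  have h5 := e1.neg.sub e2
  have a1 : HasSum (fun n : ℕ => τ^(n+1) * conj (lam Λ (n+1))) (conj (τ⁻¹ * ell Λ τ⁻¹)) := by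
    refine hsc h4 (fun n => ?_)
    have : conj τ⁻¹ = τ := by rw [Complex.inv_eq_conj hτ]; simp
    rw [map_mul, map_mul, map_pow, this]; ring
  have a2 : HasSum (fun n : ℕ => τ^(n+1) * conj (lam Λ (n+1))) (- Λ (gC _ h1) - Λ (gC _ h2)) := by
    refine hsc h5 (fun n => ?_)
    rw [lam_neg hD, smul_pow, smul_pow, map_smul, map_smul, smul_eq_mul, smul_eq_mul]; ring
  exact a1.unique a2

theorem key_id {t : ℝ} {Λ} (hD : Dat t Λ) {τ : ℂ} (hτ : ‖τ‖ = 1) :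
    om^2*τ*xk om t τ*(1+xk om t τ*ell Λ (xk om t τ)) + om*τ*xk (om^2) t τ*(1+xk (om^2) t τ*ell Λ (xk (om^2) t τ))
      = conj (τ⁻¹ * ell Λ τ⁻¹) := by
  have q0 := qq_pos hD.ht hD.ht1
  have q1 := qq_lt hD.ht hD.ht1
  have hx : ∀ {o : ℂ} (ho : o^2+o+1=0), ‖τ • xC ho hD.ht hD.ht1‖ < 1 := by
    intro o ho
    rw [norm_smul, hτ, one_mul]
    exact lt_of_le_of_lt (xC_norm _ _ _) q1
  have hy : ∀ {o : ℂ} (ho : o^2+o+1=0), ‖xk o t τ‖ < 1 := by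
    intro o ho
    refine lt_of_le_of_lt (xk_norm ho hD.ht (by rw [hτ]; linarith [hD.ht, hD.ht1])) ?_
    rw [hτ, mul_one]; exact q1
  have hy1 : ∀ {o : ℂ} (ho : o^2+o+1=0), qq t*‖xk o t τ‖ < 1 := by
    intro o ho
    have := hy ho
    nlinarith [norm_nonneg (xk o t τ)]
  have hy2 : ∀ {o : ℂ} (ho : o^2+o+1=0), ‖xk o t τ • tauC‖ < 1 := by
    intro o ho
    rw [norm_smul, tauC_norm1, mul_one]; exact hy ho
  have main : ∀ {o o' : ℂ} (ho : o^2+o+1=0) (ho' : o'^2+o'+1=0) (hoo : o*o'=1),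
      o'*τ*xk o t τ*(1+xk o t τ*ell Λ (xk o t τ)) = - Λ (gC _ (hx ho')) := by
    intro o o' ho ho' hoo
    rw [mm_B hD (hy2 ho) (hy1 ho), ← hD.one, ← map_add, ← smul_eq_mul, ← map_smul, ← map_neg]
    congr 1
    ext x
    have := cross ho ho' hoo hD.ht hD.ht1 hτ (tauC_norm x)
    simpa [gC, xC, mul_comm, mul_add] using this
  have o3 := root_cube om_root
  rw [main om_root om_root2 (by linear_combination o3), main om_root2 om_root (by linear_combination o3), mm_A hD hτ (hx om_root) (hx om_root2)]
  ring

end SecPL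

section SecPM

open Complex ComplexConjugate

noncomputable def Ef (Λ : C(XX, ℂ) →L[ℂ] ℂ) (t : ℝ) (σ : ℂ) : ℂ := Lf Λ σ⁻¹ + Lf Λ (xk om t σ) + Lf Λ (xk (om^2) t σ)

noncomputable def wf (Λ : C(XX, ℂ) →L[ℂ] ℂ) (t : ℝ) (σ : ℂ) : ℂ :=
  σ*(1+t*σ)^2/Qf t σ + σ⁻¹*ell Λ σ⁻¹ + om^2*σ*(xk om t σ)^2*ell Λ (xk om t σ) + om*σ*(xk (om^2) t σ)^2*ell Λ (xk (om^2) t σ)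

lemma xk_deriv {o o' : ℂ} (ho : o^2+o+1=0) (hoo : o*o'=1) {t : ℝ} (ht : 0 < t) {σ : ℂ} (h : t*‖σ‖ < Real.sqrt 3) :
    HasDerivAt (xk o t) (-o'*(xk o t σ)^2) σ := by
  have d := D_ne ho ht h
  have h1 : HasDerivAt (fun σ : ℂ => 1+t*σ-o) (t:ℂ) σ := by
    simpa using (((hasDerivAt_id σ).const_mul (t:ℂ)).const_add 1).sub_const o
  have h2 := (hasDerivAt_const σ (o*t)).div h1 d
  refine h2.congr_deriv ?_
  unfold xk
  generalize 1+t*σ-o = D at *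
  field_simp
  linear_combination (o*t^2)*hoo

lemma logQ {t : ℝ} (ht : 0 < t) {σ : ℂ} (h0 : σ ≠ 0) (h : t*‖σ‖ < Real.sqrt 3) :
    σ*(1+t*σ)^2/Qf t σ = 1 + om^2*σ*xk om t σ + om*σ*xk (om^2) t σ := by
  have d1 := D_ne om_root ht h
  have d2 := D_ne om_root2 ht h
  have hQ := Q_ne ht h0 h
  have e12 : (1+t*σ-om)*(1+t*σ-om^2) = (1+t*σ)^2+(1+t*σ)+1 := by
    linear_combination (om - 1 - (1+t*σ)) * om_root
  have eQ : Qf t σ = σ*((1+t*σ-om)*(1+t*σ-om^2))/3 := by rw [e12]; unfold Qf; ring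
  have o3 := root_cube om_root
  have a1 : om^2*σ*xk om t σ = σ*t/(1+t*σ-om) := by
    unfold xk; rw [mul_div_assoc']; congr 1; linear_combination σ*t*o3
  have a2 : om*σ*xk (om^2) t σ = σ*t/(1+t*σ-om^2) := by
    unfold xk; rw [mul_div_assoc']; congr 1; linear_combination σ*t*o3
  rw [a1, a2, eQ]
  have e3 : (1+t*σ-om) + (1+t*σ-om^2) = 2*(1+t*σ)+1 := by linear_combination -om_root
  have hu : (t*σ : ℂ) = (1+t*σ) - 1 := by ring
  generalize hA : 1+t*σ-om = A at *
  generalize hB : 1+t*σ-om^2 = B at *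
  field_simp
  linear_combination -e12 - σ*t*e3

lemma wf_real {t : ℝ} {Λ} (hD : Dat t Λ) {τ : ℂ} (hτ : ‖τ‖ = 1) :
    wf Λ t τ = 1 + τ⁻¹*ell Λ τ⁻¹ + conj (τ⁻¹*ell Λ τ⁻¹) := by
  rw [← key_id hD hτ, wf, logQ hD.ht (by rintro rfl; simp at hτ) (by rw [hτ]; linarith [hD.ht, hD.ht1])]
  ring

def AA (R : ℝ) : Set ℂ := {σ | R⁻¹ < ‖σ‖ ∧ ‖σ‖ < R}

lemma AA_open (R : ℝ) : IsOpen (AA R) :=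
  (isOpen_lt continuous_const continuous_norm).inter (isOpen_lt continuous_norm continuous_const)

lemma AA_facts {t R : ℝ} (ht : 0 < t) (ht1 : t < Real.sqrt 3/2) (hR : 1 < R) (hR1 : t*(1+R) < Real.sqrt 3) {σ : ℂ} (h : σ ∈ AA R) :
    σ ≠ 0 ∧ t*‖σ‖ < Real.sqrt 3 ∧ qq t*‖σ⁻¹‖ < 1 ∧ ∀ o : ℂ, o^2+o+1=0 → ‖xk o t σ‖ < 1 ∧ qq t*‖xk o t σ‖ < 1 := by
  obtain ⟨h1, h2⟩ := h
  have hR0 : 0 < R := by linarith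
  have hs : 0 < ‖σ‖ := lt_trans (inv_pos.2 hR0) h1
  have hts : t*‖σ‖ < Real.sqrt 3 := by nlinarith
  have q0 := qq_pos ht ht1
  refine ⟨norm_pos_iff.1 hs, hts, ?_, ?_⟩
  · rw [norm_inv]
    have h3 : ‖σ‖⁻¹ < R := inv_lt_of_inv_lt₀ hR0 h1
    have h4 : qq t*R < 1 := by
      unfold qq; rw [div_mul_eq_mul_div, div_lt_one (by linarith)]; linarith
    nlinarith
  · intro o ho
    have h5 : ‖xk o t σ‖ < 1 := by
      refine lt_of_le_of_lt (xk_norm ho ht hts) ?_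
      rw [div_lt_one (by linarith)]; nlinarith
    exact ⟨h5, by nlinarith [qq_lt ht ht1, norm_nonneg (xk o t σ)]⟩

lemma E_deriv {t R : ℝ} {Λ} (hD : Dat t Λ) (hR : 1 < R) (hR1 : t*(1+R) < Real.sqrt 3) {σ : ℂ} (h : σ ∈ AA R) :
    HasDerivAt (Ef Λ t) ((σ*(1+t*σ)^2/Qf t σ - wf Λ t σ)/σ) σ := by
  obtain ⟨h0, h1, h2, h3⟩ := AA_facts hD.ht hD.ht1 hR hR1 h
  have o3 := root_cube om_root
  have a1 := (L_deriv hD h2).comp σ (hasDerivAt_inv h0)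
  have a2 := (L_deriv hD (h3 _ om_root).2).comp σ (xk_deriv (o' := om^2) om_root (by linear_combination o3) hD.ht h1)
  have a3 := (L_deriv hD (h3 _ om_root2).2).comp σ (xk_deriv (o' := om) om_root2 (by linear_combination o3) hD.ht h1)
  refine ((a1.add a2).add a3).congr_deriv ?_
  unfold wf
  field_simp
  ring

noncomputable def EN (Λ : C(XX, ℂ) →L[ℂ] ℂ) (t : ℝ) (N : ℕ) (c : ℂ) : ℂ :=
  ∑ n ∈ Finset.range N, lam Λ (n+1)/((n:ℂ)+1) * PS t (n+1) c

lemma EN_diff (Λ t N) : Differentiable ℂ (EN Λ t N) := by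
  unfold EN
  have := fun n => PS_diff t n
  fun_prop

lemma EN_zero (Λ t N) : EN Λ t N 0 = 0 := by
  simp [EN, PS_zero]

lemma EN_approx {t R : ℝ} {Λ} (hD : Dat t Λ) (hR : 1 < R) (hR1 : t*(1+R) < Real.sqrt 3) :
    ∃ ε : ℕ → ℝ, Filter.Tendsto ε Filter.atTop (nhds 0) ∧ ∀ N, ∀ σ : ℂ, 1 ≤ ‖σ‖ → ‖σ‖ < R →
      ‖EN Λ t N (Qf t σ)⁻¹ - Ef Λ t σ‖ ≤ ε N := by
  have q0 := qq_pos hD.ht hD.ht1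
  have q1 := qq_lt hD.ht hD.ht1
  have hs1 : Summable (fun n : ℕ => ‖lam Λ (n+1)/((n:ℂ)+1)‖) := by
    have := (ell_summable hD (y := 1) (by simpa using q1)).norm
    refine Summable.of_nonneg_of_le (fun n => norm_nonneg _) (fun n => ?_) this
    rw [norm_div, one_pow, mul_one]
    apply div_le_self (norm_nonneg _)
    have : ((n:ℂ)+1) = ((n+1:ℕ):ℂ) := by push_cast; rfl
    rw [this, Complex.norm_natCast]; simp
  have hL : ∀ y : ℂ, ‖y‖ ≤ 1 → ∀ N : ℕ, ‖∑ n ∈ Finset.range N, lam Λ (n+1)/((n:ℂ)+1) * y^(n+1) - Lf Λ y‖ ≤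
      ∑' n : ℕ, ‖lam Λ (n+N+1)/(((n+N:ℕ):ℂ)+1)‖ := by
    intro y hy N
    have hb : ∀ n : ℕ, ‖lam Λ (n+1)/((n:ℂ)+1) * y^(n+1)‖ ≤ ‖lam Λ (n+1)/((n:ℂ)+1)‖ := by
      intro n
      rw [norm_mul, norm_pow]
      exact mul_le_of_le_one_right (norm_nonneg _) (pow_le_one₀ (norm_nonneg _) hy)
    have hs : Summable (fun n : ℕ => ‖lam Λ (n+1)/((n:ℂ)+1) * y^(n+1)‖) :=
      Summable.of_nonneg_of_le (fun n => norm_nonneg _) hb hs1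
    have h1 := hs.of_norm.sum_add_tsum_nat_add N
    unfold Lf
    rw [← h1, sub_add_cancel_left, norm_neg]
    have hs2 := (summable_nat_add_iff N).2 hs
    refine (norm_tsum_le_tsum_norm hs2).trans ?_
    exact hs2.tsum_le_tsum (fun n => hb (n+N)) ((summable_nat_add_iff N).2 hs1)
  refine ⟨fun N => 3*∑' n : ℕ, ‖lam Λ (n+N+1)/(((n+N:ℕ):ℂ)+1)‖, ?_, ?_⟩
  · have := (tendsto_sum_nat_add (fun n : ℕ => ‖lam Λ (n+1)/((n:ℂ)+1)‖)).const_mul 3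
    simpa using this
  · intro N σ h1 h2
    obtain ⟨f0, f1, f2, f3⟩ := AA_facts hD.ht hD.ht1 hR hR1 (σ := σ) ⟨lt_of_lt_of_le (inv_lt_one_of_one_lt₀ hR) h1, h2⟩
    have e : EN Λ t N (Qf t σ)⁻¹ - Ef Λ t σ = (∑ n ∈ Finset.range N, lam Λ (n+1)/((n:ℂ)+1) * (σ⁻¹)^(n+1) - Lf Λ σ⁻¹)
       + (∑ n ∈ Finset.range N, lam Λ (n+1)/((n:ℂ)+1) * (xk om t σ)^(n+1) - Lf Λ (xk om t σ))
       + (∑ n ∈ Finset.range N, lam Λ (n+1)/((n:ℂ)+1) * (xk (om^2) t σ)^(n+1) - Lf Λ (xk (om^2) t σ)) := by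
      unfold EN Ef
      simp_rw [xk_sums hD.ht f0 f1, mul_add, Finset.sum_add_distrib]
      ring
    rw [e]
    refine (norm_add₃_le).trans ?_
    have g1 := hL σ⁻¹ (by rw [norm_inv]; exact inv_le_one_of_one_le₀ h1) N
    have g2 := hL _ (f3 _ om_root).1.le N
    have g3 := hL _ (f3 _ om_root2).1.le N
    linarith

end SecPM

section SecPN

open Complex ComplexConjugate MeasureTheory

noncomputable def II : C(XX,ℂ) →L[ℂ] ℂ :=
  LinearMap.mkContinuous
    { toFun := fun g => ∫ x, g x ∂(AddCircle.haarAddCircle (T := 2*Real.pi))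
      map_add' := fun f g => integral_add (f.continuous.integrable_of_hasCompactSupport (HasCompactSupport.of_compactSpace _)) (g.continuous.integrable_of_hasCompactSupport (HasCompactSupport.of_compactSpace _))
      map_smul' := fun c g => by
        simp only [ContinuousMap.smul_apply]
        exact integral_smul c _ } 1 (by
    intro g
    have := norm_integral_le_of_norm_le_const (μ := AddCircle.haarAddCircle (T := 2*Real.pi)) (f := g) (C := ‖g‖) (Filter.Eventually.of_forall (fun x => g.norm_coe_le_norm x))
    simpa using this)

lemma II_apply (g : C(XX,ℂ)) : II g = ∫ x, g x ∂(AddCircle.haarAddCircle (T := 2*Real.pi)) := rfl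

lemma II_fourier (k : ℤ) : II (fourier k) = if k = 0 then 1 else 0 := by
  have h := congrFun (fourierCoeff_fourier (T := 2*Real.pi) k) 0
  unfold fourierCoeff at h
  rw [II_apply]
  simp only [neg_zero, fourier_zero, one_smul] at h
  rw [h, Pi.single_apply]
  simp [eq_comm]

lemma II_star (g : C(XX,ℂ)) : II (star g) = conj (II g) := by
  rw [II_apply, II_apply, ← integral_conj]; rfl

lemma tauC_pow (n : ℕ) : tauC^n = fourier (T := 2*Real.pi) (-(n:ℤ)) := by
  induction n with
  | zero => ext x; simp
  | succ n ih =>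
    rw [pow_succ, ih]; ext x
    rw [ContinuousMap.mul_apply, tauC, ← fourier_add]
    push_cast; ring_nf

lemma tauC_star_pow (n : ℕ) : (star tauC)^n = fourier (T := 2*Real.pi) (n:ℤ) := by
  rw [← star_pow, tauC_pow]
  ext x
  rw [ContinuousMap.star_apply, ← starRingEnd_apply, ← fourier_neg, neg_neg]

noncomputable def pC (Λ : C(XX, ℂ) →L[ℂ] ℂ) : C(XX,ℂ) := ∑' n : ℕ, lam Λ (n+1) • (star tauC)^(n+1)

lemma pC_hasSum {t : ℝ} {Λ} (hD : Dat t Λ) : HasSum (fun n : ℕ => lam Λ (n+1) • (star tauC)^(n+1)) (pC Λ) := by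
  apply Summable.hasSum
  have := (ell_summable hD (y := 1) (by simpa using qq_lt hD.ht hD.ht1)).norm
  refine Summable.of_norm_bounded this (fun n => ?_)
  rw [norm_smul, tauC_star_pow, fourier_norm]; simp

lemma pC_apply {t : ℝ} {Λ} (hD : Dat t Λ) (x : XX) : pC Λ x = (tauC x)⁻¹ * ell Λ (tauC x)⁻¹ := by
  have h1 := (ContinuousMap.evalCLM ℂ x).hasSum (pC_hasSum hD)
  have h2 := (ell_summable hD (y := (tauC x)⁻¹) (by rw [norm_inv, tauC_norm]; simpa using qq_lt hD.ht hD.ht1)).hasSum.mul_left (tauC x)⁻¹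
  have h1' : HasSum (fun n : ℕ => (tauC x)⁻¹ * (lam Λ (n+1) * (tauC x)⁻¹^n)) (pC Λ x) := by
    refine hsc h1 (fun n => ?_)
    rw [Complex.inv_eq_conj (tauC_norm x)]
    simp; ring
  exact h1'.unique h2

noncomputable def wC (Λ : C(XX, ℂ) →L[ℂ] ℂ) : C(XX,ℂ) := 1 + pC Λ + star (pC Λ)

lemma wC_apply {t : ℝ} {Λ} (hD : Dat t Λ) (x : XX) : wC Λ x = wf Λ t (tauC x) := by
  rw [wf_real hD (tauC_norm x), ← pC_apply hD]; simp [wC]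

lemma mean_pos {t : ℝ} {Λ} (hD : Dat t Λ) (n : ℕ) : II (tauC^n * wC Λ) = Λ (tauC^n) := by
  have e : tauC^n * wC Λ = tauC^n + tauC^n * pC Λ + tauC^n * star (pC Λ) := by unfold wC; ring
  have h1 := II.hasSum ((pC_hasSum hD).mul_left (tauC^n))
  have h2 := II.hasSum (((pC_hasSum hD).star).mul_left (tauC^n))
  have f1 : ∀ j : ℕ, II (tauC^n * (lam Λ (j+1) • (star tauC)^(j+1))) = if j+1 = n then lam Λ (j+1) else 0 := by
    intro j
    have : tauC^n * (lam Λ (j+1) • (star tauC)^(j+1)) = lam Λ (j+1) • fourier (T := 2*Real.pi) (-(n:ℤ)+(j+1:ℕ)) := by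
      ext x; rw [tauC_pow, tauC_star_pow]; simp only [ContinuousMap.mul_apply, ContinuousMap.smul_apply, smul_eq_mul, fourier_add]; ring
    rw [this, map_smul, II_fourier, smul_eq_mul]
    by_cases hj : j+1 = n
    · rw [if_pos (by omega), if_pos hj, mul_one]
    · rw [if_neg (by omega), if_neg hj, mul_zero]
  have f2 : ∀ j : ℕ, II (tauC^n * star (lam Λ (j+1) • (star tauC)^(j+1))) = 0 := by
    intro j
    have : tauC^n * star (lam Λ (j+1) • (star tauC)^(j+1)) = conj (lam Λ (j+1)) • tauC^(n+j+1) := by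
      ext x; simp [pow_add]; ring_nf; simp
    rw [this, map_smul, tauC_pow, II_fourier, if_neg (by omega), smul_zero]
  have h2' : II (tauC^n * star (pC Λ)) = 0 := by
    have : HasSum (fun _ : ℕ => (0:ℂ)) (II (tauC^n * star (pC Λ))) := hsc h2 (fun j => (f2 j).symm)
    exact this.unique hasSum_zero
  have h1' : HasSum (fun j : ℕ => if j+1 = n then lam Λ (j+1) else 0) (II (tauC^n * pC Λ)) :=
    hsc h1 (fun j => (f1 j).symm)
  rw [e, map_add, map_add, h2', add_zero]
  rcases n with _ | n
  · have : HasSum (fun j : ℕ => if j+1 = 0 then lam Λ (j+1) else 0) (0:ℂ) := by simp [hasSum_zero]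
    rw [h1'.unique this, pow_zero, hD.one, add_zero]
    have := II_fourier 0
    rw [if_pos rfl] at this
    rw [← this]; congr 1; ext x; simp
  · have : HasSum (fun j : ℕ => if j+1 = n+1 then lam Λ (j+1) else 0) (lam Λ (n+1)) := by
      have := hasSum_ite_eq n (lam Λ (n+1))
      refine hsc this (fun j => ?_)
      by_cases hj : j = n
      · simp [hj]
      · simp [hj]
    rw [h1'.unique this, tauC_pow, II_fourier, if_neg (by omega), zero_add]
    unfold lam; rw [tauC_pow]

theorem mean_formula {t : ℝ} {Λ} (hD : Dat t Λ) (g : C(XX,ℂ)) : II (g * wC Λ) = Λ g := by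
  let A : C(XX,ℂ) →L[ℂ] ℂ := II.comp ((ContinuousLinearMap.mul ℂ C(XX,ℂ)).flip (wC Λ))
  have hA : ∀ g, A g = II (g * wC Λ) := fun g => rfl
  rw [← hA]
  have hst : star (wC Λ) = wC Λ := by unfold wC; simp only [star_add, star_one, star_star]; ring
  have hk : ∀ k : ℤ, A (fourier k) = Λ (fourier k) := by
    intro k
    rcases le_or_gt k 0 with h | h
    · obtain ⟨n, hn⟩ := Int.eq_ofNat_of_zero_le (show 0 ≤ -k by omega)
      have : k = -(n:ℤ) := by omega
      rw [hA, this, ← tauC_pow]; exact mean_pos hD n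
    · obtain ⟨n, hn⟩ := Int.eq_ofNat_of_zero_le h.le
      rw [hA, hn, ← tauC_star_pow, ← star_pow, hD.str, ← mean_pos hD n, ← II_star, star_mul, hst, mul_comm (wC Λ)]
  have hc : IsClosed {g : C(XX,ℂ) | A g = Λ g} := isClosed_eq A.continuous Λ.continuous
  have hsub : ((Submodule.span ℂ (Set.range (@fourier (2*Real.pi)))).topologicalClosure : Set C(XX,ℂ)) ⊆ {g | A g = Λ g} := by
    apply hc.closure_subset_iff.2
    have : Submodule.span ℂ (Set.range (@fourier (2*Real.pi))) ≤ LinearMap.eqLocus A.toLinearMap Λ.toLinearMap := by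
      rw [Submodule.span_le]
      rintro _ ⟨k, rfl⟩
      exact hk k
    exact this
  apply hsub
  rw [span_fourier_closure_eq_top]; trivial

end SecPN

section SecPO

open Complex ComplexConjugate MeasureTheory
open scoped ContDiff

lemma exists_R {t : ℝ} (ht : 0 < t) (ht1 : t < Real.sqrt 3/2) : ∃ R : ℝ, 1 < R ∧ t*(1+R) < Real.sqrt 3 := by
  obtain ⟨R, h1, h2⟩ := exists_between (show 1 < Real.sqrt 3/t - 1 by rw [lt_sub_iff_add_lt, lt_div_iff₀ ht]; linarith)
  refine ⟨R, h1, ?_⟩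
  rw [lt_sub_iff_add_lt, lt_div_iff₀ ht] at h2; linarith

noncomputable def cb (β : ℝ) : ℂ := exp (-(β*I))

lemma cb_norm (β : ℝ) : ‖cb β‖ = 1 := by
  unfold cb; rw [Complex.norm_exp]; simp

lemma cb_tau (β : ℝ) : tauC (β : XX) = cb β := by
  rw [tauC, fourier_coe_apply, cb]
  congr 1
  push_cast
  field_simp

lemma cb_AA {R : ℝ} (hR : 1 < R) (β : ℝ) : cb β ∈ AA R := by
  rw [AA, Set.mem_ofPred_eq, cb_norm]; exact ⟨inv_lt_one_of_one_lt₀ hR, hR⟩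

lemma cb_smooth {R : ℝ} (hR : 1 < R) {f : ℂ → ℂ} (hf : DifferentiableOn ℂ f (AA R)) :
    ContDiff ℝ ∞ (fun β => f (cb β)) := by
  rw [contDiff_iff_contDiffAt]
  intro β
  have h1 : ContDiffAt ℂ ∞ f (cb β) := (hf.analyticAt ((AA_open R).mem_nhds (cb_AA hR β))).contDiffAt
  have h2 : ContDiffAt ℝ ∞ cb β := by
    have : ContDiff ℝ ∞ cb := by
      unfold cb
      exact ((Complex.ofRealCLM.contDiff.mul contDiff_const).neg).cexp
    exact this.contDiffAt
  exact (h1.restrict_scalars ℝ).comp β h2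

lemma E_diffOn {t R : ℝ} {Λ} (hD : Dat t Λ) (hR : 1 < R) (hR1 : t*(1+R) < Real.sqrt 3) :
    DifferentiableOn ℂ (Ef Λ t) (AA R) := fun _ hσ => (E_deriv hD hR hR1 hσ).differentiableAt.differentiableWithinAt

lemma w_diffOn {t R : ℝ} {Λ} (hD : Dat t Λ) (hR : 1 < R) (hR1 : t*(1+R) < Real.sqrt 3) :
    DifferentiableOn ℂ (wf Λ t) (AA R) := by
  have h1 := (E_diffOn hD hR hR1).deriv (AA_open R)
  have h2 : DifferentiableOn ℂ (fun σ => σ*(1+t*σ)^2/Qf t σ - σ*deriv (Ef Λ t) σ) (AA R) := by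
    refine DifferentiableOn.sub (DifferentiableOn.div (by fun_prop) ?_ ?_) (differentiableOn_id.mul h1)
    · exact fun σ _ => (Q_deriv t σ).hasDerivAt.differentiableAt.differentiableWithinAt
    · intro σ hσ
      obtain ⟨f0, f1, -⟩ := AA_facts hD.ht hD.ht1 hR hR1 hσ
      exact Q_ne hD.ht f0 f1
  refine h2.congr (fun σ hσ => ?_)
  obtain ⟨f0, f1, -⟩ := AA_facts hD.ht hD.ht1 hR hR1 hσ
  rw [(E_deriv hD hR hR1 hσ).deriv]
  field_simp
  ring

noncomputable def etaF (Λ : C(XX, ℂ) →L[ℂ] ℂ) (t : ℝ) (σ : ℂ) : ℂ := exp (Ef Λ t σ) / Qf t σ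

lemma eta_deriv {t R : ℝ} {Λ} (hD : Dat t Λ) (hR : 1 < R) (hR1 : t*(1+R) < Real.sqrt 3) {σ : ℂ} (hσ : σ ∈ AA R) :
    HasDerivAt (etaF Λ t) (-wf Λ t σ/σ * etaF Λ t σ) σ := by
  obtain ⟨f0, f1, -⟩ := AA_facts hD.ht hD.ht1 hR hR1 hσ
  have hQ := Q_ne hD.ht f0 f1
  refine ((E_deriv hD hR hR1 hσ).cexp.div (Q_deriv t σ).hasDerivAt hQ).congr_deriv ?_
  unfold etaF
  field_simp
  ring

lemma Hs_deriv {t R : ℝ} {Λ} (hD : Dat t Λ) (hR : 1 < R) (hR1 : t*(1+R) < Real.sqrt 3) {s : ℂ} (hs : exp s ∈ AA R) :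
    HasDerivAt (fun s => etaF Λ t (exp s)) (-wf Λ t (exp s) * etaF Λ t (exp s)) s := by
  refine ((eta_deriv hD hR hR1 hs).comp s (Complex.hasDerivAt_exp s)).congr_deriv ?_
  have := Complex.exp_ne_zero s
  field_simp

noncomputable def wr (Λ : C(XX, ℂ) →L[ℂ] ℂ) (t : ℝ) (β : ℝ) : ℝ := (wf Λ t (cb β)).re

lemma wr_eq {t : ℝ} {Λ} (hD : Dat t Λ) (β : ℝ) : wf Λ t (cb β) = (wr Λ t β : ℂ) := by
  unfold wr
  apply Complex.ext
  · simp
  · rw [wf_real hD (cb_norm β)]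
    generalize (cb β)⁻¹*ell Λ (cb β)⁻¹ = m
    simp

lemma wr_smooth {t : ℝ} {Λ} (hD : Dat t Λ) : ContDiff ℝ ∞ (wr Λ t) := by
  obtain ⟨R, hR, hR1⟩ := exists_R hD.ht hD.ht1
  exact Complex.reCLM.contDiff.comp (cb_smooth hR (w_diffOn hD hR hR1))

noncomputable def psi (Λ : C(XX, ℂ) →L[ℂ] ℂ) (t : ℝ) (β : ℝ) : ℝ := ∫ b in (0:ℝ)..β, wr Λ t b

lemma psi_deriv {t : ℝ} {Λ} (hD : Dat t Λ) (β : ℝ) : HasDerivAt (psi Λ t) (wr Λ t β) β :=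
  ((wr_smooth hD).continuous.integral_hasStrictDerivAt 0 β).hasDerivAt

lemma eta_circle {t : ℝ} {Λ} (hD : Dat t Λ) (β : ℝ) : etaF Λ t (cb β) = etaF Λ t 1 * exp (I*psi Λ t β) := by
  obtain ⟨R, hR, hR1⟩ := exists_R hD.ht hD.ht1
  have key : ∀ β : ℝ, HasDerivAt (fun β : ℝ => etaF Λ t (cb β) * exp (-(I*psi Λ t β))) 0 β := by
    intro β
    have h1 : HasDerivAt (fun β : ℝ => -((β:ℂ)*I)) (-I) β := by
      have := ((Complex.ofRealCLM.hasDerivAt (x := β)).mul_const I).neg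
      refine this.congr_deriv ?_
      simp
    have h2 := (Hs_deriv hD hR hR1 (cb_AA hR β)).comp β h1
    have h3 := ((((psi_deriv hD β).ofReal_comp).const_mul I).neg).cexp
    refine (h2.mul h3).congr_deriv ?_
    simp only [Function.comp_apply]
    have := wr_eq hD β
    unfold cb at this
    rw [this]
    ring
  have := is_const_of_deriv_eq_zero (fun β => (key β).differentiableAt) (fun β => (key β).deriv) β 0
  have hp0 : psi Λ t 0 = 0 := by simp [psi]
  have hc0 : cb 0 = 1 := by simp [cb]
  rw [hp0, hc0] at this
  simp at this
  rw [← this, mul_assoc, ← Complex.exp_add]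
  simp

lemma eta_norm {t : ℝ} {Λ} (hD : Dat t Λ) {τ : ℂ} (hτ : ‖τ‖ = 1) : ‖etaF Λ t τ‖ = ‖etaF Λ t 1‖ := by
  obtain ⟨θ, hθ⟩ := (Complex.norm_eq_one_iff τ).1 hτ
  have : τ = cb (-θ) := by rw [cb, ← hθ]; simp
  rw [this, eta_circle hD, norm_mul, Complex.norm_exp]; simp

lemma eta_one {t : ℝ} {Λ} (hD : Dat t Λ) : 0 < ‖etaF Λ t 1‖ := by
  rw [norm_pos_iff, etaF]
  exact div_ne_zero (Complex.exp_ne_zero _) (QC_ne hD.ht hD.ht1 (by simp))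

lemma norm_exp_le (z : ℂ) : ‖exp z‖ ≤ Real.exp ‖z‖ := by
  rw [Complex.norm_exp]; exact Real.exp_le_exp.2 (Complex.re_le_norm z)

lemma eta_le {t R : ℝ} {Λ} (hD : Dat t Λ) (hR : 1 < R) (hR1 : t*(1+R) < Real.sqrt 3) {σ : ℂ} (h1 : 1 ≤ ‖σ‖) (h2 : ‖σ‖ < R) :
    ‖etaF Λ t σ‖ ≤ ‖etaF Λ t 1‖ := by
  rcases h1.eq_or_lt with h | h
  · exact (eta_norm hD h.symm).le
  have ht2 : t < 1 := by have := three_lt; have := hD.ht1; linarith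
  obtain ⟨ε, hε, happ⟩ := EN_approx hD hR hR1
  have hb : ∀ N, ‖etaF Λ t σ‖ ≤ ‖etaF Λ t 1‖ * Real.exp (ε N) * Real.exp (ε N) := by
    intro N
    have hsplit : ∀ σ : ℂ, (Qf t σ)⁻¹ * exp (EN Λ t N (Qf t σ)⁻¹) = etaF Λ t σ * exp (EN Λ t N (Qf t σ)⁻¹ - Ef Λ t σ) := by
      intro σ
      rw [Complex.exp_sub, etaF]; field_simp [Complex.exp_ne_zero]
    have h3 := MP hD.ht ht2 (fun c => c * exp (EN Λ t N c)) (by have := EN_diff Λ t N; fun_prop) (‖etaF Λ t 1‖ * Real.exp (ε N))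
      (by
        intro τ hτ
        simp only [hsplit]
        rw [norm_mul, eta_norm hD hτ]
        gcongr
        refine (norm_exp_le _).trans (Real.exp_le_exp.2 ?_)
        exact happ N τ hτ.ge (by rw [hτ]; exact hR)) (Om_out hD.ht h (by nlinarith [hD.ht]))
    have h4 : etaF Λ t σ = (Qf t σ)⁻¹ * exp (EN Λ t N (Qf t σ)⁻¹) * exp (-(EN Λ t N (Qf t σ)⁻¹ - Ef Λ t σ)) := by
      rw [hsplit, mul_assoc, ← Complex.exp_add]; simp
    rw [h4, norm_mul]
    refine mul_le_mul h3 ?_ (norm_nonneg _) (by positivity)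
    refine (norm_exp_le _).trans (Real.exp_le_exp.2 ?_)
    rw [norm_neg]; exact happ N σ h1 h2
  have hlim : Filter.Tendsto (fun N => ‖etaF Λ t 1‖ * Real.exp (ε N) * Real.exp (ε N)) Filter.atTop (nhds (‖etaF Λ t 1‖)) := by
    have h5 := (Real.continuous_exp.tendsto 0).comp hε
    have := (h5.const_mul ‖etaF Λ t 1‖).mul h5
    simpa using this
  exact ge_of_tendsto' hlim hb

lemma wr_nonzero {t : ℝ} {Λ} (hD : Dat t Λ) : ∃ β, wr Λ t β ≠ 0 := by
  by_contra hc
  push Not at hc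
  have h := mean_formula hD 1
  have : wC Λ = 0 := by
    ext x
    obtain ⟨β, rfl⟩ := QuotientAddGroup.mk_surjective x
    have := wC_apply hD (β : XX)
    rw [cb_tau, wr_eq hD, hc] at this
    simpa using this
  rw [this, hD.one] at h
  simp at h

lemma eta_lt {t R : ℝ} {Λ} (hD : Dat t Λ) (hR : 1 < R) (hR1 : t*(1+R) < Real.sqrt 3) {σ : ℂ} (h1 : 1 < ‖σ‖) (h2 : ‖σ‖ < R) :
    ‖etaF Λ t σ‖ < ‖etaF Λ t 1‖ := by
  refine lt_of_le_of_ne (eta_le hD hR hR1 h1.le h2) (fun heq => ?_)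
  have hR0 : 0 < R := by linarith
  have hσ0 : σ ≠ 0 := by rintro rfl; simp at h1; linarith
  let S : Set ℂ := {s | 0 < s.re ∧ s.re < Real.log R}
  have hSmem : ∀ s ∈ S, 1 < ‖exp s‖ ∧ ‖exp s‖ < R := by
    rintro s ⟨a, b⟩
    rw [Complex.norm_exp]
    exact ⟨by rwa [Real.one_lt_exp_iff], by rwa [← Real.lt_log_iff_exp_lt hR0]⟩
  have hSA : ∀ s ∈ S, exp s ∈ AA R := fun s hs => ⟨(inv_lt_one_of_one_lt₀ hR).trans (hSmem s hs).1, (hSmem s hs).2⟩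
  have hSo : IsOpen S := (isOpen_lt continuous_const Complex.continuous_re).inter (isOpen_lt Complex.continuous_re continuous_const)
  have hSc : Convex ℝ S := by
    have : S = Complex.reLm ⁻¹' (Set.Ioo 0 (Real.log R)) := rfl
    rw [this]; exact (convex_Ioo _ _).linear_preimage _
  have hmem : Complex.log σ ∈ S := by
    refine ⟨?_, ?_⟩ <;> rw [Complex.log_re]
    · exact Real.log_pos h1
    · exact Real.log_lt_log (by linarith) h2
  have hmax : IsMaxOn (norm ∘ fun s => etaF Λ t (exp s)) S (Complex.log σ) := by
    intro s hs
    simp only [Set.mem_ofPred_eq, Function.comp_apply]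
    rw [Complex.exp_log hσ0, heq]
    exact eta_le hD hR hR1 (hSmem s hs).1.le (hSmem s hs).2
  have hconst := Complex.eqOn_of_isPreconnected_of_isMaxOn_norm hSc.isPreconnected hSo
    (fun s hs => (Hs_deriv hD hR hR1 (hSA s hs)).differentiableAt.differentiableWithinAt) hmem hmax
  obtain ⟨β, hβ⟩ := wr_nonzero hD
  apply hβ
  have hline : ∀ b : ℝ, etaF Λ t (cb b) = etaF Λ t (exp (Complex.log σ)) := by
    intro b
    have hcont : ContinuousAt (fun s => etaF Λ t (exp s)) (-(b*I)) := (Hs_deriv hD hR hR1 (cb_AA hR b)).continuousAt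
    have hcl : (-(b*I) : ℂ) ∈ closure S := by
      rw [Metric.mem_closure_iff]
      intro e he
      have hl : 0 < Real.log R := Real.log_pos hR
      refine ⟨-(b*I) + ((min e (Real.log R)/2 : ℝ):ℂ), ⟨?_, ?_⟩, ?_⟩
      · simp; exact ⟨he, hl⟩
      · simp; have := min_le_right e (Real.log R); linarith
      · rw [dist_eq_norm]
        simp only [sub_add_cancel_left, norm_neg, Complex.norm_real]
        rw [Real.norm_of_nonneg (by positivity)]
        have := min_le_left e (Real.log R); linarith
    have := hcont.mono_left (nhdsWithin_le_nhds (s := S))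
    have hne : (nhdsWithin (-(b*I) : ℂ) S).NeBot := mem_closure_iff_nhdsWithin_neBot.1 hcl
    refine tendsto_nhds_unique this ?_
    refine tendsto_const_nhds.congr' ?_
    filter_upwards [self_mem_nhdsWithin] with s hs
    exact (hconst hs).symm
  have h1 : HasDerivAt (fun β : ℝ => -((β:ℂ)*I)) (-I) β := by
    have := ((Complex.ofRealCLM.hasDerivAt (x := β)).mul_const I).neg
    refine this.congr_deriv ?_
    simp
  have hd := (Hs_deriv hD hR hR1 (cb_AA hR β)).comp β h1
  have hd2 : HasDerivAt ((fun s => etaF Λ t (exp s)) ∘ fun β : ℝ => -((β:ℂ)*I)) 0 β := by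
    have : ((fun s => etaF Λ t (exp s)) ∘ fun β : ℝ => -((β:ℂ)*I)) = fun _ => etaF Λ t (exp (Complex.log σ)) := by
      funext b; exact hline b
    rw [this]; exact hasDerivAt_const _ _
  have := hd.unique hd2
  have hw := wr_eq hD β
  have he := eta_one hD
  rw [← eta_norm hD (cb_norm β), norm_pos_iff] at he
  unfold cb at hw he
  rw [hw] at this
  simpa [he] using this

end SecPO

section SecPP

open Complex ComplexConjugate MeasureTheory
open scoped ContDiff

lemma ann_bound {t R : ℝ} {Λ} (hD : Dat t Λ) (hR : 1 < R) (hR1 : t*(1+R) < Real.sqrt 3) :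
    ∃ R1 > 1, R1 < R ∧ ∃ m : ℕ, 0 < m ∧ ∀ σ : ℂ, 1 ≤ ‖σ‖ → ‖σ‖ ≤ R1 → ‖(etaF Λ t σ)^m * σ‖ ≤ ‖etaF Λ t 1‖^m := by
  obtain ⟨R1, h1, h2⟩ := exists_between hR
  have hR10 : 0 < R1 := by linarith
  have hdiff : ∀ σ : ℂ, 1 ≤ ‖σ‖ → ‖σ‖ ≤ R1 → DifferentiableAt ℂ (etaF Λ t) σ := fun σ a b =>
    (eta_deriv hD hR hR1 (σ := σ) ⟨(inv_lt_one_of_one_lt₀ hR).trans_le a, b.trans_lt h2⟩).differentiableAt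
  have hC := eta_one hD
  obtain ⟨σ0, hσ0, hmax⟩ := (isCompact_sphere (0:ℂ) R1).exists_isMaxOn (NormedSpace.sphere_nonempty.2 hR10.le)
    (f := fun σ => ‖etaF Λ t σ‖) (fun σ hσ => by
      have : ‖σ‖ = R1 := by simpa using hσ
      exact ((hdiff σ (by linarith) (by linarith)).continuousAt.norm).continuousWithinAt)
  have hn0 : ‖σ0‖ = R1 := by simpa using hσ0
  have hlt := eta_lt hD hR hR1 (σ := σ0) (by linarith) (by linarith)
  set a := ‖etaF Λ t σ0‖
  set C := ‖etaF Λ t 1‖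
  have ha : 0 ≤ a := norm_nonneg _
  obtain ⟨m, hm⟩ := exists_pow_lt_of_lt_one (inv_pos.2 hR10) ((div_lt_one hC).2 hlt)
  have hm0 : 0 < m := by
    rcases Nat.eq_zero_or_pos m with h | h
    · subst h
      rw [pow_zero] at hm
      exact absurd hm (not_lt.2 (inv_le_one_of_one_le₀ h1.le))
    · exact h
  have hm2 : a^m * R1 ≤ C^m := by
    rw [div_pow, div_lt_iff₀ (by positivity), inv_mul_eq_div, lt_div_iff₀ hR10] at hm
    exact hm.le
  refine ⟨R1, h1, h2, m, hm0, fun σ hσ1 hσ2 => ?_⟩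
  let V : Set ℂ := {σ | 1 < ‖σ‖ ∧ ‖σ‖ < R1}
  have hVo : IsOpen V := (isOpen_lt continuous_const continuous_norm).inter (isOpen_lt continuous_norm continuous_const)
  have hVc : closure V ⊆ {σ | 1 ≤ ‖σ‖ ∧ ‖σ‖ ≤ R1} := closure_minimal (fun σ h => ⟨h.1.le, h.2.le⟩)
    ((isClosed_le continuous_const continuous_norm).inter (isClosed_le continuous_norm continuous_const))
  have hbd : ∀ z : ℂ, (‖z‖ = 1 ∨ ‖z‖ = R1) → ‖(etaF Λ t z)^m * z‖ ≤ C^m := by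
    rintro z (hz | hz)
    · rw [norm_mul, norm_pow, eta_norm hD hz, hz, mul_one]
    · rw [norm_mul, norm_pow, hz]
      refine le_trans ?_ hm2
      have : ‖etaF Λ t z‖ ≤ a := hmax (by simpa using hz)
      gcongr
  by_cases hin : σ ∈ V
  · refine Complex.norm_le_of_forall_mem_frontier_norm_le (U := V) (f := fun z => (etaF Λ t z)^m * z) ?_ ?_ ?_ (subset_closure hin)
    · exact (Metric.isBounded_ball (x := (0:ℂ)) (r := R1)).subset (fun z hz => by simpa using hz.2)
    · refine ⟨fun z hz => ?_, fun z hz => ?_⟩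
      · exact (((hdiff z hz.1.le hz.2.le).pow m).mul differentiableAt_id).differentiableWithinAt
      · have := hVc hz
        exact (((hdiff z this.1 this.2).pow m).mul differentiableAt_id).continuousAt.continuousWithinAt
    · intro z hz
      have hz1 := hVc hz.1
      have hz2 : z ∉ V := by rw [← hVo.interior_eq]; exact hz.2
      apply hbd
      by_contra hcon
      push Not at hcon
      exact hz2 ⟨lt_of_le_of_ne hz1.1 (Ne.symm hcon.1), lt_of_le_of_ne hz1.2 hcon.2⟩
  · apply hbd
    by_contra hcon
    push Not at hcon
    exact hin ⟨lt_of_le_of_ne hσ1 (Ne.symm hcon.1), lt_of_le_of_ne hσ2 hcon.2⟩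

theorem wr_pos {t : ℝ} {Λ} (hD : Dat t Λ) : ∃ c > 0, ∀ β, c ≤ wr Λ t β := by
  obtain ⟨R, hR, hR1⟩ := exists_R hD.ht hD.ht1
  obtain ⟨R1, h1, h2, m, hm, hb⟩ := ann_bound hD hR hR1
  have hm' : (0:ℝ) < m := by exact_mod_cast hm
  refine ⟨1/m, by positivity, fun β => ?_⟩
  have he := eta_one hD
  have hne : etaF Λ t (cb β) ≠ 0 := by rw [← norm_pos_iff, eta_norm hD (cb_norm β)]; exact he
  have hlin : HasDerivAt (fun x : ℝ => (x:ℂ) + -(β*I)) 1 0 := by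
    have := (Complex.ofRealCLM.hasDerivAt (x := 0)).add_const (-(β*I) : ℂ)
    exact this.congr_deriv (by simp)
  have hcb : exp (((0:ℝ):ℂ) + -(β*I)) = cb β := by simp [cb]
  have hH := (Hs_deriv hD hR hR1 (s := ((0:ℝ):ℂ) + -(β*I)) (by rw [hcb]; exact cb_AA hR β)).comp (0:ℝ) hlin
  rw [hcb, wr_eq hD] at hH
  have hex : HasDerivAt (fun x : ℝ => exp (x:ℂ)) 1 0 := by
    have := (Complex.ofRealCLM.hasDerivAt (x := 0)).cexp
    exact this.congr_deriv (by simp)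
  have hJ := ((hH.div_const (etaF Λ t (cb β))).pow m).mul hex
  have hJ2 := (Complex.reCLM.hasFDerivAt.comp_hasDerivAt (0:ℝ) hJ)
  have hJ3 : HasDerivAt (fun x : ℝ => ((etaF Λ t (exp ((x:ℂ) + -(β*I))) / etaF Λ t (cb β))^m * exp (x:ℂ)).re) (1 - m * wr Λ t β) 0 := by
    refine hJ2.congr_deriv ?_
    simp only [Function.comp_apply, hcb, Complex.reCLM_apply, Pi.pow_apply]
    rw [div_self hne]
    simp only [one_pow, mul_one, Complex.ofReal_zero, Complex.exp_zero]
    rw [mul_div_assoc, div_self hne]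
    simp
    ring
  have hle : 1 - m * wr Λ t β ≤ 0 := by
    refine le_of_tendsto hJ3.tendsto_slope_zero_right ?_
    have hlog : 0 < Real.log R1 := Real.log_pos h1
    filter_upwards [Ioo_mem_nhdsGT hlog] with x hx
    rw [smul_eq_mul]
    apply mul_nonpos_of_nonneg_of_nonpos (inv_nonneg.2 hx.1.le)
    rw [sub_nonpos, zero_add, hcb, div_self hne]
    simp only [one_pow, Complex.ofReal_zero, Complex.exp_zero, one_mul, Complex.one_re]
    refine (Complex.re_le_norm _).trans ?_
    have hnx : ‖exp ((x:ℂ) + -(β*I))‖ = Real.exp x := by rw [Complex.norm_exp]; simp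
    have := hb (exp ((x:ℂ) + -(β*I))) (by rw [hnx]; exact Real.one_le_exp hx.1.le) (by
      rw [hnx, ← Real.le_log_iff_exp_le (by linarith)]; exact hx.2.le)
    rw [norm_mul, norm_pow, norm_div, eta_norm hD (cb_norm β), div_pow, div_mul_eq_mul_div, div_le_one (by positivity)]
    rw [norm_mul, norm_pow, hnx] at this
    rw [Complex.norm_exp, Complex.ofReal_re]
    exact this
  rw [div_le_iff₀ hm']; linarith

end SecPP

section SecPQ

open Complex ComplexConjugate MeasureTheory
open scoped ContDiff

noncomputable def fc (h : ℝ → ℂ) (n : ℤ) : ℂ := ∫ x in (0:ℝ)..2*Real.pi, h x * exp (-(n*x*I))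

lemma exp_per (n : ℤ) : exp (-(n*((2*Real.pi:ℝ):ℂ)*I)) = 1 := by
  rw [Complex.exp_eq_one_iff]; exact ⟨-n, by push_cast; ring⟩

lemma ker_deriv (n : ℤ) (x : ℝ) : HasDerivAt (fun x : ℝ => exp (-(n*(x:ℂ)*I))) (-(n*I)*exp (-(n*x*I))) x := by
  have := ((((Complex.ofRealCLM.hasDerivAt (x := x)).const_mul (n:ℂ)).mul_const I).neg).cexp
  refine this.congr_deriv ?_
  simp
  ring

lemma fc_deriv {h h' : ℝ → ℂ} (hd : ∀ x, HasDerivAt h (h' x) x) (hc : Continuous h') (hp : h (2*Real.pi) = h 0) (n : ℤ) :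
    fc h' n = n*I*fc h n := by
  have hk : Continuous (fun x : ℝ => exp (-(n*(x:ℂ)*I))) := by fun_prop
  have := intervalIntegral.integral_deriv_mul_eq_sub (a := 0) (b := 2*Real.pi) (fun x _ => hd x) (fun x _ => ker_deriv n x)
    (hc.intervalIntegrable _ _) ((continuous_const.mul hk).intervalIntegrable _ _)
  rw [exp_per, hp] at this
  have hh : Continuous h := continuous_iff_continuousAt.2 fun x => (hd x).continuousAt
  have i1 : IntervalIntegrable (fun x : ℝ => h' x * exp (-(n*(x:ℂ)*I))) volume 0 (2*Real.pi) := (hc.mul hk).intervalIntegrable _ _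
  have i2 : IntervalIntegrable (fun x : ℝ => h x * (-(n*I)*exp (-(n*(x:ℂ)*I)))) volume 0 (2*Real.pi) :=
    (hh.mul (continuous_const.mul hk)).intervalIntegrable _ _
  rw [intervalIntegral.integral_add i1 i2] at this
  have e2 : (∫ x in (0:ℝ)..2*Real.pi, h x * (-(n*I)*exp (-(n*(x:ℂ)*I)))) = -(n*I) * fc h n := by
    rw [fc, ← intervalIntegral.integral_const_mul]; congr 1; funext x; ring
  rw [e2] at this
  simp only [Complex.ofReal_zero, mul_zero, zero_mul, neg_zero, Complex.exp_zero, mul_one, sub_self] at this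
  unfold fc at *
  linear_combination this

lemma fc_bound {h : ℝ → ℂ} (hc : Continuous h) : ∃ M, ∀ n, ‖fc h n‖ ≤ M := by
  obtain ⟨M, hM⟩ := (isCompact_Icc (a := (0:ℝ)) (b := 2*Real.pi)).exists_bound_of_continuousOn hc.continuousOn
  refine ⟨M * |2*Real.pi - 0|, fun n => ?_⟩
  refine intervalIntegral.norm_integral_le_of_norm_le_const (fun x hx => ?_)
  rw [Set.uIoc_of_le (by positivity)] at hx
  rw [norm_mul, Complex.norm_exp]
  simpa using hM x ⟨hx.1.le, hx.2⟩

theorem hardy {h h1 h2 : ℝ → ℂ} (hd1 : ∀ x, HasDerivAt h (h1 x) x) (hd2 : ∀ x, HasDerivAt h1 (h2 x) x)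
    (hc : Continuous h2) (hp : Function.Periodic h (2*Real.pi)) (hp1 : Function.Periodic h1 (2*Real.pi))
    (hneg : ∀ n : ℕ, fc h (-(n+1:ℕ)) = 0) :
    ∃ H : ℂ → ℂ, DiffContOnCl ℂ H (Metric.ball 0 1) ∧ ∀ x : ℝ, H (exp (x*I)) = h x := by
  have hh : Continuous h := continuous_iff_continuousAt.2 fun x => (hd1 x).continuousAt
  have hh1 : Continuous h1 := continuous_iff_continuousAt.2 fun x => (hd2 x).continuousAt
  obtain ⟨M, hM⟩ := fc_bound hc
  have hp0 : h (2*Real.pi) = h 0 := by simpa using hp 0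
  have hp10 : h1 (2*Real.pi) = h1 0 := by simpa using hp1 0
  have hdec : ∀ n : ℤ, n ≠ 0 → ‖fc h n‖ ≤ M * (1/(n:ℝ)^2) := by
    intro n hn
    have e : fc h2 n = -(n:ℂ)^2 * fc h n := by
      rw [fc_deriv hd2 hc hp10, fc_deriv hd1 hh1 hp0]; linear_combination (n:ℂ)^2 * fc h n * I_sq
    have := hM n
    rw [e, norm_mul, norm_neg, norm_pow, Complex.norm_intCast] at this
    have hn' : (0:ℝ) < (n:ℝ)^2 := by positivity
    rw [sq_abs] at this
    rw [mul_one_div, le_div_iff₀ hn']; linarith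
  let f : C(XX, ℂ) := ⟨hp.lift, by
    refine continuous_quot_lift _ hh⟩
  have hcoef : ∀ n : ℤ, fourierCoeff f n = (1/(2*Real.pi) : ℝ) * fc h n := by
    intro n
    rw [fourierCoeff_eq_intervalIntegral f n 0, fc, zero_add, Complex.real_smul]
    congr 1
    apply intervalIntegral.integral_congr
    intro x _
    simp only [smul_eq_mul]
    rw [mul_comm, fourier_coe_apply]
    congr 1
    congr 1
    push_cast
    field_simp
  have hsum : Summable (fourierCoeff f) := by
    refine Summable.of_norm_bounded_eventually (g := fun n : ℤ => (1/(2*Real.pi)) * (M*(1/(n:ℝ)^2)))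
      (((Real.summable_one_div_int_pow.2 (by norm_num : 1 < 2)).mul_left M).mul_left _) ?_
    filter_upwards [(Set.finite_singleton (0:ℤ)).compl_mem_cofinite] with n hn
    rw [hcoef, norm_mul, Complex.norm_real, Real.norm_of_nonneg (by positivity)]
    gcongr
    exact hdec n hn
  have hnegc : ∀ n : ℕ, fourierCoeff f (-(n+1:ℕ)) = 0 := fun n => by rw [hcoef, hneg, mul_zero]
  let a : ℕ → ℂ := fun n => fourierCoeff f n
  have ha : Summable a := hsum.comp_injective Nat.cast_injective
  have hHsum : ∀ x : ℝ, HasSum (fun n : ℕ => a n * exp (x*I)^n) (h x) := by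
    intro x
    have h3 := has_pointwise_sum_fourier_series_of_summable hsum (x : XX)
    have h4 : HasSum (fun n : ℤ => fourierCoeff f n • fourier n (x:XX)) (h x) := h3
    have h5 := (Function.Injective.hasSum_iff (Nat.cast_injective (R := ℤ)) (f := fun n : ℤ => fourierCoeff f n • fourier n (x:XX)) (a := h x) ?_).2 h4
    · refine hsc h5 (fun n => ?_)
      simp only [Function.comp_apply, smul_eq_mul, a]
      congr 1
      rw [fourier_coe_apply, ← Complex.exp_nat_mul]
      congr 1
      push_cast
      field_simp
    · intro n hn
      obtain ⟨k, rfl⟩ : ∃ k : ℕ, n = -(k+1:ℕ) := by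
        rcases n with k | k
        · exact absurd ⟨k, rfl⟩ hn
        · exact ⟨k, rfl⟩
      rw [hnegc]; simp
  have hcont : ContinuousOn (fun z => ∑' n, a n * z^n) (Metric.closedBall 0 1) := by
    refine continuousOn_tsum (fun n => by fun_prop) ha.norm (fun n z hz => ?_)
    have : ‖z‖ ≤ 1 := by simpa using hz
    rw [norm_mul, norm_pow]
    exact mul_le_of_le_one_right (norm_nonneg _) (pow_le_one₀ (norm_nonneg _) this)
  refine ⟨fun z => ∑' n, a n * z^n, ⟨?_, ?_⟩, fun x => (hHsum x).tsum_eq⟩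
  · refine differentiableOn_tsum_of_summable_norm ha.norm (fun n => by fun_prop) Metric.isOpen_ball (fun n z hz => ?_)
    have : ‖z‖ < 1 := by simpa using hz
    rw [norm_mul, norm_pow]
    exact mul_le_of_le_one_right (norm_nonneg _) (pow_le_one₀ (norm_nonneg _) this.le)
  · rw [closure_ball _ (by norm_num)]; exact hcont

end SecPQ

section SecPR

open Complex ComplexConjugate MeasureTheory
open scoped ContDiff

lemma per_deriv {E : Type*} [NormedAddCommGroup E] [NormedSpace ℝ E] {f : ℝ → E} {c : ℝ} (hf : Function.Periodic f c) :
    Function.Periodic (deriv f) c := by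
  intro x
  rw [← deriv_comp_add_const]
  congr 1
  funext y; exact hf y

lemma per_bound {E : Type*} [NormedAddCommGroup E] {f : ℝ → E} (hf : Function.Periodic f (2*Real.pi)) (hc : Continuous f) :
    ∃ M, ∀ x, ‖f x‖ ≤ M := by
  obtain ⟨M, hM⟩ := (hf.isBounded_of_continuous (by positivity) hc).exists_norm_le
  exact ⟨M, fun x => hM _ ⟨x, rfl⟩⟩

lemma LC_of_smooth {h : ℝ → ℝ} (hs : ContDiff ℝ ∞ h) (hp : Function.Periodic h (2*Real.pi)) :
    LC (fun s => ((h (Complex.arg s) : ℝ) : ℂ)) := by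
  obtain ⟨M1, hM1⟩ := per_bound hp hs.continuous
  obtain ⟨M2, hM2⟩ := per_bound (per_deriv hp) (contDiff_infty_iff_deriv.1 hs).2.continuous
  have m1 : 0 ≤ M1 := (norm_nonneg _).trans (hM1 0)
  have m2 : 0 ≤ M2 := (norm_nonneg _).trans (hM2 0)
  have hpi := Real.pi_pos
  refine ⟨M1 + M2*(Real.pi/2), fun s s' h1 h2 => ?_⟩
  have hb : ∀ x, ‖((h x : ℝ) : ℂ)‖ ≤ M1 + M2*(Real.pi/2) := fun x => by
    rw [Complex.norm_real]
    have := hM1 x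
    have : 0 ≤ M2*(Real.pi/2) := by positivity
    linarith
  refine ⟨hb _, hb _, ?_⟩
  have hs0 : s ≠ 0 := by rintro rfl; simp at h1
  have hs0' : s' ≠ 0 := by rintro rfl; simp at h2
  set θ := Complex.arg (s'/s)
  have e1 : exp (Complex.arg s * I) = s := by have := Complex.norm_mul_exp_arg_mul_I s; rwa [h1, Complex.ofReal_one, one_mul] at this
  have e2 : exp (Complex.arg s' * I) = s' := by have := Complex.norm_mul_exp_arg_mul_I s'; rwa [h2, Complex.ofReal_one, one_mul] at this
  have e3 : exp (θ * I) = s'/s := by have := Complex.norm_mul_exp_arg_mul_I (s'/s); rwa [norm_div, h1, h2, div_one, Complex.ofReal_one, one_mul] at this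
  have e4 : exp (Complex.arg s' * I) = exp (((Complex.arg s + θ : ℝ):ℂ) * I) := by
    push_cast; rw [add_mul, Complex.exp_add, e1, e2, e3]; field_simp
  obtain ⟨n, hn⟩ := Complex.exp_eq_exp_iff_exists_int.1 e4
  have hn2 : Complex.arg s' = Complex.arg s + θ + n * (2*Real.pi) := by
    have := congrArg Complex.im hn
    simpa using this
  have e5 : h (Complex.arg s') = h (Complex.arg s + θ) := by
    rw [hn2]; exact (hp.int_mul n) _
  have hlip : ‖h (Complex.arg s + θ) - h (Complex.arg s)‖ ≤ M2 * ‖(Complex.arg s + θ) - Complex.arg s‖ :=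
    convex_univ.norm_image_sub_le_of_norm_deriv_le (fun x _ => (hs.differentiable (by simp)) x) (fun x _ => hM2 x) trivial trivial
  have hθ : |θ| ≤ Real.pi := Complex.abs_arg_le_pi _
  have hsin := Real.mul_abs_le_abs_sin (x := θ/2) (by rw [abs_div]; norm_num; linarith)
  have hn3 : ‖s - s'‖ = 2*|Real.sin (θ/2)| := by
    have : s - s' = -(s * (exp (I*θ) - 1)) := by rw [mul_comm I, e3]; field_simp; ring
    rw [this, norm_neg, norm_mul, h1, one_mul, Complex.norm_exp_I_mul_ofReal_sub_one, norm_mul]; simp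
  have hθ2 : |θ| ≤ Real.pi/2 * ‖s - s'‖ := by
    rw [hn3]
    rw [abs_div, abs_two, div_mul_eq_mul_div, div_le_iff₀ hpi] at hsin
    nlinarith
  rw [← Complex.ofReal_sub, Complex.norm_real, e5, ← norm_neg, neg_sub]
  refine hlip.trans ?_
  rw [add_sub_cancel_left, Real.norm_eq_abs]
  have : M2*|θ| ≤ M2*(Real.pi/2 * ‖s - s'‖) := by gcongr
  have : 0 ≤ M1*‖s-s'‖ := by positivity
  nlinarith

lemma cb_per : Function.Periodic cb (2*Real.pi) := by
  intro β
  unfold cb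
  rw [Complex.exp_eq_exp_iff_exists_int]
  exact ⟨-1, by push_cast; ring⟩

lemma mean_int {t : ℝ} {Λ} (hD : Dat t Λ) (g : C(XX,ℂ)) :
    ∫ β in (0:ℝ)..2*Real.pi, g (β:XX) * (wr Λ t β : ℂ) = 2*Real.pi * Λ g := by
  have h1 := AddCircle.intervalIntegral_preimage (2*Real.pi) 0 (fun x : XX => (g * wC Λ) x)
  rw [← mean_formula hD g, II_apply, AddCircle.integral_haarAddCircle, ← h1, zero_add, Complex.real_smul]
  push_cast
  rw [← mul_assoc, mul_inv_cancel₀ (by exact_mod_cast (by positivity : (2*Real.pi:ℝ) ≠ 0)), one_mul]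
  apply intervalIntegral.integral_congr
  intro x _
  change g (x:XX) * (wr Λ t x : ℂ) = g (x:XX) * wC Λ (x:XX)
  rw [wC_apply hD, cb_tau, wr_eq hD]

lemma wr_per (Λ t) : Function.Periodic (wr Λ t) (2*Real.pi) := fun β => by simp only [wr, cb_per β]

lemma psi_zero (Λ t) : psi Λ t 0 = 0 := by simp [psi]

lemma psi_two_pi {t : ℝ} {Λ} (hD : Dat t Λ) : psi Λ t (2*Real.pi) = 2*Real.pi := by
  have := mean_int hD 1
  rw [hD.one, mul_one] at this
  simp only [ContinuousMap.one_apply, one_mul] at this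
  rw [intervalIntegral.integral_ofReal] at this
  exact_mod_cast this

lemma psi_per {t : ℝ} {Λ} (hD : Dat t Λ) (β : ℝ) : psi Λ t (β + 2*Real.pi) = psi Λ t β + 2*Real.pi := by
  have hc := (wr_smooth hD).continuous
  have h1 := intervalIntegral.integral_add_adjacent_intervals (hc.intervalIntegrable 0 β) (hc.intervalIntegrable β (β+2*Real.pi)) (μ := volume)
  rw [(wr_per Λ t).intervalIntegral_add_eq β 0, zero_add] at h1
  have h2 := psi_two_pi hD
  unfold psi at *
  rw [h2] at h1
  exact h1.symm

lemma psi_smooth {t : ℝ} {Λ} (hD : Dat t Λ) : ContDiff ℝ ∞ (psi Λ t) := by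
  rw [contDiff_infty_iff_deriv]
  refine ⟨fun β => (psi_deriv hD β).differentiableAt, ?_⟩
  rw [show deriv (psi Λ t) = wr Λ t from funext fun β => (psi_deriv hD β).deriv]
  exact wr_smooth hD

theorem psi_inv {t : ℝ} {Λ} (hD : Dat t Λ) : ∃ bt : ℝ → ℝ, ContDiff ℝ ∞ bt ∧ (∀ x, psi Λ t (bt x) = x) ∧ (∀ x, bt (psi Λ t x) = x) := by
  obtain ⟨c, hc, hw⟩ := wr_pos hD
  have hmono : StrictMono (psi Λ t) := strictMono_of_hasDerivAt_pos (psi_deriv hD) (fun x => hc.trans_le (hw x))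
  have hcont := (psi_smooth hD).continuous
  have hper : ∀ (n : ℕ), psi Λ t (n*(2*Real.pi)) = n*(2*Real.pi) ∧ psi Λ t (-(n*(2*Real.pi))) = -(n*(2*Real.pi)) := by
    intro n
    induction n with
    | zero => simp [psi_zero]
    | succ n ih =>
      constructor
      · have := psi_per hD (n*(2*Real.pi))
        rw [ih.1] at this
        push_cast
        rw [add_mul, one_mul, this]
      · have := psi_per hD (-((n+1:ℕ)*(2*Real.pi)))
        rw [show -(((n+1:ℕ):ℝ)*(2*Real.pi)) + 2*Real.pi = -(n*(2*Real.pi)) by push_cast; ring, ih.2] at this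
        push_cast at *
        linarith
  have hpi := Real.pi_gt_three
  have hsurj : Function.Surjective (psi Λ t) := by
    intro y
    obtain ⟨n, hn⟩ := exists_nat_ge |y|
    have h1 : |y| ≤ n*(2*Real.pi) := by nlinarith [abs_nonneg y]
    have := intermediate_value_Icc (show -(n*(2*Real.pi)) ≤ n*(2*Real.pi) by linarith [abs_nonneg y]) hcont.continuousOn
    rw [(hper n).1, (hper n).2] at this
    obtain ⟨x, -, hx⟩ := this (abs_le.1 h1)
    exact ⟨x, hx⟩
  let e := (hmono.orderIsoOfSurjective _ hsurj).toHomeomorph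
  have he : (e : ℝ → ℝ) = psi Λ t := rfl
  refine ⟨e.symm, ?_, fun x => e.apply_symm_apply x, fun x => e.symm_apply_apply x⟩
  exact e.contDiff_symm_deriv (f' := wr Λ t) (fun x => (hc.trans_le (hw x)).ne') (fun x => he ▸ psi_deriv hD x) (he ▸ psi_smooth hD)

end SecPR

section SecPT

open Complex ComplexConjugate MeasureTheory
open scoped ContDiff

noncomputable def ke (Λ : C(XX, ℂ) →L[ℂ] ℂ) (t : ℝ) : ℂ := Complex.log (etaF Λ t 1)⁻¹

noncomputable def ee (Λ : C(XX, ℂ) →L[ℂ] ℂ) (t : ℝ) (β : ℝ) : ℂ := Ef Λ t (cb β) + ke Λ t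

lemma ee_smooth {t : ℝ} {Λ} (hD : Dat t Λ) : ContDiff ℝ ∞ (ee Λ t) := by
  obtain ⟨R, hR, hR1⟩ := exists_R hD.ht hD.ht1
  exact (cb_smooth hR (E_diffOn hD hR hR1)).add contDiff_const

lemma ee_per (Λ t) : Function.Periodic (ee Λ t) (2*Real.pi) := fun β => by simp only [ee, cb_per β]

lemma ee_exp {t : ℝ} {Λ} (hD : Dat t Λ) (β : ℝ) : exp (ee Λ t β) = Qf t (cb β) * exp (I*psi Λ t β) := by
  have h1 := eta_circle hD β
  have h2 := eta_one hD
  rw [norm_pos_iff] at h2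
  have hQ := QC_ne hD.ht hD.ht1 (cb_norm β)
  have h3 : exp (Ef Λ t (cb β)) = etaF Λ t (cb β) * Qf t (cb β) := by
    rw [etaF]; field_simp
  rw [ee, Complex.exp_add, h3, h1, ke, Complex.exp_log (inv_ne_zero h2)]
  field_simp

lemma ee_deriv {t : ℝ} {Λ} (hD : Dat t Λ) (β : ℝ) :
    HasDerivAt (ee Λ t) (-I*(cb β*(1+t*cb β)^2/Qf t (cb β) - wr Λ t β)) β := by
  obtain ⟨R, hR, hR1⟩ := exists_R hD.ht hD.ht1
  have h1 : HasDerivAt cb (-I*cb β) β := by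
    have := (((Complex.ofRealCLM.hasDerivAt (x := β)).mul_const I).neg).cexp
    refine this.congr_deriv ?_
    simp [cb]
    ring
  have h2 := (((E_deriv hD hR hR1 (cb_AA hR β))).comp β h1).add_const (ke Λ t)
  refine h2.congr_deriv ?_
  have : cb β ≠ 0 := Complex.exp_ne_zero _
  rw [wr_eq hD]
  field_simp

noncomputable def qC {t : ℝ} (ht : 0 < t) (ht1 : t < Real.sqrt 3/2) : C(XX,ℂ) :=
  ⟨fun x => (Qf t (tauC x))⁻¹, by
    refine Continuous.inv₀ ?_ (fun x => QC_ne ht ht1 (tauC_norm x))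
    exact (Q_cont t).comp tauC.continuous⟩

noncomputable def EC {t : ℝ} {Λ : C(XX, ℂ) →L[ℂ] ℂ} (hD : Dat t Λ) : C(XX,ℂ) :=
  ⟨fun x => Ef Λ t (tauC x), by
    obtain ⟨R, hR, hR1⟩ := exists_R hD.ht hD.ht1
    refine (E_diffOn hD hR hR1).continuousOn.comp_continuous tauC.continuous (fun x => ?_)
    rw [AA, Set.mem_ofPred_eq, tauC_norm]; exact ⟨inv_lt_one_of_one_lt₀ hR, hR⟩⟩

noncomputable def expC : C(ℂ,ℂ) := ⟨exp, Complex.continuous_exp⟩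

noncomputable def PhiC (q : C(XX,ℂ)) (k : ℂ) (n : ℕ) (a : C(XX,ℂ)) : C(XX,ℂ) :=
  (a + ContinuousMap.const _ k) * (q * expC.comp (a + ContinuousMap.const _ k))^(n+1)

lemma PhiC_cont (q k n) : Continuous (PhiC q k n) := by
  unfold PhiC
  have h1 : Continuous (fun a : C(XX,ℂ) => a + ContinuousMap.const _ k) := continuous_id.add continuous_const
  have h2 : Continuous (fun a : C(XX,ℂ) => expC.comp (a + ContinuousMap.const _ k)) := (ContinuousMap.continuous_postcomp expC).comp h1
  exact h1.mul ((continuous_const.mul h2).pow _)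

lemma Phi_zero {t : ℝ} {Λ} (hD : Dat t Λ) (n : ℕ) : Λ (PhiC (qC hD.ht hD.ht1) (ke Λ t) n (EC hD)) = 0 := by
  obtain ⟨R, hR, hR1⟩ := exists_R hD.ht hD.ht1
  obtain ⟨ε, hε, happ⟩ := EN_approx hD hR hR1
  let a : ℕ → C(XX,ℂ) := fun N => (⟨EN Λ t N, (EN_diff Λ t N).continuous⟩ : C(ℂ,ℂ)).comp (qC hD.ht hD.ht1)
  have hε0 : ∀ N, 0 ≤ ε N := fun N => (norm_nonneg _).trans (happ N 1 (by simp) (by simpa using hR))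
  have ha : Filter.Tendsto a Filter.atTop (nhds (EC hD)) := by
    rw [tendsto_iff_norm_sub_tendsto_zero]
    refine squeeze_zero (fun _ => norm_nonneg _) (fun N => ?_) hε
    rw [ContinuousMap.norm_le _ (hε0 N)]
    intro x
    exact happ N (tauC x) (tauC_norm x).ge (by rw [tauC_norm]; exact hR)
  have hl := (Λ.continuous.tendsto _).comp (((PhiC_cont (qC hD.ht hD.ht1) (ke Λ t) n).tendsto _).comp ha)
  refine tendsto_nhds_unique hl (tendsto_const_nhds.congr (fun N => ?_))
  symm
  refine hD.G (fun c => (EN Λ t N c + ke Λ t) * (c * exp (EN Λ t N c + ke Λ t))^(n+1)) ?_ (by simp) _ (fun x => rfl)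
  have := EN_diff Λ t N
  fun_prop

lemma fourier_zero_E {t : ℝ} {Λ} (hD : Dat t Λ) {bt : ℝ → ℝ} (hbs : ContDiff ℝ ∞ bt) (hb2 : ∀ x, bt (psi Λ t x) = x) (n : ℕ) :
    fc (fun x => ee Λ t (bt x)) (-(n+1:ℕ)) = 0 := by
  have hsub := intervalIntegral.integral_deriv_smul_comp (a := 0) (b := 2*Real.pi) (fun x _ => psi_deriv hD x) (wr_smooth hD).continuous.continuousOn
    (g := fun x : ℝ => ee Λ t (bt x) * exp (-(((-(n+1:ℕ):ℤ):ℂ)*x*I)))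
    (by have h1 := (ee_smooth hD).continuous.comp hbs.continuous
        exact h1.mul (by fun_prop))
  rw [psi_zero, psi_two_pi hD] at hsub
  unfold fc
  rw [← hsub]
  have := mean_int hD (PhiC (qC hD.ht hD.ht1) (ke Λ t) n (EC hD))
  rw [Phi_zero, mul_zero] at this
  rw [← this]
  apply intervalIntegral.integral_congr
  intro x _
  change wr Λ t x • (ee Λ t (bt (psi Λ t x)) * exp (-(((-(n+1:ℕ):ℤ):ℂ)*(psi Λ t x)*I))) =
    (Ef Λ t (tauC (x:XX)) + ke Λ t) * ((Qf t (tauC (x:XX)))⁻¹ * exp (Ef Λ t (tauC (x:XX)) + ke Λ t))^(n+1) * (wr Λ t x:ℂ)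
  rw [hb2, cb_tau]
  have h1 := ee_exp hD x
  have hQ := QC_ne hD.ht hD.ht1 (cb_norm x)
  have h2 : (Qf t (cb x))⁻¹ * exp (ee Λ t x) = exp (I*psi Λ t x) := by rw [h1]; field_simp
  change _ = ee Λ t x * ((Qf t (cb x))⁻¹ * exp (ee Λ t x))^(n+1) * _
  rw [h2, Complex.real_smul, ← Complex.exp_nat_mul, mul_comm]
  congr 3
  push_cast
  ring

theorem exists_base {t : ℝ} (ht : 0 < t) (ht1 : t < Real.sqrt 3/2) : ∃ X W E b, IsBase t X W E b := by
  obtain ⟨Λ, hL1, hL2, hL3⟩ := functional ht ht1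
  have hD : Dat t Λ := ⟨ht, ht1, hL1, hL2, hL3⟩
  obtain ⟨bt, hbs, hb1, hb2⟩ := psi_inv hD
  obtain ⟨c, hc, hw⟩ := wr_pos hD
  have hbper : ∀ x, bt (x + 2*Real.pi) = bt x + 2*Real.pi := by
    intro x
    have := hb2 (bt x + 2*Real.pi)
    rwa [psi_per hD, hb1] at this
  have hs : ContDiff ℝ ∞ (fun x => ee Λ t (bt x)) := (ee_smooth hD).comp hbs
  have hp : Function.Periodic (fun x => ee Λ t (bt x)) (2*Real.pi) := fun x => by
    change ee Λ t (bt (x + 2*Real.pi)) = _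
    rw [hbper, ee_per Λ t]
  set e0 := fun x => ee Λ t (bt x) with he0
  have hs1 := contDiff_infty_iff_deriv.1 hs
  have hs2 := contDiff_infty_iff_deriv.1 hs1.2
  have hs3 := contDiff_infty_iff_deriv.1 hs2.2
  have hz := fourier_zero_E hD hbs hb2
  obtain ⟨E, hE, hE2⟩ := hardy (fun x => (hs1.1 x).hasDerivAt) (fun x => (hs2.1 x).hasDerivAt) hs2.2.continuous hp (per_deriv hp) hz
  obtain ⟨B, hB, hB2⟩ := hardy (fun x => (hs2.1 x).hasDerivAt) (fun x => (hs3.1 x).hasDerivAt) hs3.2.continuous (per_deriv hp)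
    (per_deriv (per_deriv hp)) (fun n => by
      rw [fc_deriv (fun x => (hs1.1 x).hasDerivAt) hs2.1.continuous (by simpa using hp 0), hz, mul_zero])
  have hcirc : ∀ ζ : ℂ, ‖ζ‖ = 1 → exp (Complex.arg ζ * I) = ζ := fun ζ h1 => by
    have := Complex.norm_mul_exp_arg_mul_I ζ; rwa [h1, Complex.ofReal_one, one_mul] at this
  have htau : ∀ ζ : ℂ, ‖ζ‖ = 1 → tauf (fun s => (bt (Complex.arg s) - Complex.arg s)/2) ζ = cb (bt (Complex.arg ζ)) := by
    intro ζ hζ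
    have h1 : conj ζ = exp (-(Complex.arg ζ * I)) := by
      conv_lhs => rw [← hcirc ζ hζ]
      rw [← Complex.exp_conj]; simp
    rw [tauf, h1, ← Complex.exp_add, cb]
    congr 1
    push_cast
    ring
  refine ⟨fun s => (bt (Complex.arg s) - Complex.arg s)/2, fun s => wr Λ t (bt (Complex.arg s)), E, fun z => 1 + I*B z, hE, ?_, ?_, ?_, ?_, ?_, ?_⟩
  · exact diffContOnCl_const.add (hB.const_smul I)
  · refine LC_of_smooth (h := fun x => (bt x - x)/2) ((hbs.sub contDiff_id).div_const 2) (fun x => ?_)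
    simp only [hbper]; ring
  · refine LC_of_smooth (h := fun x => wr Λ t (bt x)) ((wr_smooth hD).comp hbs) (fun x => ?_)
    simp only [hbper]; exact wr_per Λ t _
  · exact ⟨c, hc, fun ζ _ => hw _⟩
  · intro ζ hζ
    rw [htau ζ hζ]
    have h1 := hE2 (Complex.arg ζ)
    rw [hcirc ζ hζ] at h1
    rw [h1, he0]
    have h2 := ee_exp hD (bt (Complex.arg ζ))
    rw [hb1] at h2
    simp only [h2]
    have h3 : exp (I * Complex.arg ζ) = ζ := by rw [mul_comm]; exact hcirc ζ hζ
    rw [h3, mul_assoc, Complex.mul_conj, Complex.normSq_eq_norm_sq, hζ]; simp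
  · intro ζ hζ
    rw [htau ζ hζ]
    have h1 := hB2 (Complex.arg ζ)
    rw [hcirc ζ hζ] at h1
    have hwp := (hc.trans_le (hw (bt (Complex.arg ζ)))).ne'
    have hbd : HasDerivAt bt (wr Λ t (bt (Complex.arg ζ)))⁻¹ (Complex.arg ζ) :=
      HasDerivAt.of_local_left_inverse hbs.continuous.continuousAt (psi_deriv hD _) hwp (Filter.Eventually.of_forall hb1)
    have hed := ((ee_deriv hD (bt (Complex.arg ζ))).scomp (Complex.arg ζ) hbd).deriv
    have hed' : deriv e0 (Complex.arg ζ) = _ := hed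
    rw [h1, hed', Complex.real_smul]
    have hQ := QC_ne hD.ht hD.ht1 (cb_norm (bt (Complex.arg ζ)))
    have hwp' : (wr Λ t (bt (Complex.arg ζ)) : ℂ) ≠ 0 := by exact_mod_cast hwp
    push_cast
    generalize cb (bt (Complex.arg ζ)) = τ at *
    field_simp
    linear_combination (τ*(1+t*τ)^2 - Qf t τ * (wr Λ t (bt (Complex.arg ζ)) : ℂ)) * I_sq

end SecPT

lemma F_small {U : Set ℂ} (hU : IsOpen U) (h0U : (0:ℂ) ∈ U) {F : ℂ → ℂ} (hF : ContDiffOn ℝ (⊤:ℕ∞) F U)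
    (hders : ∀ k : ℕ, k ≤ 3 → iteratedFDerivWithin ℝ k F U 0 = 0) {ε : ℝ} (hε : 0 < ε) :
    ∃ η > 0, ∀ s : ℝ, 0 < s → s < η → (∀ z : ℂ, ‖z‖ ≤ s → z ∈ U ∧ ‖F z‖ ≤ ε*s^3) ∧
      ∀ z z' : ℂ, ‖z‖ ≤ s → ‖z'‖ ≤ s → ‖F z - F z'‖ ≤ ε*s^2*‖z-z'‖ := by
  have hz : ∀ k : ℕ, k ≤ 3 → iteratedFDeriv ℝ k F 0 = 0 := fun k hk => by
    rw [← hders k hk]; exact (iteratedFDerivWithin_of_isOpen k hU h0U).symm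
  have hat : ∀ z ∈ U, ContDiffAt ℝ (⊤:ℕ∞) F z := fun z hzU => hF.contDiffAt (hU.mem_nhds hzU)
  have hlt : ∀ k : ℕ, (k : WithTop ℕ∞) < ((⊤:ℕ∞) : WithTop ℕ∞) := fun k => by exact_mod_cast WithTop.coe_lt_top k
  have hc3 : ContinuousAt (iteratedFDeriv ℝ 3 F) 0 := ((hat 0 h0U).differentiableAt_iteratedFDeriv (m := 3) (hlt 3)).continuousAt
  have hev : ∀ᶠ z in nhds (0:ℂ), ‖iteratedFDeriv ℝ 3 F z‖ < ε := by
    have := hc3.norm.eventually_lt_const (u := ε) (by simpa [hz 3 le_rfl] using hε)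
    exact this
  obtain ⟨η, hη, hb⟩ := Metric.eventually_nhds_iff.1 (hev.and (hU.mem_nhds h0U))
  refine ⟨η, hη, fun s hs hsη => ?_⟩
  have hin : ∀ z : ℂ, ‖z‖ ≤ s → ‖iteratedFDeriv ℝ 3 F z‖ < ε ∧ z ∈ U := fun z hzs => hb (by rw [dist_zero_right]; linarith)
  have hdiff : ∀ k : ℕ, ∀ z ∈ Metric.closedBall (0:ℂ) s, DifferentiableAt ℝ (iteratedFDeriv ℝ k F) z := fun k z hzs =>
    (hat z (hin z (by simpa using hzs)).2).differentiableAt_iteratedFDeriv (by exact_mod_cast WithTop.coe_lt_top k)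
  have step : ∀ k : ℕ, k ≤ 3 → ∀ C : ℝ, (∀ z : ℂ, ‖z‖ ≤ s → ‖iteratedFDeriv ℝ (k+1) F z‖ ≤ C) →
      ∀ z : ℂ, ‖z‖ ≤ s → ‖iteratedFDeriv ℝ k F z‖ ≤ C*s := by
    intro k hk C hC z hzs
    have h1 := (convex_closedBall (0:ℂ) s).norm_image_sub_le_of_norm_fderiv_le (𝕜 := ℝ) (f := iteratedFDeriv ℝ k F) (C := C) (x := 0) (y := z)
      (hdiff k) (fun w hw => by rw [norm_fderiv_iteratedFDeriv]; exact hC w (by simpa using hw)) (by simpa using hs.le) (by simpa using hzs)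
    rw [hz k hk, sub_zero, sub_zero] at h1
    have hC0 : 0 ≤ C := (norm_nonneg _).trans (hC z hzs)
    exact h1.trans (by gcongr)
  have s2 := step 2 (by norm_num) ε (fun z h => (hin z h).1.le)
  have s1 := step 1 (by norm_num) _ s2
  have s0 := step 0 (by norm_num) _ s1
  refine ⟨fun z h => ⟨(hin z h).2, ?_⟩, fun z z' h h' => ?_⟩
  · have := s0 z h
    rw [norm_iteratedFDeriv_zero] at this
    linarith [this, show ε*s^3 = ε*s*s*s by ring]
  · refine (convex_closedBall (0:ℂ) s).norm_image_sub_le_of_norm_fderiv_le (𝕜 := ℝ) (f := F) (x := z') (y := z) ?_ ?_ (by simpa using h') (by simpa using h)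
    · intro w hw
      exact (hat w (hin w (by simpa using hw)).2).differentiableAt (by simp)
    · intro w hw
      have := s1 w (by simpa using hw)
      rw [norm_iteratedFDeriv_one] at this
      linarith [this, show ε*s^2 = ε*s*s by ring]

lemma p_smooth (t : ℝ) : ContDiff ℝ ⊤ (pfun t) := by
  unfold pfun
  have hc : ContDiff ℝ ⊤ (fun z : ℂ => conj z) := Complex.conjCLE.contDiff
  fun_prop

lemma p_pert (t : ℝ) {ε ρ : ℝ} (hε : 0 < ε) :
    ∃ d > 0, d ≤ 1 ∧ ∀ c : ℂ, ‖c‖ ≤ d → (∀ z : ℂ, ‖z‖ ≤ ρ → ‖pfun t (z+c) - pfun t z‖ ≤ ε) ∧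
      ∀ z z' : ℂ, ‖z‖ ≤ ρ → ‖z'‖ ≤ ρ → ‖(pfun t (z+c) - pfun t z) - (pfun t (z'+c) - pfun t z')‖ ≤ ε*‖z-z'‖ := by
  have hs := p_smooth t
  have hd : Differentiable ℝ (pfun t) := hs.differentiable (by simp)
  have hc1 : Continuous (fderiv ℝ (pfun t)) := hs.continuous_fderiv (by simp)
  have u1 := (isCompact_closedBall (0:ℂ) (ρ+1)).uniformContinuousOn_of_continuous hd.continuous.continuousOn
  have u2 := (isCompact_closedBall (0:ℂ) (ρ+1)).uniformContinuousOn_of_continuous hc1.continuousOn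
  rw [Metric.uniformContinuousOn_iff_le] at u1 u2
  obtain ⟨d1, hd1, k1⟩ := u1 ε hε
  obtain ⟨d2, hd2, k2⟩ := u2 ε hε
  refine ⟨min 1 (min d1 d2), by positivity, min_le_left _ _, fun c hc => ?_⟩
  have c1 : ‖c‖ ≤ 1 := hc.trans (min_le_left _ _)
  have c2 : ‖c‖ ≤ d1 := hc.trans ((min_le_right _ _).trans (min_le_left _ _))
  have c3 : ‖c‖ ≤ d2 := hc.trans ((min_le_right _ _).trans (min_le_right _ _))
  have m1 : ∀ z : ℂ, ‖z‖ ≤ ρ → z + c ∈ Metric.closedBall (0:ℂ) (ρ+1) := fun z h => by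
    rw [mem_closedBall_zero_iff]; exact (norm_add_le _ _).trans (by linarith)
  have m2 : ∀ z : ℂ, ‖z‖ ≤ ρ → z ∈ Metric.closedBall (0:ℂ) (ρ+1) := fun z h => by
    rw [mem_closedBall_zero_iff]; linarith
  refine ⟨fun z h => ?_, fun z z' h h' => ?_⟩
  · rw [← dist_eq_norm]
    exact k1 _ (m1 z h) _ (m2 z h) (by rw [dist_eq_norm]; simpa using c2)
  · refine (convex_closedBall (0:ℂ) ρ).norm_image_sub_le_of_norm_fderiv_le (𝕜 := ℝ) (f := fun z => pfun t (z+c) - pfun t z) (x := z') (y := z) ?_ ?_ (by simpa using h') (by simpa using h)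
    · intro w _
      exact (hd.comp (differentiable_id.add_const c)).differentiableAt.sub hd.differentiableAt
    · intro w hw
      have hw' : ‖w‖ ≤ ρ := by simpa using hw
      have e : fderiv ℝ (fun z => pfun t (z+c) - pfun t z) w = fderiv ℝ (pfun t) (w+c) - fderiv ℝ (pfun t) w := by
        have hq : DifferentiableAt ℝ (fun z => pfun t (z+c)) w := (hd.comp (differentiable_id.add_const c)).differentiableAt
        rw [fderiv_fun_sub hq hd.differentiableAt]
        rw [fderiv_comp_add_right]
      rw [e, ← dist_eq_norm]
      exact k2 _ (m1 w hw') _ (m2 w hw') (by rw [dist_eq_norm]; simpa using c3)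

lemma eval_diff (p : MvPolynomial (Fin 2) ℂ) : Differentiable ℂ (fun w : ℂ × ℂ => MvPolynomial.eval (fun i => if i = 0 then w.1 else w.2) p) := by
  induction p using MvPolynomial.induction_on with
  | C a => simp
  | add p q hp hq => simp only [map_add]; exact hp.add hq
  | mul_X p n hp =>
    simp only [map_mul, MvPolynomial.eval_X]
    refine hp.mul ?_
    split_ifs
    · exact differentiable_fst
    · exact differentiable_snd

lemma p_norm {t : ℝ} (ht : 0 < t) (ht1 : t < 1) (z : ℂ) : ‖pfun t z‖ ≤ 3*‖z‖^3 := by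
  unfold pfun
  refine (norm_add₃_le).trans ?_
  simp only [norm_mul, norm_pow, norm_div, Complex.norm_real, Complex.norm_conj, Real.norm_of_nonneg ht.le]
  have h3 : ‖(3:ℂ)‖ = 3 := by simp
  rw [h3]
  have : 0 ≤ ‖z‖^3 := by positivity
  nlinarith [mul_nonneg this (by linarith : 0 ≤ 1 - t), mul_nonneg this (by nlinarith : 0 ≤ 1 - t^2)]

/-- for `0 < t < √3/2` and any `C^∞`-smooth `F` on a neighbourhood `U` of `0`
whose derivatives of all orders `≤ 3` vanish at `0`, the polynomially convex hull of
`M_t ∩ B̄(0;δ)` contains a nonempty open ball centred at the origin for every `δ > 0`. -/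
theorem stmt_12 (t : ℝ) (ht0 : 0 < t) (ht1 : t < Real.sqrt 3 / 2)
    (U : Set ℂ) (hU : IsOpen U) (h0U : (0:ℂ) ∈ U) (F : ℂ → ℂ)
    (hF : ContDiffOn ℝ (⊤ : ℕ∞) F U)
    (hders : ∀ k : ℕ, k ≤ 3 → iteratedFDerivWithin ℝ k F U 0 = 0)
    (δ : ℝ) (hδ : 0 < δ) :
    ∃ ρ > (0:ℝ), eOpenBall ρ ⊆ polyHull2 (Mset t U F ∩ eClosedBall δ) := by
  have htt : t < 1 := by have := three_lt; linarith
  obtain ⟨X, W, E, b, hB⟩ := exists_base ht0 ht1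
  obtain ⟨ε0, hε0, ρ0, hρ0, hcore⟩ := core t (by rw [abs_of_pos ht0]; exact htt) X W E b hB
  obtain ⟨d, hd, hd1, hpert⟩ := p_pert t (ε := ε0/4) (ρ := ρ0) (by positivity)
  set A := 1 + ρ0 with hA
  have hA1 : 1 ≤ A := by linarith
  have hA0 : 0 < A := by linarith
  set ε1 := ε0/(4*A^3) with hε1
  have hε10 : 0 < ε1 := by positivity
  obtain ⟨η, hη, hsm⟩ := F_small hU h0U hF hders hε10
  obtain ⟨s, hs0, hs⟩ := exists_between (show 0 < min η (min 1 (δ/(5+ε1))) by positivity)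
  have hsη : s < η := hs.trans_le (min_le_left _ _)
  have hs1 : s < 1 := hs.trans_le ((min_le_right _ _).trans (min_le_left _ _))
  have hsδ : s < δ/(5+ε1) := hs.trans_le ((min_le_right _ _).trans (min_le_right _ _))
  rw [lt_div_iff₀ (by positivity)] at hsδ
  obtain ⟨hF0, hF1⟩ := hsm s hs0 hsη
  set r := s/A with hr
  have hr0 : 0 < r := by positivity
  have hrA : r*A = s := by rw [hr]; field_simp
  have hr0' : (r:ℂ) ≠ 0 := by exact_mod_cast hr0.ne'
  refine ⟨min (r*d) (r^3*(ε0/4)), by positivity, ?_⟩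
  rintro ⟨z0, w0⟩ hz
  have hz' : ‖z0‖^2 + ‖w0‖^2 < (min (r*d) (r^3*(ε0/4)))^2 := hz
  have hmp : 0 < min (r*d) (r^3*(ε0/4)) := by positivity
  have hz0 : ‖z0‖ ≤ r*d := by
    refine le_trans ?_ (min_le_left _ (r^3*(ε0/4)))
    exact (abs_le_of_sq_le_sq' (by nlinarith [sq_nonneg ‖w0‖]) hmp.le).2
  have hw0 : ‖w0‖ ≤ r^3*(ε0/4) := by
    refine le_trans ?_ (min_le_right (r*d) _)
    exact (abs_le_of_sq_le_sq' (by nlinarith [sq_nonneg ‖z0‖]) hmp.le).2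
  have hZ : ∀ z : ℂ, ‖z‖ ≤ ρ0 → ‖z0 + r*z‖ ≤ s := by
    intro z hzz
    refine (norm_add_le _ _).trans ?_
    rw [norm_mul, Complex.norm_real, Real.norm_of_nonneg hr0.le, ← hrA, hA]
    nlinarith
  set K := Mset t U F ∩ eClosedBall δ with hK
  have hKmem : ∀ Z : ℂ, ‖Z‖ ≤ s → (Z, pfun t Z + F Z) ∈ K := by
    intro Z hZs
    refine ⟨⟨Z, (hF0 Z hZs).1, rfl⟩, ?_⟩
    change ‖Z‖^2 + ‖pfun t Z + F Z‖^2 ≤ δ^2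
    have h1 : ‖pfun t Z + F Z‖ ≤ (3+ε1)*s := by
      refine (norm_add_le _ _).trans ?_
      have a1 := p_norm ht0 htt Z
      have a2 := (hF0 Z hZs).2
      have a3 : ‖Z‖^3 ≤ s^3 := by gcongr
      have a4 : s^3 ≤ s := by nlinarith [mul_pos hs0 hs0]
      nlinarith
    have h2 : ‖Z‖^2 ≤ s^2 := by gcongr
    have h3 : ‖pfun t Z + F Z‖^2 ≤ ((3+ε1)*s)^2 := by gcongr
    have h4 : (s*(5+ε1))^2 ≤ δ^2 := by gcongr
    nlinarith [mul_pos hs0 hs0, mul_pos (mul_pos hs0 hs0) hε10]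
  intro p
  have hpd := eval_diff p
  set ev : ℂ × ℂ → ℂ := fun w => MvPolynomial.eval (fun i => if i = 0 then w.1 else w.2) p with hev
  have hbdd : BddAbove ((fun w : ℂ × ℂ => ‖ev w‖) '' K) := by
    refine ((isCompact_closedBall (0 : ℂ × ℂ) δ).bddAbove_image (f := fun w => ‖ev w‖) hpd.continuous.norm.continuousOn).mono (Set.image_mono ?_)
    rintro ⟨a, b⟩ ⟨-, hab⟩
    have hab' : ‖a‖^2 + ‖b‖^2 ≤ δ^2 := hab
    rw [mem_closedBall_zero_iff, Prod.norm_def, max_le_iff]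
    exact ⟨(abs_le_of_sq_le_sq' (by nlinarith [sq_nonneg ‖b‖]) hδ.le).2, (abs_le_of_sq_le_sq' (by nlinarith [sq_nonneg ‖a‖]) hδ.le).2⟩
  have hc : ‖z0/(r:ℂ)‖ ≤ d := by
    rw [norm_div, Complex.norm_real, Real.norm_of_nonneg hr0.le, div_le_iff₀ hr0]; linarith
  obtain ⟨hp0, hp1⟩ := hpert _ hc
  have hr3 : ‖(r:ℂ)^3‖ = r^3 := by rw [norm_pow, Complex.norm_real, Real.norm_of_nonneg hr0.le]
  have hr3' : 0 < r^3 := by positivity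
  have key := hcore (fun z => (pfun t (z + z0/r) - pfun t z) + F (z0 + r*z)/r^3 - w0/r^3) ?_ ?_
    (fun q => ev (z0 + r*q.1, w0 + r^3*q.2)) ?_ (sSup ((fun w : ℂ × ℂ => ‖ev w‖) '' K)) ?_
  · simpa using key
  · intro z hzz
    have b1 := hp0 z hzz
    have b2 : ‖F (z0 + r*z)/(r:ℂ)^3‖ ≤ ε0/4 := by
      rw [norm_div, hr3, div_le_iff₀ hr3']
      refine ((hF0 _ (hZ z hzz)).2).trans (le_of_eq ?_)
      rw [hε1, ← hrA]; field_simp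
    have b3 : ‖w0/(r:ℂ)^3‖ ≤ ε0/4 := by
      rw [norm_div, hr3, div_le_iff₀ hr3']; linarith
    refine (norm_sub_le _ _).trans ?_
    have := norm_add_le (pfun t (z + z0/r) - pfun t z) (F (z0 + r*z)/(r:ℂ)^3)
    linarith
  · intro z z' h h'
    have b1 := hp1 z z' h h'
    have b2 : ‖F (z0 + r*z)/(r:ℂ)^3 - F (z0 + r*z')/(r:ℂ)^3‖ ≤ ε0/4*‖z-z'‖ := by
      rw [← sub_div, norm_div, hr3, div_le_iff₀ hr3']
      refine (hF1 _ _ (hZ z h) (hZ z' h')).trans ?_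
      have e : z0 + r*z - (z0 + r*z') = r*(z-z') := by ring
      rw [e, norm_mul, Complex.norm_real, Real.norm_of_nonneg hr0.le]
      have : ε1*s^2 ≤ ε0/4*r^2 := by
        have : ε1*s^2 = ε0/4*r^2/A := by rw [hε1, ← hrA]; field_simp
        rw [this]; exact div_le_self (by positivity) hA1
      calc ε1*s^2*(r*‖z-z'‖) ≤ ε0/4*r^2*(r*‖z-z'‖) := by gcongr
        _ = _ := by ring
    have e : (pfun t (z + z0/r) - pfun t z) + F (z0 + r*z)/r^3 - w0/r^3 - ((pfun t (z' + z0/r) - pfun t z') + F (z0 + r*z')/r^3 - w0/r^3)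
      = ((pfun t (z + z0/r) - pfun t z) - (pfun t (z' + z0/r) - pfun t z')) + (F (z0 + r*z)/(r:ℂ)^3 - F (z0 + r*z')/(r:ℂ)^3) := by ring
    rw [e]
    refine (norm_add_le _ _).trans ?_
    have : 0 ≤ ε0*‖z-z'‖ := by positivity
    linarith
  · exact hpd.comp (by fun_prop)
  · intro z hzz
    refine le_csSup hbdd ⟨(z0 + r*z, pfun t (z0 + r*z) + F (z0 + r*z)), hKmem _ (hZ z hzz), ?_⟩
    have e1 : pfun t (z0 + r*z) = r^3 * pfun t (z + z0/r) := by
      have : z0 + r*z = r*(z + z0/r) := by field_simp; ring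
      rw [this]
      unfold pfun
      simp only [map_mul, Complex.conj_ofReal]
      ring
    have e2 : w0 + r^3*(pfun t z + ((pfun t (z + z0/r) - pfun t z) + F (z0 + r*z)/r^3 - w0/r^3)) = pfun t (z0 + r*z) + F (z0 + r*z) := by
      rw [e1]; field_simp; ring
    simp only [e2]
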